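/- arXiv:2111.05165 — 4 statements merged into one kernel-verified Lean document; each statement's English description precedes it below -/
import Mathlib

section
/- Let G and Ω be domains in ℂ such that G is not simply connected (G has at least one hole) and Ω is not infinitely connected (Ω has only finitely many holes, possibly none), and let Φ = (φₙ) be an eventually injective sequence of holomorphic maps from G to Ω. Then there is no (Φ,G,Ω)-universal function. -/
open Set Metric Bornology Filter

/-- A *hole* of `E` is a nonempty bounded connected component of `ℂ \ E`. -/
def IsHole (E C : Set ℂ) : Prop :=
  (∃ z ∈ Eᶜ, C = connectedComponentIn Eᶜ z) ∧ Bornology.IsBounded C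

/-- A compact set `K` contained in an open set `Ω` is `Ω`-*convex* if every hole of `K`
contains a point of `ℂ \ Ω`. -/
def OmegaConvex (Ω K : Set ℂ) : Prop :=
  ∀ C : Set ℂ, IsHole K C → (C ∩ Ωᶜ).Nonempty

/-- The *polynomial hull* of `K`: the union of `K` and all of its holes. -/
def polyHull (K : Set ℂ) : Set ℂ :=
  K ∪ {z | z ∈ Kᶜ ∧ Bornology.IsBounded (connectedComponentIn Kᶜ z)}

/-- A sequence of maps is *eventually injective* on `G`: for every compact `K ⊆ G`, the maps
are eventually injective on a neighbourhood of `K` in `G`. -/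
def EventuallyInjective (G : Set ℂ) (φ : ℕ → ℂ → ℂ) : Prop :=
  ∀ K : Set ℂ, K ⊆ G → IsCompact K →
    ∃ N : ℕ, ∀ n ≥ N, ∃ U : Set ℂ, IsOpen U ∧ K ⊆ U ∧ U ⊆ G ∧ Set.InjOn (φ n) U

/-- `f` is `(Φ, G, Ω)`-*universal*: the family `{f ∘ φ n : n ∈ ℕ}` is dense in `H(G)` for the
topology of locally uniform convergence, i.e. every `g` holomorphic on `G` can be approximated
uniformly on every compact subset of `G` by functions `f ∘ φ n`. -/
def UniversalFor (G : Set ℂ) (φ : ℕ → ℂ → ℂ) (f : ℂ → ℂ) : Prop :=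
  ∀ g : ℂ → ℂ, DifferentiableOn ℂ g G →
    ∀ K : Set ℂ, K ⊆ G → IsCompact K → ∀ ε : ℝ, 0 < ε →
      ∃ n : ℕ, ∀ z ∈ K, ‖f (φ n z) - g z‖ < ε

/-- `E` has no hole (for a domain: simple connectivity). -/
def HasNoHole (E : Set ℂ) : Prop := ¬ ∃ C : Set ℂ, IsHole E C

/-- A *Jordan curve*: the image of the unit circle under an injective continuous map. -/
def IsJordanCurve (C : Set ℂ) : Prop :=
  ∃ γ : ℂ → ℂ, ContinuousOn γ (Metric.sphere 0 1) ∧ Set.InjOn γ (Metric.sphere 0 1) ∧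
    C = γ '' Metric.sphere 0 1

/-- A *Jordan arc*: the image of `[0,1]` under an injective continuous map. -/
def IsJordanArc (C : Set ℂ) : Prop :=
  ∃ γ : ℝ → ℂ, ContinuousOn γ (Set.Icc 0 1) ∧ Set.InjOn γ (Set.Icc 0 1) ∧
    C = γ '' Set.Icc 0 1

/-- A compact set is *regular* if its boundary is a union of Jordan curves. -/
def RegularCompact (K : Set ℂ) : Prop :=
  ∃ 𝒞 : Set (Set ℂ), (∀ C ∈ 𝒞, IsJordanCurve C) ∧ frontier K = ⋃₀ 𝒞

/-- `K` is `Ω`-*connected*: it has no hole if `Ω` is simply connected, and has at least one hole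
if `Ω` is not simply connected. -/
def OmegaConnectedSet (Ω K : Set ℂ) : Prop :=
  (HasNoHole Ω → HasNoHole K) ∧ (¬ HasNoHole Ω → ∃ C : Set ℂ, IsHole K C)

/-- Membership in the family `M(Ω)` of nonempty compact subsets of `Ω` that are regular,
connected, `Ω`-connected and `Ω`-convex. -/
def MemM (Ω K : Set ℂ) : Prop :=
  K.Nonempty ∧ IsCompact K ∧ K ⊆ Ω ∧ RegularCompact K ∧ IsConnected K ∧
    OmegaConnectedSet Ω K ∧ OmegaConvex Ω K

/-- `f` is `(Φ, M)`-*universal*: for every `K ∈ M`, the restrictions of the `f ∘ φ n` to `K`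
are dense in `C(K)`. -/
def MUniversal (M : Set (Set ℂ)) (φ : ℕ → ℂ → ℂ) (f : ℂ → ℂ) : Prop :=
  ∀ K ∈ M, ∀ h : ℂ → ℂ, ContinuousOn h K → ∀ ε : ℝ, 0 < ε →
    ∃ n : ℕ, ∀ z ∈ K, ‖f (φ n z) - h z‖ < ε

/-!
Some compact piece `A` of the complement of `G` is isolated from the rest, so that `G` contains a
collar around `A`, and there is a function `g`, holomorphic off `A`, such that `Re g` peaks on the
inner boundary of the collar and `-Re g` on the outer one. A universal function `f` provides
infinitely many injective `φ n` with `f ∘ φ n ≈ t * I + g` on the collar, for widely spaced real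
parameters `t`; the images of the collar are then pairwise disjoint rings in `Ω`. As `Ω` has
finitely many holes, two of these rings enclose the same ones. If the first lay outside the second,
a suitable multiple of `f` would violate the maximum principle on the region inside the first ring
and outside the second, because no hole of `Ω` lies in that region and one of the functions `±Re g`
peaks on the inner boundary of the first ring. So each ring would be inside the other, which is
absurd.

Inside and outside are told apart without the Jordan curve theorem: a cutoff function of the collar,
read modulo `1` and extended by zero, is carried by `φ n` to a map from the plane to the circle
`ℝ / ℤ`, which lifts to a real function equal to `0` or `1` off the image ring.
-/

open Topology

section IntegerValued

lemma isDiscrete_range_intCast : IsDiscrete (range ((↑) : ℤ → ℝ)) :=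
  isDiscrete_iff_discreteTopology.mpr
    Int.isClosedEmbedding_coe_real.toHomeomorph.symm.isEmbedding.discreteTopology

variable {α : Type*} [TopologicalSpace α]

lemma le_intCast_of_preconnectedSpace [PreconnectedSpace α] {X : Set α} (hX : X.Nonempty)
    {ψ : α → ℝ} (hψ : Continuous ψ) (hint : ∀ x ∉ X, ψ x ∈ range ((↑) : ℤ → ℝ)) {n : ℤ}
    (hle : ∀ x ∈ X, ψ x ≤ n) (x : α) : ψ x ≤ n := by
  have hmax : MapsTo (fun y => max (ψ y) n) univ (range ((↑) : ℤ → ℝ)) := fun y _ => by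
    by_cases hy : y ∈ X
    · exact ⟨n, (max_eq_right (hle y hy)).symm⟩
    · obtain ⟨m, hm⟩ := hint y hy
      exact ⟨max m n, by simp only [Int.cast_max, hm]⟩
  obtain ⟨y, hy⟩ := hX
  have hconst : max (ψ x) n = max (ψ y) n :=
    isPreconnected_univ.constant_of_mapsTo isDiscrete_range_intCast
      (hψ.max continuous_const).continuousOn hmax (mem_univ x) (mem_univ y)
  exact max_eq_right_iff.mp (hconst.trans (max_eq_right (hle y hy)))

lemma intCast_le_of_preconnectedSpace [PreconnectedSpace α] {X : Set α} (hX : X.Nonempty)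
    {ψ : α → ℝ} (hψ : Continuous ψ) (hint : ∀ x ∉ X, ψ x ∈ range ((↑) : ℤ → ℝ)) {n : ℤ}
    (hle : ∀ x ∈ X, n ≤ ψ x) (x : α) : n ≤ ψ x := by
  have hneg := le_intCast_of_preconnectedSpace hX hψ.neg (n := -n)
    (fun y hy => by obtain ⟨m, hm⟩ := hint y hy; exact ⟨-m, by simp [hm]⟩)
    (fun y hy => by simpa using hle y hy) x
  simpa using hneg

end IntegerValued

/-- `ψ` is a continuous function with values in `[0, 1]` that takes the values `0` and `1` only,
except on the *transition set* `X`. When `ψ` has compact support, `{ψ = 1}` plays the role of the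
region enclosed by `X`, and `{ψ = 0}` that of its exterior. -/
structure IsTransition {α : Type*} [TopologicalSpace α] (X : Set α) (ψ : α → ℝ) : Prop where
  continuous : Continuous ψ
  mem_Icc : ∀ x, ψ x ∈ Icc (0 : ℝ) 1
  eq_zero_or_eq_one : ∀ x ∉ X, ψ x = 0 ∨ ψ x = 1

namespace IsTransition

variable {α : Type*} [TopologicalSpace α] {X X₁ X₂ S : Set α} {ψ ψ₁ ψ₂ : α → ℝ}

lemma one_sub (h : IsTransition X ψ) : IsTransition X (1 - ψ) where
  continuous := continuous_const.sub h.continuous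
  mem_Icc x := by
    have := h.mem_Icc x
    constructor <;> simp only [Pi.sub_apply, Pi.one_apply] <;> linarith [this.1, this.2]
  eq_zero_or_eq_one x hx := by
    rcases h.eq_zero_or_eq_one x hx with h0 | h1
    · exact .inr (by simp [h0])
    · exact .inl (by simp [h1])

lemma apply_eq_of_isPreconnected (h : IsTransition X ψ) (hS : IsPreconnected S)
    (hSX : Disjoint S X) {x y : α} (hx : x ∈ S) (hy : y ∈ S) : ψ x = ψ y :=
  hS.constant_of_mapsTo (Set.toFinite {0, 1}).isDiscrete h.continuous.continuousOn
    (fun _ hz => h.eq_zero_or_eq_one _ (disjoint_left.mp hSX hz)) hx hy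

lemma frontier_pos_subset (h : IsTransition X ψ) (hX : IsClosed X) :
    frontier {x | 0 < ψ x} ⊆ X ∩ {x | ψ x = 0} := fun x hx => by
  have h0 : ψ x = 0 := (frontier_lt_subset_eq continuous_const h.continuous hx).symm
  refine ⟨by_contra fun hxX => ?_, h0⟩
  have hnear : ∀ᶠ y in 𝓝 x, ¬ 0 < ψ y := by
    filter_upwards [hX.isOpen_compl.mem_nhds hxX,
      h.continuous.continuousAt.eventually_lt_const (h0.trans_lt one_pos)] with y hyX hy1
    exact ((h.eq_zero_or_eq_one y hyX).resolve_right hy1.ne).not_gt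
  exact mem_closure_iff_frequently.mp (frontier_subset_closure hx) hnear

lemma frontier_lt_one_subset (h : IsTransition X ψ) (hX : IsClosed X) :
    frontier {x | ψ x < 1} ⊆ X := by
  simpa only [Pi.sub_apply, Pi.one_apply, sub_pos] using
    (h.one_sub.frontier_pos_subset hX).trans inter_subset_left

lemma not_mutually_enclosing [PreconnectedSpace α] [NoncompactSpace α]
    (h₁ : IsTransition X₁ ψ₁) (h₂ : IsTransition X₂ ψ₂) (hc₁ : HasCompactSupport ψ₁)
    (hc₂ : HasCompactSupport ψ₂) (hX₁ : X₁.Nonempty) (h₁₂ : ∀ x ∈ X₁, ψ₂ x = 1)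
    (h₂₁ : ∀ x ∈ X₂, ψ₁ x = 1) : False := by
  have hmax : MapsTo (fun x => max (ψ₁ x) (ψ₂ x)) univ {0, 1} := fun x _ => by
    change max (ψ₁ x) (ψ₂ x) = 0 ∨ max (ψ₁ x) (ψ₂ x) = 1
    by_cases hx₁ : x ∈ X₁
    · exact .inr (by rw [h₁₂ x hx₁, max_eq_right (h₁.mem_Icc x).2])
    by_cases hx₂ : x ∈ X₂
    · exact .inr (by rw [h₂₁ x hx₂, max_eq_left (h₂.mem_Icc x).2])
    · rcases h₁.eq_zero_or_eq_one x hx₁ with h | h <;>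
        rcases h₂.eq_zero_or_eq_one x hx₂ with h' | h' <;> simp [h, h']
  obtain ⟨x, hx⟩ := hX₁
  obtain ⟨y, hy⟩ : (tsupport ψ₁ ∪ tsupport ψ₂)ᶜ.Nonempty :=
    nonempty_compl.mpr (IsCompact.union hc₁ hc₂).ne_univ
  rw [compl_union] at hy
  have hxy : max (ψ₁ x) (ψ₂ x) = max (ψ₁ y) (ψ₂ y) :=
    isPreconnected_univ.constant_of_mapsTo (Set.toFinite {0, 1}).isDiscrete
      (h₁.continuous.max h₂.continuous).continuousOn hmax (mem_univ x) (mem_univ y)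
  rw [h₁₂ x hx, max_eq_right (h₁.mem_Icc x).2, image_eq_zero_of_notMem_tsupport hy.1,
    image_eq_zero_of_notMem_tsupport hy.2, max_self] at hxy
  exact one_ne_zero hxy

end IsTransition

section Lifting

variable {E : Type*} [NormedAddCommGroup E] [NormedSpace ℝ E]

lemma isPreconnected_setOf_lt_norm (hE : 1 < Module.rank ℝ E) {R : ℝ} (hR : 0 ≤ R) :
    IsPreconnected {w : E | R < ‖w‖} := by
  have himage : {w : E | R < ‖w‖} = (fun p : ℝ × E => p.1 • p.2) '' (Ioi R ×ˢ sphere 0 1) := by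
    ext w
    constructor
    · intro (hw : R < ‖w‖)
      have hw0 : ‖w‖ ≠ 0 := (hR.trans_lt hw).ne'
      exact ⟨(‖w‖, ‖w‖⁻¹ • w), ⟨hw, by simp [norm_smul, hw0]⟩, by simp [smul_smul, hw0]⟩
    · rintro ⟨⟨r, v⟩, ⟨hr : R < r, hv⟩, rfl⟩
      simpa [norm_smul, mem_sphere_zero_iff_norm.mp hv, abs_of_nonneg (hR.trans hr.le)] using hr
  rw [himage]
  exact (isPreconnected_Ioi.prod (isPreconnected_sphere hE 0 1)).image _
    continuous_smul.continuousOn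

lemma exists_lift_hasCompactSupport [ProperSpace E] (hE : 1 < Module.rank ℝ E)
    {e : E → UnitAddCircle} (he : Continuous e) (hsupp : HasCompactSupport e) :
    ∃ ψ : E → ℝ, Continuous ψ ∧ HasCompactSupport ψ ∧ ∀ w, (ψ w : UnitAddCircle) = e w := by
  obtain ⟨a, ha⟩ := QuotientAddGroup.mk_surjective (e 0)
  obtain ⟨⟨ψ, hψ⟩, ⟨-, hlift⟩, -⟩ :=
    (AddCircle.isCoveringMap_coe (1 : ℝ)).existsUnique_continuousMap_lifts
      (⟨e, he⟩ : C(E, UnitAddCircle)) 0 a ha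
  replace hlift (w : E) : (ψ w : UnitAddCircle) = e w := congrFun hlift w
  obtain ⟨R, hR, hsub⟩ := hsupp.isBounded.subset_closedBall_lt 0 0
  have hfar : MapsTo ψ {w | R < ‖w‖} (range ((↑) : ℤ → ℝ)) := fun w (hw : R < ‖w‖) => by
    have : e w = 0 := image_eq_zero_of_notMem_tsupport fun hmem =>
      hw.not_ge (mem_closedBall_zero_iff.mp (hsub hmem))
    obtain ⟨m, hm⟩ := (AddCircle.coe_eq_zero_iff (1 : ℝ)).mp ((hlift w).trans this)
    exact ⟨m, by simpa using hm⟩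
  obtain ⟨-, ⟨m, rfl⟩, hm⟩ := (isPreconnected_setOf_lt_norm hE hR.le).eqOn_const_of_mapsTo
    isDiscrete_range_intCast hψ.continuousOn hfar (range_nonempty _)
  refine ⟨fun w => ψ w - m, hψ.sub continuous_const,
    .intro (isCompact_closedBall 0 R) fun w hw => ?_, fun w => ?_⟩
  · exact sub_eq_zero.mpr (hm (not_le.mp fun h => hw (mem_closedBall_zero_iff.mpr h)))
  · have : ((m : ℝ) : UnitAddCircle) = 0 := (AddCircle.coe_eq_zero_iff (1 : ℝ)).mpr ⟨m, by simp⟩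
    rw [AddCircle.coe_sub, this, sub_zero, hlift]

end Lifting

lemma continuous_extend_zero_of_isOpenEmbedding {X Y Z : Type*} [TopologicalSpace X]
    [TopologicalSpace Y] [TopologicalSpace Z] [T2Space Y] [Zero Z] {i : X → Y}
    (hi : IsOpenEmbedding i) {e : X → Z} (he : Continuous e) (hsupp : HasCompactSupport e) :
    Continuous (Function.extend i e 0) := by
  refine continuous_of_tsupport fun y hy => ?_
  obtain ⟨x, -, rfl⟩ := hsupp.tsupport_extend_zero_subset hi.continuous hy
  rw [← hi.continuousAt_iff, Function.extend_comp hi.injective]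
  exact he.continuousAt

section Pushforward

variable {α E : Type*} [TopologicalSpace α] [R1Space α] [NormedAddCommGroup E] [NormedSpace ℝ E]
  [ProperSpace E] {U K K₀ : Set α} {φ : α → E} {χ : α → ℝ}

lemma IsTransition.exists_intValued_pushforward (hE : 1 < Module.rank ℝ E)
    (hφ : IsOpenEmbedding (U.domRestrict φ)) (hχ : IsTransition K₀ χ) (hK₀ : IsCompact K₀)
    (hK : IsPreconnected K) (hK₀U : K₀ ⊆ U) (hKU : K ⊆ U) :
    ∃ ψ : E → ℝ, Continuous ψ ∧ HasCompactSupport ψ ∧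
      (∀ w ∉ φ '' K₀, ψ w ∈ range ((↑) : ℤ → ℝ)) ∧ ∃ m : ℤ, ∀ z ∈ K, ψ (φ z) = χ z + m := by
  set e : U → UnitAddCircle := fun z => (χ z : UnitAddCircle) with he
  have he_cont : Continuous e := by have := hχ.continuous; fun_prop
  have he_zero (z : U) (hz : (z : α) ∉ K₀) : e z = 0 := by
    rcases hχ.eq_zero_or_eq_one z hz with h | h <;> simp [he, h]
  have he_supp : HasCompactSupport e :=
    .intro (K := Subtype.val ⁻¹' K₀) (Subtype.isCompact_iff.mpr <| by
      rwa [Subtype.image_preimage_coe, inter_eq_right.mpr hK₀U]) he_zero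
  obtain ⟨ψ, hψ, hψ_supp, hlift⟩ := exists_lift_hasCompactSupport hE
    (continuous_extend_zero_of_isOpenEmbedding hφ he_cont he_supp)
    (he_supp.extend_zero hφ.continuous)
  have hlift_apply (z : U) : (ψ (φ z) : UnitAddCircle) = χ z :=
    (hlift _).trans (hφ.injective.extend_apply e 0 z)
  refine ⟨ψ, hψ, hψ_supp, fun w hw => ?_, ?_⟩
  · have hew : Function.extend (U.domRestrict φ) e 0 w = 0 := by
      by_cases hwU : ∃ z : U, U.domRestrict φ z = w
      · obtain ⟨z, rfl⟩ := hwU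
        rw [hφ.injective.extend_apply]
        exact he_zero z fun hz => hw ⟨z, hz, rfl⟩
      · exact Function.extend_apply' _ _ _ hwU
    obtain ⟨m, hm⟩ := (AddCircle.coe_eq_zero_iff (1 : ℝ)).mp ((hlift w).trans hew)
    exact ⟨m, by simpa using hm⟩
  · have hint : MapsTo (fun z => ψ (φ z) - χ z) K (range ((↑) : ℤ → ℝ)) := fun z hz => by
      obtain ⟨m, hm⟩ := (AddCircle.coe_eq_zero_iff (1 : ℝ)).mp
        ((AddCircle.coe_sub _ _ _).trans (sub_eq_zero.mpr (hlift_apply ⟨z, hKU hz⟩)))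
      exact ⟨m, by simpa using hm⟩
    have hcont : ContinuousOn (fun z => ψ (φ z) - χ z) K :=
      (hψ.comp_continuousOn ((continuousOn_iff_continuous_domRestrict.mpr hφ.continuous).mono
        hKU)).sub hχ.continuous.continuousOn
    obtain ⟨-, ⟨m, rfl⟩, hm⟩ :=
      hK.eqOn_const_of_mapsTo isDiscrete_range_intCast hcont hint (range_nonempty _)
    exact ⟨m, fun z hz => by simpa [add_comm] using eq_add_of_sub_eq (hm hz)⟩

/-- The substitute for the Jordan curve theorem: an open embedding carries transitions to
transitions, up to exchanging the inside and the outside. -/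
lemma IsTransition.exists_pushforward (hE : 1 < Module.rank ℝ E)
    (hφ : IsOpenEmbedding (U.domRestrict φ)) (hχ : IsTransition K₀ χ) (hK₀ : IsCompact K₀)
    (hne : K₀.Nonempty) (hK : IsPreconnected K) (hK₀K : K₀ ⊆ K) (hKU : K ⊆ U) :
    ∃ ψ : E → ℝ, IsTransition (φ '' K₀) ψ ∧ HasCompactSupport ψ ∧
      (EqOn (ψ ∘ φ) χ K ∨ EqOn (ψ ∘ φ) (1 - χ) K) := by
  have : Nontrivial E := (rank_pos_iff_nontrivial (R := ℝ)).mp (one_pos.trans hE)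
  have : NoncompactSpace E := NormedSpace.noncompactSpace ℝ E
  obtain ⟨ψ, hψ, hsupp, hint, m, hm⟩ :=
    hχ.exists_intValued_pushforward hE hφ hK₀ hK (hK₀K.trans hKU) hKU
  have hlower : ∀ w, m ≤ ψ w := intCast_le_of_preconnectedSpace (hne.image φ) hψ hint <|
    forall_mem_image.mpr fun z hz => by linarith [hm z (hK₀K hz), (hχ.mem_Icc z).1]
  have hupper : ∀ w, ψ w ≤ (m + 1 : ℤ) := le_intCast_of_preconnectedSpace (hne.image φ) hψ hint <|
    forall_mem_image.mpr fun z hz => by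
      push_cast; linarith [hm z (hK₀K hz), (hχ.mem_Icc z).2]
  have hm01 : m = 0 ∨ m = -1 := by
    obtain ⟨w, hw⟩ := nonempty_compl.mpr hsupp.isCompact.ne_univ
    have h0 : ψ w = 0 := image_eq_zero_of_notMem_tsupport hw
    have h1 : (m : ℝ) ≤ (0 : ℤ) := by simpa [h0] using hlower w
    have h2 : ((0 : ℤ) : ℝ) ≤ (m + 1 : ℤ) := by simpa only [h0, Int.cast_zero] using hupper w
    have := Int.cast_le.mp h1
    have := Int.cast_le.mp h2
    lia
  have habs (w : E) : |ψ w| ≤ 1 := by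
    have hl := hlower w
    have hu := hupper w
    rcases hm01 with rfl | rfl <;> push_cast at hl hu <;>
      exact abs_le.mpr ⟨by linarith, by linarith⟩
  refine ⟨fun w => |ψ w|, ⟨hψ.abs, fun w => ⟨abs_nonneg _, habs w⟩, fun w hw => ?_⟩,
    hsupp.comp_left abs_zero, ?_⟩
  · obtain ⟨k, hk⟩ := hint w hw
    have hk1 : |k| ≤ 1 := by exact_mod_cast hk ▸ habs w
    rcases Int.abs_le_one_iff.mp hk1 with rfl | rfl | rfl <;> simp [← hk]
  · rcases hm01 with rfl | rfl
    · exact .inl fun z hz => by simp [hm z hz, abs_of_nonneg (hχ.mem_Icc z).1]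
    · refine .inr fun z hz => ?_
      simp only [Function.comp_apply, hm z hz, Pi.sub_apply, Pi.one_apply]
      rw [abs_of_nonpos (by push_cast; linarith [(hχ.mem_Icc z).2])]
      push_cast; ring

end Pushforward

lemma isOpenEmbedding_domRestrict_of_differentiableOn {U : Set ℂ} (hU : IsOpen U) {φ : ℂ → ℂ}
    (hφ : DifferentiableOn ℂ φ U) (hinj : InjOn φ U) : IsOpenEmbedding (U.domRestrict φ) := by
  refine .of_continuous_injective_isOpenMap hφ.continuousOn.domRestrict hinj.injective
    (.of_nhds_le fun z => ?_)
  have hmap : Filter.map (U.domRestrict φ) (𝓝 z) = Filter.map φ (𝓝 z) := by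
    rw [← map_nhds_subtype_coe_eq_nhds z.2 (hU.mem_nhds z.2), Filter.map_map]
    rfl
  rw [hmap]
  refine (hφ.analyticAt (hU.mem_nhds z.2)).eventually_constant_or_nhds_le_map_nhds.resolve_left
    fun hconst => ?_
  obtain ⟨w, ⟨hw, hwU⟩, hwz⟩ :=
    ((hconst.and (hU.mem_nhds z.2)).filter_mono nhdsWithin_le_nhds |>.and
      (self_mem_nhdsWithin : {(z : ℂ)}ᶜ ∈ 𝓝[≠] (z : ℂ))).exists
  exact hwz (hinj hwU z.2 hw)

lemma re_le_of_forall_mem_frontier_re_le {E : Type*} [NormedAddCommGroup E] [NormedSpace ℂ E]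
    [Nontrivial E] {D : Set E} (hD : IsBounded D) {f : E → ℂ} (hf : DiffContOnCl ℂ f D) {B : ℝ}
    (hB : ∀ w ∈ frontier D, (f w).re ≤ B) {w : E} (hw : w ∈ closure D) : (f w).re ≤ B := by
  have hexp : ∀ z ∈ frontier D, ‖Complex.exp (f z)‖ ≤ Real.exp B := fun z hz => by
    simpa only [Complex.norm_exp, Real.exp_le_exp] using hB z hz
  simpa only [Function.comp_apply, Complex.norm_exp, Real.exp_le_exp] using
    Complex.norm_le_of_forall_mem_frontier_norm_le hD
      (Complex.differentiable_exp.comp_diffContOnCl hf) hexp hw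

lemma exists_isCompact_isConnected_superset {E : Type*} [NormedAddCommGroup E] [NormedSpace ℝ E]
    [ProperSpace E] {G : Set E} (hG : IsOpen G) (hGc : IsConnected G) {K : Set E}
    (hK : IsCompact K) (hKG : K ⊆ G) : ∃ L ⊆ G, IsCompact L ∧ IsConnected L ∧ K ⊆ L := by
  have hpath : IsPathConnected G := hG.isConnected_iff_isPathConnected.mp hGc
  refine hK.induction_on (p := fun K => ∃ L ⊆ G, IsCompact L ∧ IsConnected L ∧ K ⊆ L) ?_
    (fun s t hst ⟨L, hLG, hL, hLc, htL⟩ => ⟨L, hLG, hL, hLc, hst.trans htL⟩) ?_ fun x hx => ?_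
  · obtain ⟨z, hz⟩ := hGc.nonempty
    exact ⟨{z}, singleton_subset_iff.mpr hz, isCompact_singleton, isConnected_singleton,
      empty_subset _⟩
  · rintro s t ⟨L, hLG, hL, hLc, hsL⟩ ⟨M, hMG, hM, hMc, htM⟩
    obtain ⟨x, hx⟩ := hLc.nonempty
    obtain ⟨y, hy⟩ := hMc.nonempty
    obtain ⟨γ, hγ⟩ := hpath.joinedIn x (hLG hx) y (hMG hy)
    refine ⟨L ∪ range γ ∪ M, union_subset (union_subset hLG (range_subset_iff.mpr hγ)) hMG,
      (hL.union (isCompact_range γ.continuous)).union hM,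
      .union ⟨y, .inr ⟨1, γ.target⟩, hy⟩
        (.union ⟨x, hx, 0, γ.source⟩ hLc (isConnected_range γ.continuous)) hMc,
      union_subset_union (hsL.trans subset_union_left) htM⟩
  · obtain ⟨ε, hε, hball⟩ := nhds_basis_closedBall.mem_iff.mp (hG.mem_nhds (hKG hx))
    exact ⟨closedBall x ε, mem_nhdsWithin_of_mem_nhds (closedBall_mem_nhds x hε), closedBall x ε,
      hball, isCompact_closedBall x ε,
      ⟨nonempty_closedBall.mpr hε.le, (convex_closedBall x ε).isPreconnected⟩, subset_rfl⟩

lemma exists_isClopen_of_connectedComponent_subset {X : Type*} [TopologicalSpace X] [T2Space X]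
    [CompactSpace X] {x : X} {V : Set X} (hV : IsOpen V) (hxV : connectedComponent x ⊆ V) :
    ∃ Q, IsClopen Q ∧ x ∈ Q ∧ Q ⊆ V := by
  rw [connectedComponent_eq_iInter_isClopen] at hxV
  have : Nonempty {s : Set X // IsClopen s ∧ x ∈ s} := ⟨⟨univ, isClopen_univ, mem_univ x⟩⟩
  obtain ⟨⟨Q, hQ, hxQ⟩, hQV⟩ := exists_subset_nhds_of_isCompact'
    (V := fun s : {s : Set X // IsClopen s ∧ x ∈ s} => (s : Set X))
    (fun s t => ⟨⟨s ∩ t, s.2.1.inter t.2.1, s.2.2, t.2.2⟩, inter_subset_left, inter_subset_right⟩)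
    (fun s => s.2.1.isClosed.isCompact) (fun s => s.2.1.isClosed)
    (fun y hy => hV.mem_nhds (hxV hy))
  exact ⟨Q, hQ, hxQ, hQV⟩

lemma exists_isCompact_isClosed_diff {X : Type*} [MetricSpace X] [ProperSpace X] {F : Set X}
    (hF : IsClosed F) {z : X} (hz : z ∈ F) (hb : IsBounded (connectedComponentIn F z)) :
    ∃ A ⊆ F, IsCompact A ∧ A.Nonempty ∧ IsClosed (F \ A) := by
  obtain ⟨R, hR⟩ := hb.subset_ball z
  set Y := F ∩ closedBall z R
  have : CompactSpace Y :=
    isCompact_iff_compactSpace.mp ((isCompact_closedBall z R).inter_left hF)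
  have hzY : z ∈ Y := ⟨hz, ball_subset_closedBall (hR (mem_connectedComponentIn hz))⟩
  have hcomp : connectedComponent (⟨z, hzY⟩ : Y) ⊆ (↑) ⁻¹' ball z R := fun y hy =>
    hR (connectedComponentIn_mono z inter_subset_left (by
      rw [connectedComponentIn_eq_image hzY]
      exact mem_image_of_mem _ hy))
  obtain ⟨Q, hQ, hzQ, hQR⟩ := exists_isClopen_of_connectedComponent_subset
    (isOpen_ball.preimage continuous_subtype_val) hcomp
  have hdiff : F \ ((↑) '' Q) = (↑) '' Qᶜ ∪ F \ ball z R := by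
    apply Subset.antisymm
    · rintro w ⟨hwF, hwQ⟩
      by_cases hwR : w ∈ ball z R
      · exact .inl ⟨⟨w, hwF, ball_subset_closedBall hwR⟩, fun hw => hwQ ⟨_, hw, rfl⟩, rfl⟩
      · exact .inr ⟨hwF, hwR⟩
    · rintro w (⟨y, hy, rfl⟩ | ⟨hwF, hwR⟩)
      · exact ⟨y.2.1, fun ⟨y', hy', hyy'⟩ => hy (Subtype.ext hyy' ▸ hy')⟩
      · exact ⟨hwF, fun ⟨y, hy, hyw⟩ => hwR (hyw ▸ hQR hy)⟩
  refine ⟨(↑) '' Q, fun w ⟨y, _, hyw⟩ => hyw ▸ y.2.1,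
    hQ.isClosed.isCompact.image continuous_subtype_val, ⟨z, _, hzQ, rfl⟩, ?_⟩
  rw [hdiff]
  exact (hQ.compl.isClosed.isCompact.image continuous_subtype_val).isClosed.union
    (hF.sdiff isOpen_ball)

/-- The points whose distance from `A` lies between `δ` and `2 * δ`. -/
def collar {α : Type*} [PseudoMetricSpace α] (A : Set α) (δ : ℝ) : Set α :=
  {z | infDist z A ∈ Icc δ (2 * δ)}

/-- The cutoff function of `collar A δ`: it is `1` up to distance `δ` from `A`, `0` from distance
`2 * δ` on, and affine in the distance in between. -/
noncomputable def collarCutoff {α : Type*} [PseudoMetricSpace α] (A : Set α) (δ : ℝ) (z : α) : ℝ :=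
  max 0 (min 1 (2 - infDist z A / δ))

section Collar

variable {α : Type*} [PseudoMetricSpace α] {A : Set α} {δ : ℝ} {z : α}

lemma collarCutoff_eq_one_iff (hδ : 0 < δ) : collarCutoff A δ z = 1 ↔ infDist z A ≤ δ := by
  have hle : infDist z A ≤ δ ↔ 1 ≤ 2 - infDist z A / δ := by
    rw [le_sub_comm, div_le_iff₀ hδ]
    norm_num
  rw [hle]
  refine ⟨fun h => not_lt.mp fun hlt => ?_, fun h => ?_⟩
  · exact (max_lt one_pos (min_lt_of_right_lt hlt)).ne h
  · rw [collarCutoff, min_eq_left h, max_eq_right zero_le_one]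

lemma collarCutoff_eq_zero_iff (hδ : 0 < δ) : collarCutoff A δ z = 0 ↔ 2 * δ ≤ infDist z A := by
  rw [collarCutoff, max_eq_left_iff, min_le_iff, or_iff_right (by norm_num : ¬ (1 : ℝ) ≤ 0),
    sub_nonpos, le_div_iff₀ hδ]

lemma mem_collar_and_cutoff_eq_one_iff (hδ : 0 < δ) :
    z ∈ collar A δ ∧ collarCutoff A δ z = 1 ↔ infDist z A = δ := by
  rw [collarCutoff_eq_one_iff hδ]
  exact ⟨fun h => le_antisymm h.2 h.1.1, fun h => ⟨⟨h.ge, by linarith⟩, h.le⟩⟩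

lemma mem_collar_and_cutoff_eq_zero_iff (hδ : 0 < δ) :
    z ∈ collar A δ ∧ collarCutoff A δ z = 0 ↔ infDist z A = 2 * δ := by
  rw [collarCutoff_eq_zero_iff hδ]
  exact ⟨fun h => le_antisymm h.1.2 h.2, fun h => ⟨⟨by linarith, h.le⟩, h.ge⟩⟩

lemma isTransition_collarCutoff (hδ : 0 < δ) :
    IsTransition (collar A δ) (collarCutoff A δ) where
  continuous := by
    have := continuous_infDist_pt A
    unfold collarCutoff
    fun_prop
  mem_Icc z := ⟨le_max_left _ _, max_le zero_le_one (min_le_left _ _)⟩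
  eq_zero_or_eq_one z hz := by
    rw [collarCutoff_eq_zero_iff hδ, collarCutoff_eq_one_iff hδ]
    by_contra! h
    exact hz ⟨h.2.le, h.1.le⟩

lemma isCompact_collar [ProperSpace α] (hA : IsCompact A) (hne : A.Nonempty) :
    IsCompact (collar A δ) := by
  refine isCompact_of_isClosed_isBounded (isClosed_Icc.preimage (continuous_infDist_pt A))
    ((hA.isBounded.thickening (δ := 2 * δ + 1)).subset fun z hz => ?_)
  exact (mem_thickening_iff_infDist_lt hne).mpr (by linarith [hz.2])

end Collar

lemma exists_isCompact_disjoint_collar {X : Type*} [MetricSpace X] [ProperSpace X] {F : Set X}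
    (hF : IsClosed F) {z : X} (hz : z ∈ F) (hb : IsBounded (connectedComponentIn F z)) :
    ∃ A ⊆ F, IsCompact A ∧ A.Nonempty ∧ ∃ δ > 0, Disjoint (collar A δ) F := by
  obtain ⟨A, hAF, hA, hne, hdiff⟩ := exists_isCompact_isClosed_diff hF hz hb
  obtain ⟨ε, hε, hsub⟩ := hA.exists_thickening_subset_open hdiff.isOpen_compl
    (subset_compl_iff_disjoint_right.mpr disjoint_sdiff_right)
  refine ⟨A, hAF, hA, hne, ε / 3, by positivity, disjoint_left.mpr fun w hw hwF => ?_⟩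
  have hwA : w ∈ A := by_contra fun hwA =>
    hsub ((mem_thickening_iff_infDist_lt hne).mpr (by linarith [hw.2])) ⟨hwF, hwA⟩
  linarith [hw.1, infDist_zero_of_mem hwA]

/-- `u` attains on the inner boundary `{χ = 1}` of `K` a value exceeding all its values on the
outer boundary `{χ = 0}` of `K` by at least `1 / 2`. -/
def PeaksInside {α : Type*} (K : Set α) (χ u : α → ℝ) : Prop :=
  ∃ p ∈ K, χ p = 1 ∧ ∀ z ∈ K, χ z = 0 → u z + 1 / 2 ≤ u p

section PeakFunction

lemma abs_re_add_sq_le {s : ℂ} (hs : ‖s‖ ≤ 1 / 8) : |(s + s ^ 2).re| ≤ 9 / 64 := by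
  calc |(s + s ^ 2).re| ≤ ‖s + s ^ 2‖ := Complex.abs_re_le_norm _
    _ ≤ ‖s‖ + ‖s‖ ^ 2 := (norm_add_le _ _).trans_eq (by rw [norm_pow])
    _ ≤ 1 / 8 + (1 / 8) ^ 2 := by gcongr
    _ = 9 / 64 := by norm_num

-- `s + s ^ 2` is used because it takes the value `2` at `1` while `Re ≥ -9 / 8` on the unit disc.
lemma neg_le_re_add_sq {s : ℂ} (hs : ‖s‖ ≤ 1) : -(9 / 8) ≤ (s + s ^ 2).re := by
  have hsq : s.re ^ 2 + s.im ^ 2 ≤ 1 := by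
    have := Complex.sq_norm s ▸ pow_le_one₀ (n := 2) (norm_nonneg s) hs
    rw [Complex.normSq_apply] at this
    linarith
  have hre : (s + s ^ 2).re = s.re + s.re ^ 2 - s.im ^ 2 := by
    simp only [Complex.add_re, pow_two, Complex.mul_re]
    ring
  rw [hre]
  nlinarith [sq_nonneg (4 * s.re + 1)]

lemma norm_inv_pow_three_le {w : ℂ} {r : ℝ} (hr : 0 < r) (hw : r ≤ ‖w‖) :
    ‖w⁻¹ ^ 3‖ ≤ (1 / r) ^ 3 := by
  rw [norm_pow, norm_inv, one_div]
  gcongr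

lemma norm_exp_le_one_eighth {w : ℂ} (hw : w.re ≤ 1) : ‖Complex.exp (7 * (w - 2))‖ ≤ 1 / 8 := by
  have hre : (7 * (w - 2)).re ≤ -7 := by
    simp only [Complex.mul_re, Complex.sub_re, Complex.re_ofNat, Complex.im_ofNat, zero_mul,
      sub_zero]
    linarith
  calc ‖Complex.exp (7 * (w - 2))‖ ≤ Real.exp (-7) := by
        rwa [Complex.norm_exp, Real.exp_le_exp]
    _ ≤ 1 / 8 := by
        rw [Real.exp_neg, one_div]
        exact inv_anti₀ (by norm_num) (by linarith [Real.add_one_le_exp (7 : ℝ)])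

lemma norm_exp_le_one {w : ℂ} (hw : w.re ≤ 2) : ‖Complex.exp (7 * (w - 2))‖ ≤ 1 := by
  rw [Complex.norm_exp, Real.exp_le_one_iff]
  simp only [Complex.mul_re, Complex.sub_re, Complex.re_ofNat, Complex.im_ofNat, zero_mul,
    sub_zero]
  linarith

/-- The model of a function whose real part peaks on the inner boundary of a collar and whose
opposite peaks on the outer one. The first summand makes the real part at `1` exceed its values on
`{2 ≤ ‖w‖, w.re ≤ 2}`, and the second one makes the real part at `2` fall below its values on
`{1 ≤ ‖w‖, w.re ≤ 1}`. -/
noncomputable def peakFunction (w : ℂ) : ℂ :=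
  (w⁻¹ ^ 3 + (w⁻¹ ^ 3) ^ 2) -
    (Complex.exp (7 * (w - 2)) + Complex.exp (7 * (w - 2)) ^ 2)

lemma re_peakFunction_ge {w : ℂ} (hnorm : 1 ≤ ‖w‖) (hre : w.re ≤ 1) :
    -(81 / 64) ≤ (peakFunction w).re := by
  have hinner := neg_le_re_add_sq ((norm_inv_pow_three_le one_pos hnorm).trans_eq (by norm_num))
  have houter := (abs_le.mp (abs_re_add_sq_le (norm_exp_le_one_eighth hre))).2
  rw [peakFunction, Complex.sub_re]
  linarith

lemma re_peakFunction_le {w : ℂ} (hnorm : 2 ≤ ‖w‖) (hre : w.re ≤ 2) :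
    (peakFunction w).re ≤ 81 / 64 := by
  have hinner := (abs_le.mp (abs_re_add_sq_le
    ((norm_inv_pow_three_le two_pos hnorm).trans_eq (by norm_num)))).2
  have houter := neg_le_re_add_sq (norm_exp_le_one hre)
  rw [peakFunction, Complex.sub_re]
  linarith

lemma re_peakFunction_one_ge : 81 / 64 + 1 / 2 ≤ (peakFunction 1).re := by
  have houter := (abs_le.mp (abs_re_add_sq_le (norm_exp_le_one_eighth Complex.one_re.le))).2
  have hinner : ((1 : ℂ)⁻¹ ^ 3 + ((1 : ℂ)⁻¹ ^ 3) ^ 2).re = 2 := by norm_num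
  rw [peakFunction, Complex.sub_re, hinner]
  linarith

lemma re_peakFunction_two_le : (peakFunction 2).re ≤ -(81 / 64 + 1 / 2) := by
  have hinner := (abs_le.mp (abs_re_add_sq_le
    ((norm_inv_pow_three_le two_pos (Complex.norm_two).ge).trans_eq (by norm_num)))).2
  have houter : (Complex.exp (7 * (2 - 2)) + Complex.exp (7 * (2 - 2)) ^ 2).re = 2 := by norm_num
  rw [peakFunction, Complex.sub_re, houter]
  linarith

lemma differentiableAt_peakFunction {w : ℂ} (hw : w ≠ 0) : DifferentiableAt ℂ peakFunction w := by
  unfold peakFunction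
  fun_prop (disch := exact hw)

end PeakFunction

section PeaksOnCollar

variable {A : Set ℂ} {a : ℂ} {δ r : ℝ}

lemma re_sub_le_infDist (ha : a ∈ A) (hmax : ∀ b ∈ A, b.re ≤ a.re) (z : ℂ) :
    (z - a).re ≤ infDist z A := by
  refine (le_infDist ⟨a, ha⟩).mpr fun b hb => ?_
  rw [dist_eq_norm]
  refine le_trans ?_ (Complex.re_le_norm _)
  simpa only [Complex.sub_re, sub_le_sub_iff_left] using hmax b hb

lemma infDist_add_ofReal_eq (ha : a ∈ A) (hmax : ∀ b ∈ A, b.re ≤ a.re) (hr : 0 ≤ r) :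
    infDist (a + r) A = r := by
  refine le_antisymm ((infDist_le_dist_of_mem ha).trans_eq ?_) ?_
  · simp [dist_eq_norm, abs_of_nonneg hr]
  · simpa using re_sub_le_infDist ha hmax (a + r)

lemma exists_peaksInside_collar (hA : IsCompact A) (hne : A.Nonempty) (hδ : 0 < δ) :
    ∃ g : ℂ → ℂ, DifferentiableOn ℂ g Aᶜ ∧
      PeaksInside (collar A δ) (collarCutoff A δ) (fun z => (g z).re) ∧
      PeaksInside (collar A δ) (1 - collarCutoff A δ) (fun z => -(g z).re) := by
  obtain ⟨a, ha, hmax⟩ := hA.exists_isMaxOn hne Complex.continuous_re.continuousOn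
  set w : ℂ → ℂ := fun z => (z - a) / δ with hw
  have hre {z : ℂ} {r : ℝ} (hz : infDist z A = r * δ) : (w z).re ≤ r := by
    rw [hw, Complex.div_ofReal_re, div_le_iff₀ hδ]
    exact (re_sub_le_infDist ha hmax z).trans_eq hz
  have hnorm {z : ℂ} {r : ℝ} (hz : infDist z A = r * δ) : r ≤ ‖w z‖ := by
    rw [hw, norm_div, Complex.norm_real, Real.norm_of_nonneg hδ.le, le_div_iff₀ hδ, ← hz,
      ← dist_eq_norm]
    exact infDist_le_dist_of_mem ha
  have hδ' : (δ : ℂ) ≠ 0 := Complex.ofReal_ne_zero.mpr hδ.ne'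
  refine ⟨fun z => peakFunction (w z), fun z hz => ?_, ?_, ?_⟩
  · have hwz : w z ≠ 0 := div_ne_zero (sub_ne_zero.mpr fun h => hz (h ▸ ha)) hδ'
    exact ((differentiableAt_peakFunction hwz).comp z (by fun_prop)).differentiableWithinAt
  · obtain ⟨hp, hp1⟩ := (mem_collar_and_cutoff_eq_one_iff hδ).mpr
      (infDist_add_ofReal_eq ha hmax hδ.le)
    refine ⟨a + δ, hp, hp1, fun z hz hz0 => ?_⟩
    have hz2 := (mem_collar_and_cutoff_eq_zero_iff hδ).mp ⟨hz, hz0⟩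
    have hwp : w (a + δ) = 1 := by rw [hw]; field_simp; ring
    simp only [hwp]
    linarith [re_peakFunction_one_ge, re_peakFunction_le (hnorm hz2) (hre hz2)]
  · obtain ⟨hp, hp0⟩ := (mem_collar_and_cutoff_eq_zero_iff hδ).mpr
      (infDist_add_ofReal_eq ha hmax (r := 2 * δ) (by positivity))
    refine ⟨a + (2 * δ : ℝ), hp, sub_eq_self.mpr hp0, fun z hz hz0 => ?_⟩
    have hz1 := (mem_collar_and_cutoff_eq_one_iff hδ).mp ⟨hz, (sub_eq_zero.mp hz0).symm⟩
    rw [← one_mul δ] at hz1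
    have hwp : w (a + (2 * δ : ℝ)) = 2 := by rw [hw]; push_cast; field_simp; ring
    simp only [hwp]
    linarith [re_peakFunction_two_le, re_peakFunction_ge (hnorm hz1) (hre hz1)]

end PeaksOnCollar

lemma PeaksInside.congr {α : Type*} {K : Set α} {χ χ' u : α → ℝ} (h : PeaksInside K χ u)
    (hχ : EqOn χ' χ K) : PeaksInside K χ' u := by
  obtain ⟨p, hp, hp1, hmax⟩ := h
  exact ⟨p, hp, (hχ hp).trans hp1, fun z hz hz0 => hmax z hz ((hχ hz).symm.trans hz0)⟩

/-- The holes of `Ω` on which `ψ` equals `1`: those enclosed by the transition set of `ψ` when `ψ`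
is a compactly supported transition function. -/
def enclosedHoles (Ω : Set ℂ) (ψ : ℂ → ℝ) : Set (Set ℂ) :=
  {C | IsHole Ω C ∧ ∀ w ∈ C, ψ w = 1}

section Between

variable {Ω X₁ X₂ : Set ℂ} {ψ₁ ψ₂ : ℂ → ℝ}

lemma IsTransition.eq_one_of_enclosedHoles_subset (h₁ : IsTransition X₁ ψ₁) (hX₁ : X₁ ⊆ Ω)
    (hc₁ : HasCompactSupport ψ₁) (hsub : enclosedHoles Ω ψ₁ ⊆ enclosedHoles Ω ψ₂) {w : ℂ}
    (hw : w ∉ Ω) (hψ₁ : ψ₁ w = 1) : ψ₂ w = 1 := by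
  have hwC : w ∈ connectedComponentIn Ωᶜ w := mem_connectedComponentIn hw
  have hone : ∀ v ∈ connectedComponentIn Ωᶜ w, ψ₁ v = 1 := fun v hv =>
    (h₁.apply_eq_of_isPreconnected isPreconnected_connectedComponentIn
      (disjoint_compl_left.mono (connectedComponentIn_subset _ _) hX₁) hv hwC).trans hψ₁
  have hbdd : IsBounded (connectedComponentIn Ωᶜ w) := hc₁.isBounded.subset fun v hv =>
    subset_tsupport _ (by rw [Function.mem_support, hone v hv]; exact one_ne_zero)
  exact (hsub ⟨⟨⟨w, hw, rfl⟩, hbdd⟩, hone⟩).2 w hwC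

lemma IsTransition.closure_between_subset (h₁ : IsTransition X₁ ψ₁) (h₂ : IsTransition X₂ ψ₂)
    (hX₁ : IsClosed X₁) (hX₂ : IsClosed X₂) (hX₁Ω : X₁ ⊆ Ω) (hX₂Ω : X₂ ⊆ Ω)
    (hencl : ∀ w ∉ Ω, ψ₁ w = 1 → ψ₂ w = 1) :
    closure ({w | 0 < ψ₁ w} ∩ {w | ψ₂ w < 1}) ⊆ Ω := fun w hw => by
  by_contra hwΩ
  have hcl := closure_inter_subset_inter_closure _ _ hw
  have hpos : 0 < ψ₁ w := by
    by_contra hnpos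
    exact hwΩ (hX₁Ω (h₁.frontier_pos_subset hX₁
      ⟨hcl.1, notMem_subset interior_subset hnpos⟩).1)
  have hone : ψ₂ w = 1 :=
    hencl w hwΩ ((h₁.eq_zero_or_eq_one w fun h => hwΩ (hX₁Ω h)).resolve_left hpos.ne')
  exact hwΩ (hX₂Ω (h₂.frontier_lt_one_subset hX₂
    ⟨hcl.2, notMem_subset interior_subset hone.ge.not_gt⟩))

lemma IsTransition.re_le_of_between {f : ℂ → ℂ} (hf : DifferentiableOn ℂ f Ω)
    (h₁ : IsTransition X₁ ψ₁) (h₂ : IsTransition X₂ ψ₂) (hX₁ : IsClosed X₁) (hX₂ : IsClosed X₂)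
    (hX₁Ω : X₁ ⊆ Ω) (hX₂Ω : X₂ ⊆ Ω) (hc₁ : HasCompactSupport ψ₁)
    (hencl : ∀ w ∉ Ω, ψ₁ w = 1 → ψ₂ w = 1) {B : ℝ}
    (hB₁ : ∀ w ∈ X₁, ψ₁ w = 0 → (f w).re ≤ B) (hB₂ : ∀ w ∈ X₂, (f w).re ≤ B) {p : ℂ}
    (hp₁ : 0 < ψ₁ p) (hp₂ : ψ₂ p < 1) : (f p).re ≤ B := by
  have hbdd : IsBounded ({w | 0 < ψ₁ w} ∩ {w | ψ₂ w < 1}) :=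
    hc₁.isBounded.subset fun w hw => subset_tsupport _ hw.1.ne'
  have hcl := h₁.closure_between_subset h₂ hX₁ hX₂ hX₁Ω hX₂Ω hencl
  refine re_le_of_forall_mem_frontier_re_le hbdd (hf.mono hcl).diffContOnCl (fun w hw => ?_)
    (subset_closure ⟨hp₁, hp₂⟩)
  rcases frontier_inter_subset _ _ hw with ⟨hw₁, -⟩ | ⟨-, hw₂⟩
  · have := h₁.frontier_pos_subset hX₁ hw₁
    exact hB₁ w this.1 this.2
  · exact hB₂ w (h₂.frontier_lt_one_subset hX₂ hw₂)

end Between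

/-- A connected compact set `K` containing a collar `K₀` with cutoff function `χ`, and a function
`g` such that `Re g` peaks on the inner boundary of the collar and `-Re g` on the outer one. -/
structure IsModelRing (g : ℂ → ℂ) (K₀ K : Set ℂ) (χ : ℂ → ℝ) : Prop where
  isCompact_collar : IsCompact K₀
  isTransition : IsTransition K₀ χ
  peaksInside : PeaksInside K₀ χ fun z => (g z).re
  peaksInside_neg : PeaksInside K₀ (1 - χ) fun z => -(g z).re
  isCompact : IsCompact K
  isPreconnected : IsPreconnected K
  collar_subset : K₀ ⊆ K

/-- The image of a model ring under a map `φ` such that `f ∘ φ` approximates `t * I + g` on `K`.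
Its transition function `ψ` tells inside from outside in the image plane; the sign `σ` records
whether `φ` preserves or exchanges the two boundaries. -/
structure IsApproxRing (f g : ℂ → ℂ) (Ω K₀ K : Set ℂ) (φ : ℂ → ℂ) (ψ : ℂ → ℝ) (t : ℝ) :
    Prop where
  isTransition : IsTransition (φ '' K₀) ψ
  hasCompactSupport : HasCompactSupport ψ
  mapsTo : MapsTo φ K Ω
  continuousOn : ContinuousOn φ K
  exists_peaksInside : ∃ σ : ℝ, |σ| = 1 ∧ PeaksInside K₀ (ψ ∘ φ) fun z => σ * (g z).re
  approx : ∀ z ∈ K, ‖f (φ z) - (t * Complex.I + g z)‖ < 1 / 16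

lemma exists_isModelRing {G : Set ℂ} (hG : IsOpen G) (hGc : IsConnected G)
    (hhole : ¬ HasNoHole G) :
    ∃ g K₀ K χ, DifferentiableOn ℂ g G ∧ K ⊆ G ∧ IsModelRing g K₀ K χ := by
  obtain ⟨_, ⟨z, hz, rfl⟩, hb⟩ := not_not.mp hhole
  obtain ⟨A, hAG, hA, hne, δ, hδ, hdisj⟩ :=
    exists_isCompact_disjoint_collar hG.isClosed_compl hz hb
  obtain ⟨g, hg, hpeak, hpeak'⟩ := exists_peaksInside_collar hA hne hδ
  obtain ⟨K, hKG, hK, hKc, hsub⟩ := exists_isCompact_isConnected_superset hG hGc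
    (isCompact_collar hA hne) (disjoint_compl_right_iff_subset.mp hdisj)
  exact ⟨g, collar A δ, K, collarCutoff A δ, hg.mono (subset_compl_comm.mp hAG), hKG,
    isCompact_collar hA hne, isTransition_collarCutoff hδ, hpeak, hpeak', hK, hKc.isPreconnected,
    hsub⟩

lemma IsModelRing.nonempty_collar {g : ℂ → ℂ} {K₀ K : Set ℂ} {χ : ℂ → ℝ}
    (h : IsModelRing g K₀ K χ) : K₀.Nonempty :=
  let ⟨p, hp, _⟩ := h.peaksInside
  ⟨p, hp⟩

lemma IsModelRing.exists_isApproxRing {f g φ : ℂ → ℂ} {Ω K₀ K U : Set ℂ} {χ : ℂ → ℝ} {t : ℝ}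
    (h : IsModelRing g K₀ K χ) (hU : IsOpen U) (hKU : K ⊆ U) (hφ : DifferentiableOn ℂ φ U)
    (hinj : InjOn φ U) (hm : MapsTo φ K Ω)
    (happrox : ∀ z ∈ K, ‖f (φ z) - (t * Complex.I + g z)‖ < 1 / 16) :
    ∃ ψ, IsApproxRing f g Ω K₀ K φ ψ t := by
  obtain ⟨ψ, hψ, hsupp, heq⟩ := h.isTransition.exists_pushforward
    (by rw [Complex.rank_real_complex]; exact Cardinal.one_lt_two)
    (isOpenEmbedding_domRestrict_of_differentiableOn hU hφ hinj) h.isCompact_collar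
    h.nonempty_collar h.isPreconnected h.collar_subset hKU
  refine ⟨ψ, hψ, hsupp, hm, hφ.continuousOn.mono hKU, ?_, happrox⟩
  rcases heq with heq | heq
  · exact ⟨1, abs_one, by simpa only [one_mul] using h.peaksInside.congr (heq.mono h.collar_subset)⟩
  · exact ⟨-1, by simp, by
      simpa only [neg_one_mul] using h.peaksInside_neg.congr (heq.mono h.collar_subset)⟩

lemma exists_abs_eq_one_and_mul_eq_abs {α : Type*} [Ring α] [LinearOrder α] [IsStrictOrderedRing α]
    (a : α) : ∃ τ : α, |τ| = 1 ∧ τ * a = |a| := by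
  rcases abs_choice a with h | h
  · exact ⟨1, abs_one, by rw [one_mul, h]⟩
  · exact ⟨-1, by rw [abs_neg, abs_one], by rw [neg_one_mul, h]⟩

namespace IsApproxRing

variable {f g : ℂ → ℂ} {Ω K₀ K : Set ℂ} {φ φ₁ φ₂ : ℂ → ℂ} {ψ ψ₁ ψ₂ : ℂ → ℝ} {t t₁ t₂ S : ℝ}

lemma isClosed_image (h : IsApproxRing f g Ω K₀ K φ ψ t) (hK₀ : IsCompact K₀) (hsub : K₀ ⊆ K) :
    IsClosed (φ '' K₀) :=
  (hK₀.image_of_continuousOn (h.continuousOn.mono hsub)).isClosed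

lemma image_subset (h : IsApproxRing f g Ω K₀ K φ ψ t) (hsub : K₀ ⊆ K) : φ '' K₀ ⊆ Ω :=
  (h.mapsTo.mono_left hsub).image_subset

lemma disjoint_image (h₁ : IsApproxRing f g Ω K₀ K φ₁ ψ₁ t₁)
    (h₂ : IsApproxRing f g Ω K₀ K φ₂ ψ₂ t₂) (hg : ∀ z ∈ K, ‖g z‖ ≤ S)
    (ht : 16 * (S + 1) ^ 2 ≤ |t₁ - t₂|) : Disjoint (φ₁ '' K) (φ₂ '' K) := by
  rw [disjoint_left]
  rintro _ ⟨z, hz, rfl⟩ ⟨z', hz', heq⟩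
  have hS : 0 ≤ S := (norm_nonneg _).trans (hg z hz)
  have hle : |t₁ - t₂| ≤ 1 / 16 + 1 / 16 + S + S := by
    have hsplit : ((t₁ - t₂ : ℝ) : ℂ) * Complex.I = (f (φ₂ z') - (t₂ * Complex.I + g z'))
        - (f (φ₁ z) - (t₁ * Complex.I + g z)) + g z' - g z := by
      rw [heq]; push_cast; ring
    calc |t₁ - t₂| = ‖((t₁ - t₂ : ℝ) : ℂ) * Complex.I‖ := by
          rw [norm_mul, Complex.norm_I, mul_one, Complex.norm_real, Real.norm_eq_abs]
      _ ≤ 1 / 16 + 1 / 16 + S + S := by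
        rw [hsplit]
        refine norm_sub_le_of_le (norm_add_le_of_le (norm_sub_le_of_le ?_ ?_) (hg z' hz')) (hg z hz)
        exacts [(h₂.approx z' hz').le, (h₁.approx z hz).le]
  nlinarith

lemma abs_re_mul_sub_le (h : IsApproxRing f g Ω K₀ K φ ψ t) (hg : ∀ z ∈ K, ‖g z‖ ≤ S) {σ τ L : ℝ}
    (hσ : |σ| = 1) (hτ : |τ| = 1) (hL : 0 ≤ L) {z : ℂ} (hz : z ∈ K) :
    |((L * σ - τ * Complex.I) * f (φ z)).re - (τ * t + L * (σ * (g z).re))| ≤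
      S + (L + 1) / 16 := by
  have hc : ‖(L * σ - τ * Complex.I : ℂ)‖ ≤ L + 1 := by
    refine norm_sub_le_of_le ?_ ?_ <;> simp [hσ, hτ, abs_of_nonneg hL]
  have hsplit : ((L * σ - τ * Complex.I) * f (φ z)).re - (τ * t + L * (σ * (g z).re)) =
      τ * (g z).im + ((L * σ - τ * Complex.I) * (f (φ z) - (t * Complex.I + g z))).re := by
    simp only [Complex.mul_re, Complex.sub_re, Complex.sub_im, Complex.add_re, Complex.add_im,
      Complex.mul_im, Complex.ofReal_re, Complex.ofReal_im, Complex.I_re, Complex.I_im]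
    ring
  rw [hsplit]
  refine (abs_add_le _ _).trans (add_le_add ?_ ?_)
  · rw [abs_mul, hτ, one_mul]
    exact (Complex.abs_im_le_norm _).trans (hg z hz)
  · refine (Complex.abs_re_le_norm _).trans ?_
    rw [norm_mul, div_eq_mul_one_div]
    exact mul_le_mul hc (h.approx z hz).le (norm_nonneg _) (by positivity)

-- The maximum principle is applied to `(L * σ - τ * I) * f` on the region inside the first ring and
-- outside the second: the factor `L * σ` makes the inner boundary of the first ring dominate its
-- outer boundary, and `-τ * I` turns the gap `|t₁ - t₂|` into a gap between real parts.
lemma not_forall_eq_zero (hf : DifferentiableOn ℂ f Ω) (hK₀ : IsCompact K₀) (hsub : K₀ ⊆ K)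
    (h₁ : IsApproxRing f g Ω K₀ K φ₁ ψ₁ t₁) (h₂ : IsApproxRing f g Ω K₀ K φ₂ ψ₂ t₂)
    (hg : ∀ z ∈ K, ‖g z‖ ≤ S) (ht : 16 * (S + 1) ^ 2 ≤ |t₁ - t₂|)
    (hholes : enclosedHoles Ω ψ₁ ⊆ enclosedHoles Ω ψ₂) :
    ¬ ∀ z ∈ K₀, ψ₂ (φ₁ z) = 0 := fun hzero => by
  obtain ⟨σ, hσ, p, hp, hp1, hpeak⟩ := h₁.exists_peaksInside
  simp only [Function.comp_apply] at hp1 hpeak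
  have hS : 0 ≤ S := (norm_nonneg _).trans (hg p (hsub hp))
  set L := 8 * (S + 1) with hL
  obtain ⟨τ, hτ, hτt⟩ := exists_abs_eq_one_and_mul_eq_abs (t₁ - t₂)
  have hest₁ (z : ℂ) (hz : z ∈ K₀) :=
    abs_le.mp (h₁.abs_re_mul_sub_le hg hσ hτ (by positivity : 0 ≤ L) (hsub hz))
  have hest₂ (z : ℂ) (hz : z ∈ K₀) :=
    abs_le.mp (h₂.abs_re_mul_sub_le hg hσ hτ (by positivity : 0 ≤ L) (hsub hz))
  have hσg (z : ℂ) (hz : z ∈ K₀) : |σ * (g z).re| ≤ S := by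
    rw [abs_mul, hσ, one_mul]
    exact (Complex.abs_re_le_norm _).trans (hg z (hsub hz))
  set B := τ * t₁ + L * (σ * (g p).re - 1 / 2) + (S + (L + 1) / 16) with hB
  have hle := h₁.isTransition.re_le_of_between (hf.const_mul (L * σ - τ * Complex.I))
    h₂.isTransition (h₁.isClosed_image hK₀ hsub) (h₂.isClosed_image hK₀ hsub)
    (h₁.image_subset hsub) (h₂.image_subset hsub) h₁.hasCompactSupport
    (fun w hw => h₁.isTransition.eq_one_of_enclosedHoles_subset (h₁.image_subset hsub)
      h₁.hasCompactSupport hholes hw) (B := B)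
    (forall_mem_image.mpr fun z hz hz0 => ?_) (forall_mem_image.mpr fun z hz => ?_)
    (p := φ₁ p) (by rw [hp1]; exact one_pos) (by rw [hzero p hp]; exact one_pos)
  · linarith [(hest₁ p hp).1]
  · have := hpeak z hz hz0
    have : L * (σ * (g z).re) ≤ L * (σ * (g p).re - 1 / 2) := by gcongr; linarith
    linarith [(hest₁ z hz).2]
  · have hLz : L * (σ * (g z).re) ≤ L * S := by gcongr; exact (abs_le.mp (hσg z hz)).2
    have hLp : L * -S ≤ L * (σ * (g p).re) := by gcongr; exact (abs_le.mp (hσg p hp)).1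
    have hgap : 2 * (L * S) + L / 2 ≤ 16 * (S + 1) ^ 2 := by rw [hL]; nlinarith
    linarith [(hest₂ z hz).2, hgap]

lemma eq_one_of_enclosedHoles_subset (hf : DifferentiableOn ℂ f Ω) (hK₀ : IsCompact K₀)
    (hsub : K₀ ⊆ K) (hK : IsPreconnected K)
    (h₁ : IsApproxRing f g Ω K₀ K φ₁ ψ₁ t₁) (h₂ : IsApproxRing f g Ω K₀ K φ₂ ψ₂ t₂)
    (hg : ∀ z ∈ K, ‖g z‖ ≤ S) (ht : 16 * (S + 1) ^ 2 ≤ |t₁ - t₂|)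
    (hholes : enclosedHoles Ω ψ₁ ⊆ enclosedHoles Ω ψ₂) {w : ℂ} (hw : w ∈ φ₁ '' K₀) :
    ψ₂ w = 1 := by
  have hdisj : Disjoint (φ₁ '' K) (φ₂ '' K₀) :=
    (h₁.disjoint_image h₂ hg ht).mono_right (image_mono hsub)
  have hwK : w ∈ φ₁ '' K := image_mono hsub hw
  refine (h₂.isTransition.eq_zero_or_eq_one w (disjoint_left.mp hdisj hwK)).resolve_left
    fun hw0 => h₁.not_forall_eq_zero hf hK₀ hsub h₂ hg ht hholes fun z hz => ?_
  exact (h₂.isTransition.apply_eq_of_isPreconnected (hK.image φ₁ h₁.continuousOn) hdisj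
    (mem_image_of_mem φ₁ (hsub hz)) hwK).trans hw0

end IsApproxRing

lemma IsModelRing.enclosedHoles_ne {f g φ₁ φ₂ : ℂ → ℂ} {Ω K₀ K : Set ℂ} {χ ψ₁ ψ₂ : ℂ → ℝ}
    {t₁ t₂ S : ℝ} (h : IsModelRing g K₀ K χ) (hf : DifferentiableOn ℂ f Ω)
    (h₁ : IsApproxRing f g Ω K₀ K φ₁ ψ₁ t₁) (h₂ : IsApproxRing f g Ω K₀ K φ₂ ψ₂ t₂)
    (hg : ∀ z ∈ K, ‖g z‖ ≤ S) (ht : 16 * (S + 1) ^ 2 ≤ |t₁ - t₂|) :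
    enclosedHoles Ω ψ₁ ≠ enclosedHoles Ω ψ₂ := fun heq =>
  h₁.isTransition.not_mutually_enclosing h₂.isTransition h₁.hasCompactSupport
    h₂.hasCompactSupport (h.nonempty_collar.image φ₁)
    (fun _ => h₁.eq_one_of_enclosedHoles_subset hf h.isCompact_collar h.collar_subset
      h.isPreconnected h₂ hg ht heq.subset)
    (fun _ => h₂.eq_one_of_enclosedHoles_subset hf h.isCompact_collar h.collar_subset
      h.isPreconnected h₁ hg (abs_sub_comm t₁ t₂ ▸ ht) heq.superset)

lemma UniversalFor.exists_injective {ι : Type*} {G K : Set ℂ} {φ : ℕ → ℂ → ℂ} {f g : ℂ → ℂ}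
    (hu : UniversalFor G φ f) (hg : DifferentiableOn ℂ g G) (hKG : K ⊆ G) (hK : IsCompact K)
    (hne : K.Nonempty) {ε : ℝ} (hε : 0 < ε) {c : ι → ℂ}
    (hc : Pairwise fun i j => 2 * ε ≤ ‖c i - c j‖) :
    ∃ n : ι → ℕ, Function.Injective n ∧ ∀ i, ∀ z ∈ K, ‖f (φ (n i) z) - (c i + g z)‖ < ε := by
  choose n hn using fun i => hu (fun z => c i + g z) (hg.const_add (c i)) K hKG hK ε hε
  refine ⟨n, fun i j hij => by_contra fun hne' => (hc hne').not_gt ?_, hn⟩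
  obtain ⟨z, hz⟩ := hne
  have hj := hn j z hz
  rw [← hij] at hj
  calc ‖c i - c j‖ = ‖(f (φ (n i) z) - (c j + g z)) - (f (φ (n i) z) - (c i + g z))‖ := by
        congr 1; ring
    _ ≤ ‖f (φ (n i) z) - (c j + g z)‖ + ‖f (φ (n i) z) - (c i + g z)‖ := norm_sub_le _ _
    _ < 2 * ε := by linarith [hn i z hz]

lemma pairwise_le_abs_mul_natCast_sub {α : Type*} [Ring α] [LinearOrder α] [IsStrictOrderedRing α]
    {T : α} (hT : 0 ≤ T) : Pairwise fun i j : ℕ => T ≤ |T * i - T * j| := fun i j hij => by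
  have hone : (1 : α) ≤ |(i : α) - j| := by
    exact_mod_cast Int.one_le_abs (sub_ne_zero.mpr (Nat.cast_injective.ne hij))
  beta_reduce
  rw [← mul_sub, abs_mul, abs_of_nonneg hT]
  exact le_mul_of_one_le_right hT hone

lemma IsModelRing.exists_isApproxRing_seq {f g : ℂ → ℂ} {G Ω K₀ K : Set ℂ} {χ : ℂ → ℝ}
    {φ : ℕ → ℂ → ℂ} (h : IsModelRing g K₀ K χ) (hu : UniversalFor G φ f)
    (hinj : EventuallyInjective G φ) (hφd : ∀ n, DifferentiableOn ℂ (φ n) G)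
    (hφm : ∀ n, MapsTo (φ n) G Ω) (hg : DifferentiableOn ℂ g G) (hKG : K ⊆ G) {T : ℝ}
    (hT : 1 ≤ T) :
    ∃ (n : ℕ → ℕ) (ψ : ℕ → ℂ → ℝ) (t : ℕ → ℝ), (Pairwise fun i j => T ≤ |t i - t j|) ∧
      ∀ i, IsApproxRing f g Ω K₀ K (φ (n i)) (ψ i) (t i) := by
  have hsep := pairwise_le_abs_mul_natCast_sub (zero_le_one.trans hT)
  have hsep' : Pairwise fun i j : ℕ => 2 * (1 / 16 : ℝ) ≤
      ‖((T * i : ℝ) : ℂ) * Complex.I - ((T * j : ℝ) : ℂ) * Complex.I‖ := fun i j hij => by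
    beta_reduce
    rw [← sub_mul, norm_mul, Complex.norm_I, mul_one, ← Complex.ofReal_sub, Complex.norm_real]
    exact (by linarith : 2 * (1 / 16 : ℝ) ≤ T).trans (hsep hij)
  obtain ⟨N, hN⟩ := hinj K hKG h.isCompact
  obtain ⟨n, hn, happrox⟩ := hu.exists_injective hg hKG h.isCompact
    (h.nonempty_collar.mono h.collar_subset) (by norm_num : (0 : ℝ) < 1 / 16) hsep'
  obtain ⟨m, hm⟩ := eventually_atTop.mp (hn.nat_tendsto_atTop.eventually_ge_atTop N)
  have hring (i : ℕ) : ∃ ψ, IsApproxRing f g Ω K₀ K (φ (n (m + i))) ψ (T * (m + i : ℕ)) := by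
    obtain ⟨U, hU, hKU, hUG, hinjU⟩ := hN _ (hm (m + i) (Nat.le_add_right m i))
    exact h.exists_isApproxRing hU hKU ((hφd _).mono hUG) hinjU ((hφm _).mono_left hKG)
      (happrox _)
  choose ψ hψ using hring
  exact ⟨_, ψ, _, fun i j hij => hsep ((add_right_injective m).ne hij), hψ⟩

theorem no_universal_of_not_simplyConnected_of_finitely_connected_general
    {G Ω : Set ℂ} (hG : IsOpen G) (hGconn : IsConnected G) (hGnsc : ¬ HasNoHole G)
    (hΩfin : {C : Set ℂ | IsHole Ω C}.Finite)
    {φ : ℕ → ℂ → ℂ} (hφd : ∀ n, DifferentiableOn ℂ (φ n) G)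
    (hφm : ∀ n, MapsTo (φ n) G Ω) (hinj : EventuallyInjective G φ) :
    ¬ ∃ f : ℂ → ℂ, DifferentiableOn ℂ f Ω ∧ UniversalFor G φ f := by
  rintro ⟨f, hf, hu⟩
  obtain ⟨g, K₀, K, χ, hg, hKG, hK⟩ := exists_isModelRing hG hGconn hGnsc
  obtain ⟨S, hS⟩ := hK.isCompact.exists_bound_of_continuousOn (hg.continuousOn.mono hKG)
  obtain ⟨n, ψ, t, ht, hψ⟩ := hK.exists_isApproxRing_seq hu hinj hφd hφm hg hKG
    (le_max_left 1 (16 * (S + 1) ^ 2))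
  have hmaps : MapsTo (fun i => enclosedHoles Ω (ψ i)) univ {H | H ⊆ {C | IsHole Ω C}} :=
    fun _ _ _ hC => hC.1
  obtain ⟨i, -, j, -, hij, heq⟩ :=
    infinite_univ.exists_ne_map_eq_of_mapsTo hmaps hΩfin.finite_subsets
  exact hK.enclosedHoles_ne hf (hψ i) (hψ j) hS ((le_max_right _ _).trans (ht hij)) heq

/-- Theorem `thm-charac-injective` (3): if `G` is not simply connected and
`Ω` has only finitely many holes, there is no `(Φ,G,Ω)`-universal function. -/
theorem no_universal_of_not_simplyConnected_of_finitely_connected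
    (G Ω : Set ℂ) (hG : IsOpen G) (hGconn : IsConnected G)
    (hΩ : IsOpen Ω) (hΩconn : IsConnected Ω)
    (hGnsc : ¬ HasNoHole G) (hΩfin : {C : Set ℂ | IsHole Ω C}.Finite)
    (φ : ℕ → ℂ → ℂ) (hφd : ∀ n, DifferentiableOn ℂ (φ n) G)
    (hφm : ∀ n, Set.MapsTo (φ n) G Ω)
    (hinj : EventuallyInjective G φ) :
    ¬ ∃ f : ℂ → ℂ, DifferentiableOn ℂ f Ω ∧ UniversalFor G φ f :=
  no_universal_of_not_simplyConnected_of_finitely_connected_general hG hGconn hGnsc hΩfin hφd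
    hφm hinj
end

section
/- Let G and Ω be domains in ℂ and let Φ = (φₙ) be a sequence of holomorphic maps from G to Ω. There exists a (Φ,G,Ω)-universal function if and only if for every ε > 0, every compact set K ⊆ G, every compact set L ⊆ Ω, every g ∈ H(G) and every h ∈ H(Ω), there exist f ∈ H(Ω) and n ∈ ℕ such that sup_{z∈K} |f(φₙ(z)) − g(z)| ≤ ε and sup_{z∈L} |f(z) − h(z)| ≤ ε. -/
open Set Metric Bornology Filter

/-!
If `f` is universal and `M` is large, some `f ∘ φ n` is close to `g + M` on `K`, so `f / M` is close
to `1` on `φ n '' K`, while it is close to `0` on `L`. An entire function `s` that is nearly `0`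
near `0` and nearly `1` near `1` therefore turns `f / M` into a holomorphic switch `s (f / M)`
between `h` on `L` and `f - M` on `φ n '' K`.

Conversely, the criterion says that the composition operators `f ↦ f ∘ φ n` from `H(Ω)` to `H(G)`
form a topologically transitive family; since `H(Ω)` is a Baire space and `H(G)` is second
countable, some `f` has a dense orbit.
-/

open Topology

theorem exists_denseRange_of_transitive {ι X Y : Type*} [TopologicalSpace X] [BaireSpace X]
    [Nonempty X] [TopologicalSpace Y] [SecondCountableTopology Y] {T : ι → X → Y}
    (hT : ∀ i, Continuous (T i))
    (htrans : ∀ U : Set X, IsOpen U → U.Nonempty → ∀ V : Set Y, IsOpen V → V.Nonempty →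
      ∃ x ∈ U, ∃ i, T i x ∈ V) :
    ∃ x, DenseRange fun i => T i x := by
  have hbasis := TopologicalSpace.isBasis_countableBasis Y
  have hdense : Dense (⋂ V ∈ TopologicalSpace.countableBasis Y, ⋃ i, T i ⁻¹' V) := by
    refine dense_biInter_of_isOpen
      (fun V hV => isOpen_iUnion fun i => (hbasis.isOpen hV).preimage (hT i))
      (TopologicalSpace.countable_countableBasis Y)
      fun V hV => dense_iff_inter_open.2 fun U hU hUne => ?_
    obtain ⟨x, hxU, i, hi⟩ := htrans U hU hUne V (hbasis.isOpen hV)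
      (TopologicalSpace.nonempty_of_mem_countableBasis hV)
    exact ⟨x, hxU, mem_iUnion.2 ⟨i, hi⟩⟩
  obtain ⟨x, hx⟩ := hdense.nonempty
  refine ⟨x, hbasis.dense_iff.2 fun V hV _ => ?_⟩
  obtain ⟨i, hi⟩ := mem_iUnion.1 (mem_iInter₂.1 hx V hV)
  exact ⟨T i x, hi, i, rfl⟩

section HolomorphicMaps

variable {E F V : Type*} [NormedAddCommGroup E] [NormedSpace ℂ E]
  [NormedAddCommGroup F] [NormedSpace ℂ F] [NormedAddCommGroup V] [NormedSpace ℂ V]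

/-- The space of holomorphic maps from `S` to `V`, written `H(S)` when `V = ℂ`. It is encoded as a
subset of `C(S, V)`, from which it inherits the topology of uniform convergence on compact sets. -/
def holomorphicMaps (S : Set E) (V : Type*) [NormedAddCommGroup V] [NormedSpace ℂ V] :
    Set C(S, V) :=
  {u | ∃ f : E → V, DifferentiableOn ℂ f S ∧ ∀ x : S, u x = f x}

namespace holomorphicMaps

/-- The element of `holomorphicMaps S V` given by a function on the ambient space that is
holomorphic on `S`. -/
def ofDifferentiableOn {S : Set E} {f : E → V} (hf : DifferentiableOn ℂ f S) :
    holomorphicMaps S V :=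
  ⟨⟨S.domRestrict f, hf.continuousOn.domRestrict⟩, f, hf, fun _ => rfl⟩

theorem exists_ofDifferentiableOn_eq {S : Set E} (u : holomorphicMaps S V) :
    ∃ (f : E → V) (hf : DifferentiableOn ℂ f S), ofDifferentiableOn hf = u := by
  obtain ⟨u, f, hf, huf⟩ := u
  exact ⟨f, hf, Subtype.ext <| ContinuousMap.ext fun x => (huf x).symm⟩

theorem mem_iff_differentiableOn_extend {S : Set E} {u : C(S, V)} :
    u ∈ holomorphicMaps S V ↔ DifferentiableOn ℂ (Function.extend Subtype.val u 0) S := by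
  have hextend : ∀ x : S, Function.extend Subtype.val u 0 (x : E) = u x :=
    Subtype.val_injective.extend_apply u 0
  refine ⟨fun ⟨f, hf, huf⟩ => hf.congr fun z hz => ?_, fun h => ⟨_, h, fun x => (hextend x).symm⟩⟩
  exact (hextend ⟨z, hz⟩).trans (huf ⟨z, hz⟩)

theorem isClosed [CompleteSpace V] {S : Set ℂ} (hS : IsOpen S) :
    IsClosed (holomorphicMaps S V) := by
  have := hS.locallyCompactSpace
  refine isClosed_iff_ultrafilter.2 fun u l hl hmem => ?_
  have hlim : TendstoLocallyUniformlyOn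
      (fun v : C(S, V) => Function.extend Subtype.val v (0 : ℂ → V))
      (Function.extend Subtype.val u 0) l S := by
    rw [tendstoLocallyUniformlyOn_iff_tendstoLocallyUniformly_comp_coe]
    simpa only [Subtype.val_injective.extend_apply, Function.comp_def, id_eq]
      using ContinuousMap.tendsto_iff_tendstoLocallyUniformly.1 (tendsto_id'.2 hl)
  exact mem_iff_differentiableOn_extend.2 <| hlim.differentiableOn
    (Filter.mem_of_superset hmem fun _ => mem_iff_differentiableOn_extend.1) hS

theorem baireSpace [CompleteSpace V] {S : Set ℂ} (hS : IsOpen S) :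
    BaireSpace (holomorphicMaps S V) := by
  have := hS.locallyCompactSpace
  have := (isClosed (V := V) hS).completeSpace_coe
  infer_instance

theorem hasBasis_nhds {S : Set E} (u : holomorphicMaps S V) :
    (𝓝 u).HasBasis (fun p : Set E × ℝ => (p.1 ⊆ S ∧ IsCompact p.1) ∧ 0 < p.2)
      fun p => {v | ∀ x : S, (x : E) ∈ p.1 → ‖v.1 x - u.1 x‖ < p.2} := by
  have hbasis := (nhds_basis_uniformity (x := u.1)
    (Metric.uniformity_basis_dist.compactConvergenceUniformity (α := S) (β := V))).comap
    (Subtype.val : holomorphicMaps S V → C(S, V))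
  rw [← nhds_subtype_eq_comap] at hbasis
  refine hbasis.to_hasBasis ?_ ?_
  · rintro ⟨K, ε⟩ ⟨hK, hε⟩
    refine ⟨(Subtype.val '' K, ε), ⟨⟨Subtype.coe_image_subset S K,
      hK.image continuous_subtype_val⟩, hε⟩, fun v hv x hx => ?_⟩
    exact (dist_eq_norm _ _).trans_lt (hv x (mem_image_of_mem _ hx))
  · rintro ⟨K, ε⟩ ⟨⟨hKS, hK⟩, hε⟩
    refine ⟨(Subtype.val ⁻¹' K, ε), ⟨IsInducing.subtypeVal.isCompact_preimage' hK
      (by simpa only [Subtype.range_coe] using hKS), hε⟩, fun v hv x hx => ?_⟩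
    exact (dist_eq_norm _ _).symm.trans_lt (hv x hx)

/-- The composition operator `f ↦ f ∘ φ` induced by a holomorphic map `φ` from `G` to `Ω`. -/
def precomp {G : Set E} {Ω : Set F} {φ : E → F} (hφd : DifferentiableOn ℂ φ G)
    (hφm : MapsTo φ G Ω) (u : holomorphicMaps Ω V) : holomorphicMaps G V :=
  ⟨u.1.comp ⟨hφm.restrict φ G Ω, hφd.continuousOn.mapsToRestrict hφm⟩,
    let ⟨f, hf, huf⟩ := u.2
    ⟨f ∘ φ, hf.comp hφd hφm, fun x => huf ⟨φ x, hφm x.2⟩⟩⟩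

theorem continuous_precomp {G : Set E} {Ω : Set F} {φ : E → F} (hφd : DifferentiableOn ℂ φ G)
    (hφm : MapsTo φ G Ω) : Continuous (precomp (V := V) hφd hφm) :=
  ((ContinuousMap.continuous_precomp _).comp continuous_subtype_val).subtype_mk _

end holomorphicMaps

end HolomorphicMaps

/-- The approximation property of Birkhoff's criterion: every pair `(g, h) ∈ H(G) × H(Ω)` can be
approximated, uniformly on compact sets, by pairs `(f ∘ φ n, f)` with `f ∈ H(Ω)`. -/
def BirkhoffCriterion (G Ω : Set ℂ) (φ : ℕ → ℂ → ℂ) : Prop :=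
  ∀ ε : ℝ, 0 < ε → ∀ K : Set ℂ, K ⊆ G → IsCompact K →
    ∀ L : Set ℂ, L ⊆ Ω → IsCompact L →
      ∀ g : ℂ → ℂ, DifferentiableOn ℂ g G →
        ∀ h : ℂ → ℂ, DifferentiableOn ℂ h Ω →
          ∃ f : ℂ → ℂ, DifferentiableOn ℂ f Ω ∧ ∃ n : ℕ,
            (∀ z ∈ K, ‖f (φ n z) - g z‖ ≤ ε) ∧ ∀ z ∈ L, ‖f z - h z‖ ≤ ε

section ExistenceOfUniversalFunctions

variable {G Ω : Set ℂ} {φ : ℕ → ℂ → ℂ}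

open holomorphicMaps

theorem universalFor_of_denseRange_precomp (hφd : ∀ n, DifferentiableOn ℂ (φ n) G)
    (hφm : ∀ n, MapsTo (φ n) G Ω) {f : ℂ → ℂ} (hf : DifferentiableOn ℂ f Ω)
    (hdense : DenseRange fun n => precomp (hφd n) (hφm n) (ofDifferentiableOn hf)) :
    UniversalFor G φ f := by
  intro g hg K hKG hK ε hε
  obtain ⟨_, ⟨n, rfl⟩, hclose⟩ := hdense.inter_nhds_nonempty
    ((hasBasis_nhds (ofDifferentiableOn hg)).mem_of_mem (i := (K, ε)) ⟨⟨hKG, hK⟩, hε⟩)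
  exact ⟨n, fun z hz => hclose ⟨z, hKG hz⟩ hz⟩

theorem BirkhoffCriterion.exists_precomp_mem (hcrit : BirkhoffCriterion G Ω φ)
    (hφd : ∀ n, DifferentiableOn ℂ (φ n) G) (hφm : ∀ n, MapsTo (φ n) G Ω)
    {U : Set (holomorphicMaps Ω ℂ)} (hU : IsOpen U) (hUne : U.Nonempty)
    {W : Set (holomorphicMaps G ℂ)} (hW : IsOpen W) (hWne : W.Nonempty) :
    ∃ u ∈ U, ∃ n, precomp (hφd n) (hφm n) u ∈ W := by
  obtain ⟨u, hu⟩ := hUne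
  obtain ⟨w, hw⟩ := hWne
  obtain ⟨h, hh, rfl⟩ := exists_ofDifferentiableOn_eq u
  obtain ⟨g, hg, rfl⟩ := exists_ofDifferentiableOn_eq w
  obtain ⟨⟨L, δ⟩, ⟨⟨hLΩ, hL⟩, hδ⟩, hLU⟩ := (hasBasis_nhds _).mem_iff.1 (hU.mem_nhds hu)
  obtain ⟨⟨K, ε⟩, ⟨⟨hKG, hK⟩, hε⟩, hKW⟩ := (hasBasis_nhds _).mem_iff.1 (hW.mem_nhds hw)
  obtain ⟨η, hη, hηlt⟩ := exists_between (lt_min hδ hε)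
  obtain ⟨hηδ, hηε⟩ := lt_min_iff.1 hηlt
  obtain ⟨f, hf, n, hfK, hfL⟩ := hcrit η hη K hKG hK L hLΩ hL g hg h hh
  exact ⟨ofDifferentiableOn hf, hLU fun x hx => (hfL x hx).trans_lt hηδ,
    n, hKW fun x hx => (hfK x hx).trans_lt hηε⟩

theorem BirkhoffCriterion.exists_universalFor (hcrit : BirkhoffCriterion G Ω φ) (hG : IsOpen G)
    (hΩ : IsOpen Ω) (hφd : ∀ n, DifferentiableOn ℂ (φ n) G) (hφm : ∀ n, MapsTo (φ n) G Ω) :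
    ∃ f : ℂ → ℂ, DifferentiableOn ℂ f Ω ∧ UniversalFor G φ f := by
  have := hG.locallyCompactSpace
  have := baireSpace (V := ℂ) hΩ
  have : Nonempty (holomorphicMaps Ω ℂ) := ⟨ofDifferentiableOn (differentiableOn_const 0)⟩
  obtain ⟨u, hu⟩ := exists_denseRange_of_transitive
    (fun n => continuous_precomp (V := ℂ) (hφd n) (hφm n))
    fun _ hU hUne _ hW hWne => hcrit.exists_precomp_mem hφd hφm hU hUne hW hWne
  obtain ⟨f, hf, rfl⟩ := exists_ofDifferentiableOn_eq u
  exact ⟨f, hf, universalFor_of_denseRange_precomp hφd hφm hf hu⟩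

end ExistenceOfUniversalFunctions

/-- The smoothstep polynomial, with superattracting fixed points `0` and `1`. Its iterates are the
entire functions that switch from `0` near `0` to `1` near `1`. -/
def smoothstep {R : Type*} [CommRing R] (x : R) : R := 3 * x ^ 2 - 2 * x ^ 3

theorem smoothstep_one_sub {R : Type*} [CommRing R] (x : R) :
    smoothstep (1 - x) = 1 - smoothstep x := by
  simp only [smoothstep]
  ring

theorem differentiable_smoothstep : Differentiable ℂ (smoothstep : ℂ → ℂ) := by
  unfold smoothstep
  fun_prop

theorem norm_smoothstep_le {x : ℂ} (hx : ‖x‖ ≤ 1 / 8) : ‖smoothstep x‖ ≤ 1 / 2 * ‖x‖ := by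
  have hfactor : ‖3 - 2 * x‖ ≤ 4 := by
    calc ‖3 - 2 * x‖ ≤ ‖(3 : ℂ)‖ + ‖2 * x‖ := norm_sub_le _ _
      _ = 3 + 2 * ‖x‖ := by simp only [norm_mul, Complex.norm_ofNat]
      _ ≤ 4 := by linarith
  calc ‖smoothstep x‖ = ‖x‖ * ‖3 - 2 * x‖ * ‖x‖ := by
        rw [← norm_mul, ← norm_mul, smoothstep]
        ring_nf
    _ ≤ 1 / 8 * 4 * ‖x‖ := by gcongr
    _ = 1 / 2 * ‖x‖ := by ring

theorem norm_smoothstep_iterate_le {x : ℂ} (hx : ‖x‖ ≤ 1 / 8) (k : ℕ) :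
    ‖smoothstep^[k] x‖ ≤ (1 / 2) ^ k * ‖x‖ := by
  induction k with
  | zero => simp
  | succ k ih =>
    have hsmall : ‖smoothstep^[k] x‖ ≤ 1 / 8 :=
      ih.trans <| (mul_le_of_le_one_left (norm_nonneg x)
        (pow_le_one₀ (by norm_num) (by norm_num))).trans hx
    calc ‖smoothstep^[k + 1] x‖ = ‖smoothstep (smoothstep^[k] x)‖ := by
          rw [Function.iterate_succ_apply']
      _ ≤ 1 / 2 * ‖smoothstep^[k] x‖ := norm_smoothstep_le hsmall
      _ ≤ 1 / 2 * ((1 / 2) ^ k * ‖x‖) := by gcongr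
      _ = (1 / 2) ^ (k + 1) * ‖x‖ := by ring

theorem exists_differentiable_near_zero_near_one {η : ℝ} (hη : 0 < η) :
    ∃ s : ℂ → ℂ, Differentiable ℂ s ∧ (∀ x, ‖x‖ ≤ 1 / 8 → ‖s x‖ ≤ η) ∧
      ∀ x, ‖1 - x‖ ≤ 1 / 8 → ‖1 - s x‖ ≤ η := by
  obtain ⟨k, hk⟩ := exists_pow_lt_of_lt_one hη (show (1 / 2 : ℝ) < 1 by norm_num)
  have hzero : ∀ x : ℂ, ‖x‖ ≤ 1 / 8 → ‖smoothstep^[k] x‖ ≤ η := fun x hx =>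
    calc ‖smoothstep^[k] x‖ ≤ (1 / 2) ^ k * ‖x‖ := norm_smoothstep_iterate_le hx k
      _ ≤ (1 / 2) ^ k := mul_le_of_le_one_right (by positivity) (by linarith)
      _ ≤ η := hk.le
  have hsymm : Function.Semiconj (fun x : ℂ => 1 - x) smoothstep^[k] smoothstep^[k] :=
    Function.Semiconj.iterate_right (fun x => (smoothstep_one_sub x).symm) k
  exact ⟨smoothstep^[k], differentiable_smoothstep.iterate k, hzero,
    fun x hx => (congrArg norm (hsymm x)).trans_le (hzero (1 - x) hx)⟩

theorem exists_differentiableOn_approx_of_separated {E V : Type*} [NormedAddCommGroup E]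
    [NormedSpace ℂ E] [NormedAddCommGroup V] [NormedSpace ℂ V] {U K L : Set E}
    (hKU : K ⊆ U) (hK : IsCompact K) (hLU : L ⊆ U) (hL : IsCompact L)
    {p : E → ℂ} (hp : DifferentiableOn ℂ p U)
    (hpK : ∀ z ∈ K, ‖1 - p z‖ ≤ 1 / 8) (hpL : ∀ z ∈ L, ‖p z‖ ≤ 1 / 8)
    {g h : E → V} (hg : DifferentiableOn ℂ g U) (hh : DifferentiableOn ℂ h U)
    {ε : ℝ} (hε : 0 < ε) :
    ∃ f : E → V, DifferentiableOn ℂ f U ∧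
      (∀ z ∈ K, ‖f z - g z‖ ≤ ε) ∧ ∀ z ∈ L, ‖f z - h z‖ ≤ ε := by
  obtain ⟨C, hC, hbound⟩ := ((hK.union hL).image_of_continuousOn
    ((hg.sub hh).continuousOn.mono (union_subset hKU hLU))).isBounded.exists_pos_norm_le
  rw [forall_mem_image] at hbound
  obtain ⟨s, hs, hzero, hone⟩ := exists_differentiable_near_zero_near_one (div_pos hε hC)
  have hsmall : ∀ {a : ℂ} {z : E}, ‖a‖ ≤ ε / C → z ∈ K ∪ L → ‖a • (g z - h z)‖ ≤ ε :=
    fun {a z} ha hz =>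
    calc ‖a • (g z - h z)‖ = ‖a‖ * ‖g z - h z‖ := norm_smul _ _
      _ ≤ ε / C * C := mul_le_mul ha (hbound hz) (norm_nonneg _) (by positivity)
      _ = ε := div_mul_cancel₀ ε hC.ne'
  refine ⟨fun z => h z + s (p z) • (g z - h z),
    hh.add ((hs.comp_differentiableOn hp).smul (hg.sub hh)), fun z hz => ?_, fun z hz => ?_⟩
  · have hdiff : h z + s (p z) • (g z - h z) - g z = -((1 - s (p z)) • (g z - h z)) := by module
    rw [hdiff, norm_neg]
    exact hsmall (hone _ (hpK z hz)) (.inl hz)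
  · rw [add_sub_cancel_left]
    exact hsmall (hzero _ (hpL z hz)) (.inr hz)

theorem UniversalFor.birkhoffCriterion {G Ω : Set ℂ} {φ : ℕ → ℂ → ℂ} {f : ℂ → ℂ}
    (huniv : UniversalFor G φ f) (hf : DifferentiableOn ℂ f Ω)
    (hφc : ∀ n, ContinuousOn (φ n) G) (hφm : ∀ n, MapsTo (φ n) G Ω) :
    BirkhoffCriterion G Ω φ := by
  intro ε hε K hKG hK L hLΩ hL g hg h hh
  obtain ⟨C, hC, hbound⟩ := ((hL.image_of_continuousOn (hf.continuousOn.mono hLΩ)).union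
    (hK.image_of_continuousOn (hg.continuousOn.mono hKG))).isBounded.exists_pos_norm_le
  simp only [mem_union, or_imp, forall_and, forall_mem_image] at hbound
  obtain ⟨hfL, hgK⟩ := hbound
  obtain ⟨M, hM⟩ : ∃ M : ℝ, M = 8 * (C + ε) := ⟨_, rfl⟩
  have hMpos : 0 < M := by rw [hM]; positivity
  have hMne : (M : ℂ) ≠ 0 := Complex.ofReal_ne_zero.2 hMpos.ne'
  have hnorm_div : ∀ {w : ℂ}, ‖w‖ ≤ C + ε → ‖w / M‖ ≤ 1 / 8 := fun {w} hw => by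
    rw [norm_div, Complex.norm_of_nonneg hMpos.le, div_le_iff₀ hMpos]
    linarith
  obtain ⟨n, hn⟩ := huniv (fun z => g z + M) (hg.add_const _) K hKG hK (ε / 2) (half_pos hε)
  have hnear_one : ∀ z ∈ K, ‖1 - f (φ n z) / M‖ ≤ 1 / 8 := fun z hz => by
    rw [← div_self hMne, ← sub_div, norm_div, norm_sub_rev, ← norm_div]
    refine hnorm_div ?_
    calc ‖f (φ n z) - M‖ = ‖(f (φ n z) - (g z + M)) + g z‖ := by ring_nf
      _ ≤ ε / 2 + C := norm_add_le_of_le (hn z hz).le (hgK hz)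
      _ ≤ C + ε := by linarith
  obtain ⟨F, hF, hFK, hFL⟩ := exists_differentiableOn_approx_of_separated
    ((hφm n).mono_left hKG).image_subset (hK.image_of_continuousOn ((hφc n).mono hKG)) hLΩ hL
    (hf.div_const (M : ℂ)) (forall_mem_image.2 hnear_one)
    (fun z hz => hnorm_div ((hfL hz).trans (by linarith))) (hf.sub_const (M : ℂ)) hh (half_pos hε)
  refine ⟨F, hF, n, fun z hz => ?_, fun z hz => (hFL z hz).trans (half_le_self hε.le)⟩
  calc ‖F (φ n z) - g z‖
      = ‖(F (φ n z) - (f (φ n z) - M)) + (f (φ n z) - (g z + M))‖ := by ring_nf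
    _ ≤ ε / 2 + ε / 2 := norm_add_le_of_le (hFK _ (mem_image_of_mem _ hz)) (hn z hz).le
    _ = ε := add_halves ε

theorem universal_iff_birkhoff_criterion_general {G Ω : Set ℂ} (hG : IsOpen G) (hΩ : IsOpen Ω)
    {φ : ℕ → ℂ → ℂ} (hφd : ∀ n, DifferentiableOn ℂ (φ n) G) (hφm : ∀ n, MapsTo (φ n) G Ω) :
    (∃ f : ℂ → ℂ, DifferentiableOn ℂ f Ω ∧ UniversalFor G φ f) ↔ BirkhoffCriterion G Ω φ :=
  ⟨fun ⟨_, hf, huniv⟩ => huniv.birkhoffCriterion hf (fun n => (hφd n).continuousOn) hφm,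
    fun hcrit => hcrit.exists_universalFor hG hΩ hφd hφm⟩

/-- Proposition `Birk`, Birkhoff-type criterion. -/
theorem universal_iff_birkhoff_criterion
    (G Ω : Set ℂ) (hG : IsOpen G) (hGconn : IsConnected G)
    (hΩ : IsOpen Ω) (hΩconn : IsConnected Ω)
    (φ : ℕ → ℂ → ℂ) (hφd : ∀ n, DifferentiableOn ℂ (φ n) G)
    (hφm : ∀ n, Set.MapsTo (φ n) G Ω) :
    (∃ f : ℂ → ℂ, DifferentiableOn ℂ f Ω ∧ UniversalFor G φ f) ↔
      ∀ ε : ℝ, 0 < ε → ∀ K : Set ℂ, K ⊆ G → IsCompact K →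
        ∀ L : Set ℂ, L ⊆ Ω → IsCompact L →
          ∀ g : ℂ → ℂ, DifferentiableOn ℂ g G →
            ∀ h : ℂ → ℂ, DifferentiableOn ℂ h Ω →
              ∃ f : ℂ → ℂ, DifferentiableOn ℂ f Ω ∧ ∃ n : ℕ,
                (∀ z ∈ K, ‖f (φ n z) - g z‖ ≤ ε) ∧ ∀ z ∈ L, ‖f z - h z‖ ≤ ε :=
  universal_iff_birkhoff_criterion_general hG hΩ hφd hφm
end

section
/- Every domain Ω ⊆ ℂ admits an exhaustion (Lₙ) by compact sets belonging to M(Ω); that is, a sequence (Lₙ) of nonempty compact subsets of Ω with Lₙ contained in the interior of Lₙ₊₁ for all n, such that every compact subset of Ω is contained in some Lₙ, and such that each Lₙ is regular, connected, Ω-connected and Ω-convex. -/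
open Set Metric Bornology Filter

/-!
A compact connected `K ⊆ Ω` is enlarged to a regular one by rescaling so that closed discs of
radius `2` around points of `K` stay in `Ω`, and taking the union `P` of the closed cells of the
unit grid that meet `K`. The grid edges separating a cell of `P` from a cell outside `P` form a
graph with even degrees: going around a vertex, one crosses between the two kinds of cells an even
number of times. A graph with even degrees has no bridge, so each edge lies on a cycle, and cycles
trace Jordan curves; hence `∂P` is a union of Jordan curves. Adding to `P` the holes contained in
`Ω` makes it `Ω`-convex, and the result is again a finite union of grid cells.

`Ω`-convexity passes the absence of holes from `Ω` to `P`. If `Ω` has a hole, then that hole is a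
compact component of `ℂ ∖ Ω` and so can be enclosed by a compact set `B` whose frontier avoids
`ℂ ∖ Ω` (Šura-Bura); every subset of `Ω` containing `∂B` then has a hole inside `B`.
-/

/-! ### Arcs and Jordan curves -/

/-- `S` is an arc with endpoints `a` and `b`: the image of an injective path from `a` to `b`. -/
def IsArcBetween {X : Type*} [TopologicalSpace X] (S : Set X) (a b : X) : Prop :=
  ∃ p : Path a b, Function.Injective p ∧ range p = S

section Arcs

variable {X : Type*} [TopologicalSpace X] {S T : Set X} {a b c : X}

lemma eq_or_eq_endpoints_of_trans_eq_trans {p : Path a b} {q : Path b c} (hp : Function.Injective p)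
    (hq : Function.Injective q)
    (hpq : ∀ s t, p s = q t → s = 1 ∧ t = 0 ∨ s = 0 ∧ t = 1) {s t : unitInterval}
    (hst : p.trans q s = p.trans q t) : s = t ∨ s = 0 ∧ t = 1 ∨ s = 1 ∧ t = 0 := by
  simp only [Path.trans_apply] at hst
  split_ifs at hst with hs ht ht
  · have := congrArg Subtype.val (hp hst)
    exact .inl (Subtype.ext (by simpa using this))
  · have := hpq _ _ hst
    simp only [Subtype.ext_iff, Icc.coe_zero, Icc.coe_one] at this ⊢
    grind
  · have := hpq _ _ hst.symm
    simp only [Subtype.ext_iff, Icc.coe_zero, Icc.coe_one] at this ⊢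
    grind
  · have := congrArg Subtype.val (hq hst)
    exact .inl (Subtype.ext (by simpa using this))

lemma IsArcBetween.symm (h : IsArcBetween S a b) : IsArcBetween S b a := by
  obtain ⟨p, hp, rfl⟩ := h
  exact ⟨p.symm, hp.comp unitInterval.symm_bijective.injective, p.symm_range⟩

lemma IsArcBetween.union (hS : IsArcBetween S a b) (hT : IsArcBetween T b c)
    (h : S ∩ T ⊆ {b}) : IsArcBetween (S ∪ T) a c := by
  obtain ⟨p, hp, rfl⟩ := hS
  obtain ⟨q, hq, rfl⟩ := hT
  have hpq (s t) (hst : p s = q t) : s = 1 ∧ t = 0 := by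
    have hb : p s = b := h ⟨mem_range_self s, hst ▸ mem_range_self t⟩
    exact ⟨hp (hb.trans p.target.symm), hq ((hst.symm.trans hb).trans q.source.symm)⟩
  refine ⟨p.trans q, fun s t hst ↦ ?_, p.trans_range q⟩
  rcases eq_or_eq_endpoints_of_trans_eq_trans hp hq (fun s t hst ↦ .inl (hpq s t hst)) hst with
    hst' | ⟨rfl, rfl⟩ | ⟨rfl, rfl⟩
  · exact hst'
  · exact (hpq 0 1 (by simpa using hst)).1
  · exact (hpq 0 1 (by simpa using hst.symm)).2

lemma isArcBetween_segment {E : Type*} [AddCommGroup E] [Module ℝ E] [TopologicalSpace E]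
    [ContinuousAdd E] [ContinuousSMul ℝ E] {a b : E} (hab : a ≠ b) :
    IsArcBetween (segment ℝ a b) a b :=
  ⟨Path.segment a b, Path.segment_injective_of_ne hab, Path.range_segment a b⟩

end Arcs

lemma isJordanCurve_range {γ : Circle → ℂ} (hγ : Continuous γ) (hinj : Function.Injective γ) :
    IsJordanCurve (range γ) := by
  let γ' : ℂ → ℂ := Function.extend (↑) γ 0
  have hext (z : Circle) : γ' z = γ z := Subtype.val_injective.extend_apply γ 0 z
  have himage : γ' '' sphere 0 1 = range γ := by
    ext w
    constructor
    · rintro ⟨z, hz, rfl⟩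
      exact ⟨⟨z, hz⟩, (hext _).symm⟩
    · rintro ⟨z, rfl⟩
      exact ⟨z, z.2, hext z⟩
  refine ⟨γ', ?_, fun x hx y hy hxy ↦ ?_, himage.symm⟩
  · exact continuousOn_iff_continuous_domRestrict.2 (hγ.congr fun z ↦ (hext z).symm)
  · exact congrArg Subtype.val
      (hinj (((hext ⟨x, hx⟩).symm.trans hxy).trans (hext ⟨y, hy⟩)))

lemma isJordanCurve_image_Icc {f : ℝ → ℂ} (hf : ContinuousOn f (Icc 0 1)) (h01 : f 0 = f 1)
    (hinj : InjOn f (Ico 0 1)) : IsJordanCurve (f '' Icc 0 1) := by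
  have : Fact ((0 : ℝ) < 1) := ⟨one_pos⟩
  let g : AddCircle (1 : ℝ) → ℂ := AddCircle.liftIco 1 0 f
  have hg {x : ℝ} (hx : x ∈ Ico (0 : ℝ) 1) : g x = f x := AddCircle.liftIco_zero_coe_apply hx
  have hsurj (x : AddCircle (1 : ℝ)) : ∃ t ∈ Ico (0 : ℝ) 1, (t : AddCircle (1 : ℝ)) = x := by
    have := AddCircle.coe_image_Ico_eq (1 : ℝ) 0 ▸ mem_univ x
    simpa using this
  let e := AddCircle.homeomorphCircle (one_ne_zero : (1 : ℝ) ≠ 0)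
  have hginj : Function.Injective g := by
    intro x y hxy
    obtain ⟨s, hs, rfl⟩ := hsurj x
    obtain ⟨t, ht, rfl⟩ := hsurj y
    rw [hg hs, hg ht] at hxy
    rw [hinj hs ht hxy]
  have hrange : range (g ∘ e.symm) = f '' Icc 0 1 := by
    rw [e.symm.surjective.range_comp]
    ext w
    constructor
    · rintro ⟨x, rfl⟩
      obtain ⟨t, ht, rfl⟩ := hsurj x
      exact ⟨t, Ico_subset_Icc_self ht, (hg ht).symm⟩
    · rintro ⟨t, ht, rfl⟩
      rcases ht.2.eq_or_lt with rfl | h1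
      · exact ⟨(0 : ℝ), (hg (by simp)).trans h01⟩
      · exact ⟨t, hg ⟨ht.1, h1⟩⟩
  rw [← hrange]
  exact isJordanCurve_range
    ((AddCircle.liftIco_zero_continuous h01 hf).comp e.symm.continuous)
    (hginj.comp e.symm.injective)

lemma IsArcBetween.isJordanCurve_union {S T : Set ℂ} {a b : ℂ} (hS : IsArcBetween S a b)
    (hT : IsArcBetween T a b) (hST : S ∩ T ⊆ {a, b}) : IsJordanCurve (S ∪ T) := by
  obtain ⟨p, hp, rfl⟩ := hS
  obtain ⟨q, hq, rfl⟩ := hT.symm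
  have hpq (s t) (hst : p s = q t) : s = 1 ∧ t = 0 ∨ s = 0 ∧ t = 1 := by
    rcases hST ⟨mem_range_self s, hst ▸ mem_range_self t⟩ with ha | hb
    · exact .inr ⟨hp (ha.trans p.source.symm), hq ((hst.symm.trans ha).trans q.target.symm)⟩
    · exact .inl ⟨hp (hb.trans p.target.symm), hq ((hst.symm.trans hb).trans q.source.symm)⟩
  have hinj : InjOn (p.trans q).extend (Ico 0 1) := by
    intro s hs t ht hst
    rw [Path.extend_apply _ (Ico_subset_Icc_self hs),
      Path.extend_apply _ (Ico_subset_Icc_self ht)] at hst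
    have := eq_or_eq_endpoints_of_trans_eq_trans hp hq hpq hst
    simp only [Subtype.ext_iff, Icc.coe_zero, Icc.coe_one] at this
    grind
  rw [← p.trans_range q, ← (p.trans q).image_extend_of_subset subset_rfl]
  exact isJordanCurve_image_Icc (p.trans q).continuous_extend.continuousOn (by simp) hinj

/-! ### Even graphs -/

section EvenGraph

variable {V : Type*} {G : SimpleGraph V} [G.LocallyFinite] {v w : V}

lemma degree_induce_eq_card_filter (s : Set V) [DecidablePred (· ∈ s)] (u : s)
    [Fintype ((G.induce s).neighborSet u)] :
    (G.induce s).degree u = ((G.neighborFinset u).filter (· ∈ s)).card := by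
  rw [← SimpleGraph.card_neighborFinset_eq_degree, ← Finset.card_map (.subtype (· ∈ s))]
  congr 1
  ext
  simp

lemma not_isBridge_of_even_degree (hfin : G.support.Finite) (heven : ∀ u, Even (G.degree u))
    (hvw : G.Adj v w) : ¬ G.IsBridge s(v, w) := by
  classical
  intro hbridge
  let C : Set V := {u | (G.deleteEdges {s(v, w)}).Reachable v u}
  have hv : v ∈ C := .refl v
  have hw : w ∉ C := hbridge
  have hsupport : C ⊆ insert v G.support := by
    intro u hu
    rcases eq_or_ne u v with rfl | huv
    · exact mem_insert u _
    · obtain ⟨x, hx⟩ := SimpleGraph.Reachable.nonempty_neighborSet_left huv hu.symm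
      exact .inr ⟨x, G.deleteEdges_le {s(v, w)} hx⟩
  have hCfin : Finite C := ((hfin.insert v).subset hsupport).to_subtype
  have : Fintype C := Fintype.ofFinite C
  have hclosed {u x : V} (hu : u ∈ C) (hux : G.Adj u x) (hne : ¬ (u = v ∧ x = w)) : x ∈ C := by
    refine SimpleGraph.Reachable.trans hu (SimpleGraph.Adj.reachable ?_)
    grind [SimpleGraph.deleteEdges_adj]
  have hdegree (u : C) (hu : u ≠ ⟨v, hv⟩) : Even ((G.induce C).degree u) := by
    rw [degree_induce_eq_card_filter, Finset.filter_true_of_mem fun x hx ↦ ?_]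
    · exact heven u
    · exact hclosed u.2 (by simpa using hx) fun h ↦ hu (Subtype.ext h.1)
  have hdegree_v : (G.induce C).degree ⟨v, hv⟩ + 1 = G.degree v := by
    have hneighbors : (G.neighborFinset v).filter (· ∈ C) = (G.neighborFinset v).erase w := by
      ext x
      grind [SimpleGraph.mem_neighborFinset]
    rw [degree_induce_eq_card_filter, hneighbors, Finset.card_erase_add_one (by simpa),
      SimpleGraph.card_neighborFinset_eq_degree]
  have hodd : Odd ((G.induce C).degree ⟨v, hv⟩) := by
    have := hdegree_v ▸ heven v
    simpa [parity_simps] using this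
  obtain ⟨u, hu, hu'⟩ := (G.induce C).exists_ne_odd_degree_of_exists_odd_degree _ hodd
  exact (Nat.not_odd_iff_even.2 (hdegree u hu)) hu'

lemma exists_isCycle_of_even_degree (hfin : G.support.Finite) (heven : ∀ u, Even (G.degree u))
    (hvw : G.Adj v w) : ∃ (u : V) (c : G.Walk u u), c.IsCycle ∧ s(v, w) ∈ c.edges :=
  SimpleGraph.adj_and_reachable_delete_edges_iff_exists_cycle.1
    ⟨hvw, not_not.1 (not_isBridge_of_even_degree hfin heven hvw)⟩

end EvenGraph

/-! ### Straight-line embeddings of graphs -/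

section StraightLine

variable {V E : Type*} [AddCommGroup E] [Module ℝ E]

/-- The segment representing an edge of a graph whose vertices are placed by `f`. -/
def edgeSegment (f : V → E) : Sym2 V → Set E :=
  Sym2.lift ⟨fun v w ↦ segment ℝ (f v) (f w), fun v w ↦ segment_symm ℝ (f v) (f w)⟩

/-- The union of the edges of `G`, drawn as segments between the vertices placed by `f`. -/
def realization (G : SimpleGraph V) (f : V → E) : Set E :=
  ⋃ e ∈ G.edgeSet, edgeSegment f e

/-- `f` is a straight-line embedding of `G`: distinct vertices are placed at distinct points, and
the segments of distinct edges meet only at common endpoints. -/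
structure IsStraightLineEmbedding (G : SimpleGraph V) (f : V → E) : Prop where
  injective : Function.Injective f
  inter_subset : ∀ e ∈ G.edgeSet, ∀ e' ∈ G.edgeSet, e ≠ e' →
    edgeSegment f e ∩ edgeSegment f e' ⊆ f '' {v | v ∈ e ∧ v ∈ e'}

variable {G : SimpleGraph V} {f : V → E}

lemma edgeSegment_mk (v w : V) : edgeSegment f s(v, w) = segment ℝ (f v) (f w) := rfl

/-- The union of the segments of the edges traversed by a walk. -/
def walkTrace (f : V → E) {u v : V} (p : G.Walk u v) : Set E :=
  ⋃ e ∈ p.edges, edgeSegment f e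

lemma walkTrace_cons {u v w : V} (h : G.Adj u v) (p : G.Walk v w) :
    walkTrace f (p.cons h) = segment ℝ (f u) (f v) ∪ walkTrace f p := by
  simp [walkTrace, edgeSegment_mk, iUnion_or, iUnion_union_distrib]

lemma walkTrace_subset_realization {u v : V} (p : G.Walk u v) :
    walkTrace f p ⊆ realization G f :=
  biUnion_subset_biUnion_left fun _ he ↦ p.edges_subset_edgeSet he

lemma IsStraightLineEmbedding.edgeSegment_inter_walkTrace_subset
    (hf : IsStraightLineEmbedding G f) {u v : V} {e : Sym2 V} (he : e ∈ G.edgeSet)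
    (p : G.Walk u v) (hep : e ∉ p.edges) :
    edgeSegment f e ∩ walkTrace f p ⊆ f '' {x | x ∈ e ∧ x ∈ p.support} := by
  rintro z ⟨hz, hz'⟩
  simp only [walkTrace, mem_iUnion] at hz'
  obtain ⟨e', he', hz'⟩ := hz'
  obtain ⟨x, hx, rfl⟩ := hf.inter_subset e he e' (p.edges_subset_edgeSet he')
    (fun h ↦ hep (h ▸ he')) ⟨hz, hz'⟩
  exact ⟨x, ⟨hx.1, p.mem_support_of_mem_edges he' hx.2⟩, rfl⟩

variable [TopologicalSpace E] [ContinuousAdd E] [ContinuousSMul ℝ E]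

lemma IsStraightLineEmbedding.isArcBetween_walkTrace (hf : IsStraightLineEmbedding G f)
    {u v : V} (p : G.Walk u v) (hp : p.IsPath) (hne : u ≠ v) :
    IsArcBetween (walkTrace f p) (f u) (f v) := by
  induction p with
  | nil => exact absurd rfl hne
  | @cons u w v h q ih =>
    rw [SimpleGraph.Walk.cons_isPath_iff] at hp
    have hsegment : IsArcBetween (segment ℝ (f u) (f w)) (f u) (f w) :=
      isArcBetween_segment (hf.injective.ne h.ne)
    rw [walkTrace_cons]
    rcases eq_or_ne w v with rfl | hwv
    · have : q = .nil := by simpa using hp.1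
      simpa [this, walkTrace] using hsegment
    · refine hsegment.union (ih hp.1 hwv) ?_
      have hedge : s(u, w) ∉ q.edges := fun he ↦ hp.2 (q.fst_mem_support_of_mem_edges he)
      refine (hf.edgeSegment_inter_walkTrace_subset h q hedge).trans ?_
      rintro _ ⟨x, ⟨hx, hxq⟩, rfl⟩
      rcases Sym2.mem_iff.1 hx with rfl | rfl
      · exact absurd hxq hp.2
      · rfl

end StraightLine

section Plane

variable {V : Type*} {G : SimpleGraph V} {f : V → ℂ}

lemma IsStraightLineEmbedding.isJordanCurve_walkTrace (hf : IsStraightLineEmbedding G f)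
    {u : V} (c : G.Walk u u) (hc : c.IsCycle) : IsJordanCurve (walkTrace f c) := by
  cases c with
  | nil => exact absurd hc (by simp)
  | @cons _ v _ h p =>
    rw [SimpleGraph.Walk.cons_isCycle_iff] at hc
    rw [walkTrace_cons]
    refine (isArcBetween_segment (hf.injective.ne h.ne)).isJordanCurve_union
      (hf.isArcBetween_walkTrace p hc.1 h.ne').symm ?_
    refine (hf.edgeSegment_inter_walkTrace_subset h p hc.2).trans ?_
    rintro _ ⟨x, ⟨hx, -⟩, rfl⟩
    rcases Sym2.mem_iff.1 hx with rfl | rfl <;> simp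

lemma IsStraightLineEmbedding.realization_eq_sUnion_isJordanCurve [G.LocallyFinite]
    (hf : IsStraightLineEmbedding G f) (hfin : G.support.Finite)
    (heven : ∀ u, Even (G.degree u)) :
    ∃ 𝒞 : Set (Set ℂ), (∀ C ∈ 𝒞, IsJordanCurve C) ∧ realization G f = ⋃₀ 𝒞 := by
  refine ⟨{C | ∃ (u : V) (c : G.Walk u u), c.IsCycle ∧ walkTrace f c = C}, ?_, ?_⟩
  · rintro _ ⟨u, c, hc, rfl⟩
    exact hf.isJordanCurve_walkTrace c hc
  · refine Subset.antisymm (iUnion₂_subset fun e he ↦ ?_) (sUnion_subset ?_)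
    · induction e with
      | _ v w =>
        obtain ⟨u, c, hc, hvw⟩ := exists_isCycle_of_even_degree hfin heven he
        exact (subset_biUnion_of_mem (u := edgeSegment f) hvw).trans
          (subset_sUnion_of_mem ⟨u, c, hc, rfl⟩)
    · rintro _ ⟨u, c, -, rfl⟩
      exact walkTrace_subset_realization c

end Plane

/-! ### The boundary graph of a set of grid cells -/

section Grid

open SimpleGraph

variable {A : Set (ℤ × ℤ)}

/-- The four unit vectors of the square grid, in counterclockwise order. -/
def gridDir : Fin 4 → ℤ × ℤ := ![(1, 0), (0, 1), (-1, 0), (0, -1)]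

/-- The four unit cells around the grid vertex `v`, a cell being named by its lower left corner.
The numbering is such that `v + gridDir i` lies between the cells `quadrant v (i - 1)` and
`quadrant v i`. -/
def quadrant (v : ℤ × ℤ) (i : Fin 4) : ℤ × ℤ := v + ![(0, 0), (-1, 0), (-1, -1), (0, -1)] i

lemma gridDir_injective : Function.Injective gridDir := by decide

lemma gridDir_ne_zero (i : Fin 4) : gridDir i ≠ 0 := by decide +revert

lemma gridDir_add_two (i : Fin 4) : gridDir (i + 2) = -gridDir i := by decide +revert

lemma quadrant_add_gridDir_add_one (v : ℤ × ℤ) (i : Fin 4) :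
    quadrant (v + gridDir i) (i + 1) = quadrant v i := by
  simp only [quadrant, add_assoc, add_right_inj]
  decide +revert

lemma quadrant_add_gridDir_add_two (v : ℤ × ℤ) (i : Fin 4) :
    quadrant (v + gridDir i) (i + 2) = quadrant v (i - 1) := by
  simp only [quadrant, add_assoc, add_right_inj]
  decide +revert

/-- The graph of the grid edges separating a cell of `A` from a cell outside `A`. -/
def boundaryGraph (A : Set (ℤ × ℤ)) : SimpleGraph (ℤ × ℤ) where
  Adj v w := ∃ i, w = v + gridDir i ∧ ¬(quadrant v i ∈ A ↔ quadrant v (i - 1) ∈ A)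
  symm := ⟨by
    rintro v _ ⟨i, rfl, h⟩
    refine ⟨i + 2, by simp [gridDir_add_two], fun h' ↦ h ?_⟩
    rw [quadrant_add_gridDir_add_two, show i + 2 - 1 = i + 1 from add_sub_assoc i 2 1,
      quadrant_add_gridDir_add_one] at h'
    exact h'.symm⟩
  loopless := ⟨by
    rintro v ⟨i, h, -⟩
    exact gridDir_ne_zero i (left_eq_add.mp h)⟩

lemma boundaryGraph_neighborSet (v : ℤ × ℤ) :
    (boundaryGraph A).neighborSet v =
      (v + gridDir ·) '' {i | ¬(quadrant v i ∈ A ↔ quadrant v (i - 1) ∈ A)} := by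
  ext w
  exact ⟨fun ⟨i, hw, h⟩ ↦ ⟨i, h, hw.symm⟩, fun ⟨i, h, hw⟩ ↦ ⟨i, hw.symm, h⟩⟩

noncomputable instance : (boundaryGraph A).LocallyFinite := fun v ↦
  ((boundaryGraph_neighborSet (A := A) v) ▸ toFinite _ :
    ((boundaryGraph A).neighborSet v).Finite).fintype

/-- Going once around `v`, one enters `A` as often as one leaves it. -/
lemma even_degree_boundaryGraph (v : ℤ × ℤ) : Even ((boundaryGraph A).degree v) := by
  classical
  have parity : ∀ f : Fin 4 → Bool, Even (Finset.univ.filter fun i ↦ f i ≠ f (i - 1)).card := by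
    decide
  have hdeg : (boundaryGraph A).degree v =
      (Finset.univ.filter fun i ↦ ¬(quadrant v i ∈ A ↔ quadrant v (i - 1) ∈ A)).card := by
    rw [← card_neighborSet_eq_degree, ← Nat.card_eq_fintype_card, boundaryGraph_neighborSet,
      Nat.card_image_of_injective (f := (v + gridDir ·))
        ((add_right_injective v).comp gridDir_injective),
      Nat.card_coe_set_eq, Set.ncard_eq_toFinset_card', Set.toFinset_ofPred]
  simpa [hdeg] using parity fun i ↦ decide (quadrant v i ∈ A)

lemma finite_support_boundaryGraph (hA : A.Finite) : (boundaryGraph A).support.Finite := by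
  have hfin : (⋃ i, (quadrant · i) ⁻¹' A).Finite :=
    finite_iUnion fun i ↦ hA.preimage (add_left_injective _).injOn
  refine hfin.subset ?_
  rintro v ⟨_, i, rfl, h⟩
  by_cases hi : quadrant v i ∈ A
  · exact mem_iUnion_of_mem i hi
  · exact mem_iUnion_of_mem (i - 1) (by tauto)

end Grid

/-! ### Grid cells -/

section Cells

variable {A : Set (ℤ × ℤ)} {p q v : ℤ × ℤ} {z : ℂ}

/-- The grid vertex `v` as a point of the plane. -/
def gridPoint (v : ℤ × ℤ) : ℂ := ⟨v.1, v.2⟩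

/-- The closed unit square with lower left corner `q`. -/
def gridCell (q : ℤ × ℤ) : Set ℂ := Icc (q.1 : ℝ) (q.1 + 1) ×ℂ Icc (q.2 : ℝ) (q.2 + 1)

/-- The open unit square with lower left corner `q`. -/
def openGridCell (q : ℤ × ℤ) : Set ℂ := Ioo (q.1 : ℝ) (q.1 + 1) ×ℂ Ioo (q.2 : ℝ) (q.2 + 1)

lemma gridPoint_injective : Function.Injective gridPoint := by
  rintro ⟨a, b⟩ ⟨c, d⟩ h
  simpa [gridPoint, Complex.ext_iff] using h

lemma mem_gridCell : z ∈ gridCell q ↔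
    ((q.1 : ℝ) ≤ z.re ∧ z.re ≤ q.1 + 1) ∧ ((q.2 : ℝ) ≤ z.im ∧ z.im ≤ q.2 + 1) := Iff.rfl

lemma mem_openGridCell : z ∈ openGridCell q ↔
    ((q.1 : ℝ) < z.re ∧ z.re < q.1 + 1) ∧ ((q.2 : ℝ) < z.im ∧ z.im < q.2 + 1) := Iff.rfl

lemma closure_openGridCell (q : ℤ × ℤ) : closure (openGridCell q) = gridCell q := by
  rw [openGridCell, gridCell, Complex.closure_reProdIm, closure_Ioo (by simp),
    closure_Ioo (by simp)]

lemma isClosed_gridCell (q : ℤ × ℤ) : IsClosed (gridCell q) :=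
  closure_openGridCell q ▸ isClosed_closure

lemma isPreconnected_openGridCell (q : ℤ × ℤ) : IsPreconnected (openGridCell q) :=
  (((convex_Ioo (q.1 : ℝ) (q.1 + 1)).linear_preimage Complex.reLm).inter
    ((convex_Ioo (q.2 : ℝ) (q.2 + 1)).linear_preimage Complex.imLm)).isPreconnected

lemma isPreconnected_gridCell (q : ℤ × ℤ) : IsPreconnected (gridCell q) :=
  closure_openGridCell q ▸ (isPreconnected_openGridCell q).closure

lemma exists_mem_gridCell (z : ℂ) : ∃ q, z ∈ gridCell q :=
  ⟨(⌊z.re⌋, ⌊z.im⌋), ⟨Int.floor_le _, (Int.lt_floor_add_one _).le⟩,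
    ⟨Int.floor_le _, (Int.lt_floor_add_one _).le⟩⟩

lemma eq_of_mem_openGridCell_of_mem_gridCell (hp : z ∈ openGridCell p) (hq : z ∈ gridCell q) :
    p = q := by
  obtain ⟨⟨a, b⟩, c, d⟩ := mem_openGridCell.1 hp
  obtain ⟨⟨a', b'⟩, c', d'⟩ := mem_gridCell.1 hq
  have h₁ : p.1 < q.1 + 1 := by exact_mod_cast a.trans_le b'
  have h₂ : q.1 < p.1 + 1 := by exact_mod_cast a'.trans_lt b
  have h₃ : p.2 < q.2 + 1 := by exact_mod_cast c.trans_le d'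
  have h₄ : q.2 < p.2 + 1 := by exact_mod_cast c'.trans_lt d
  ext <;> omega

lemma dist_le_of_mem_gridCell {w : ℂ} (hz : z ∈ gridCell q) (hw : w ∈ gridCell q) :
    dist z w ≤ 2 := by
  obtain ⟨⟨a, b⟩, c, d⟩ := mem_gridCell.1 hz
  obtain ⟨⟨a', b'⟩, c', d'⟩ := mem_gridCell.1 hw
  have hre : |(z - w).re| ≤ 1 := by rw [Complex.sub_re, abs_le]; constructor <;> linarith
  have him : |(z - w).im| ≤ 1 := by rw [Complex.sub_im, abs_le]; constructor <;> linarith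
  calc dist z w = ‖z - w‖ := dist_eq_norm z w
    _ ≤ |(z - w).re| + |(z - w).im| := Complex.norm_le_abs_re_add_abs_im _
    _ ≤ 2 := by linarith

lemma gridPoint_mem_gridCell (q : ℤ × ℤ) : gridPoint q ∈ gridCell q := by
  simp [gridPoint, mem_gridCell]

lemma finite_gridCell_inter {K : Set ℂ} (hK : IsBounded K) :
    {q | (gridCell q ∩ K).Nonempty}.Finite := by
  obtain ⟨R, hR⟩ := hK.exists_norm_le
  refine ((isCompact_closedBall (0 : ℤ × ℤ) (R + 2)).finite_of_discrete).subset ?_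
  rintro q ⟨z, hz, hzK⟩
  have hq : ‖gridPoint q‖ ≤ R + 2 :=
    (norm_le_norm_add_norm_sub' _ z).trans (add_le_add (hR z hzK) <| by
      simpa [dist_eq_norm] using dist_le_of_mem_gridCell (gridPoint_mem_gridCell q) hz)
  rw [mem_closedBall_zero_iff, Prod.norm_def]
  exact max_le ((Complex.abs_re_le_norm (gridPoint q)).trans hq)
    ((Complex.abs_im_le_norm (gridPoint q)).trans hq)

lemma locallyFinite_gridCell : LocallyFinite gridCell := fun z ↦
  ⟨ball z 1, ball_mem_nhds z one_pos, finite_gridCell_inter isBounded_ball⟩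

lemma segment_gridPoint (v : ℤ × ℤ) (i : Fin 4) :
    segment ℝ (gridPoint v) (gridPoint (v + gridDir i)) =
      gridCell (quadrant v i) ∩ gridCell (quadrant v (i - 1)) := by
  rw [segment_eq_image']
  ext z
  constructor
  · rintro ⟨t, ⟨ht0, ht1⟩, rfl⟩
    fin_cases i <;> simp [gridPoint, gridDir, quadrant, mem_gridCell] <;> grind
  · intro hz
    refine ⟨(z.re - v.1) * (gridDir i).1 + (z.im - v.2) * (gridDir i).2, ?_, ?_⟩
    · fin_cases i <;> simp [gridDir, quadrant, mem_gridCell] at hz ⊢ <;> grind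
    · fin_cases i <;>
        simp [gridPoint, gridDir, quadrant, mem_gridCell, Complex.ext_iff] at hz ⊢ <;> grind

lemma mk_eq_of_mem_openSegment_gridPoint {i : Fin 4}
    (hz : z ∈ openSegment ℝ (gridPoint v) (gridPoint (v + gridDir i))) :
    s(v, v + gridDir i) = s((⌊z.re⌋, ⌊z.im⌋), (⌈z.re⌉, ⌈z.im⌉)) := by
  rw [openSegment_eq_image'] at hz
  obtain ⟨t, ⟨ht0, ht1⟩, rfl⟩ := hz
  have hfloor : ⌊t⌋ = 0 := Int.floor_eq_zero_iff.mpr ⟨ht0.le, ht1⟩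
  have hceil : ⌈t⌉ = 1 := Int.ceil_eq_iff.mpr (by simp [ht0, ht1.le])
  fin_cases i <;>
    simp [gridPoint, gridDir, Prod.ext_iff, Int.floor_neg, Int.ceil_neg, hfloor, hceil]

lemma exists_gridPoint_eq_or_eq_mk_of_mem_edgeSegment {e : Sym2 (ℤ × ℤ)}
    (he : e ∈ (boundaryGraph A).edgeSet) (hz : z ∈ edgeSegment gridPoint e) :
    (∃ v ∈ e, gridPoint v = z) ∨ e = s((⌊z.re⌋, ⌊z.im⌋), (⌈z.re⌉, ⌈z.im⌉)) := by
  induction e with | _ v w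
  obtain ⟨i, rfl, -⟩ : (boundaryGraph A).Adj v w := he
  rw [edgeSegment_mk, ← insert_endpoints_openSegment] at hz
  rcases hz with rfl | rfl | hz
  · exact Or.inl ⟨v, Sym2.mem_mk_left _ _, rfl⟩
  · exact Or.inl ⟨v + gridDir i, Sym2.mem_mk_right _ _, rfl⟩
  · exact Or.inr (mk_eq_of_mem_openSegment_gridPoint hz)

lemma isStraightLineEmbedding_gridPoint :
    IsStraightLineEmbedding (boundaryGraph A) gridPoint where
  injective := gridPoint_injective
  inter_subset e he e' he' hne := by
    have not_loop : ∀ e ∈ (boundaryGraph A).edgeSet, ∀ v : ℤ × ℤ,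
        e ≠ s((⌊(gridPoint v).re⌋, ⌊(gridPoint v).im⌋),
          (⌈(gridPoint v).re⌉, ⌈(gridPoint v).im⌉)) := by
      rintro _ h v rfl
      simp [gridPoint] at h
    rintro z ⟨hz, hz'⟩
    rcases exists_gridPoint_eq_or_eq_mk_of_mem_edgeSegment he hz with ⟨v, hv, rfl⟩ | heq
    · rcases exists_gridPoint_eq_or_eq_mk_of_mem_edgeSegment he' hz' with ⟨v', hv', hvv'⟩ | heq'
      · exact ⟨v, ⟨hv, gridPoint_injective hvv' ▸ hv'⟩, rfl⟩
      · exact absurd heq' (not_loop e' he' v)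
    · rcases exists_gridPoint_eq_or_eq_mk_of_mem_edgeSegment he' hz' with ⟨v', -, rfl⟩ | heq'
      · exact absurd heq (not_loop e he v')
      · exact absurd (heq.trans heq'.symm) hne

/-- The union of the closed unit cells with labels in `A`. -/
def gridUnion (A : Set (ℤ × ℤ)) : Set ℂ := ⋃ q ∈ A, gridCell q

lemma mem_gridUnion : z ∈ gridUnion A ↔ ∃ q ∈ A, z ∈ gridCell q := by
  simp [gridUnion]

lemma gridCell_subset_gridUnion (hq : q ∈ A) : gridCell q ⊆ gridUnion A :=
  subset_biUnion_of_mem hq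

lemma isClosed_gridUnion (A : Set (ℤ × ℤ)) : IsClosed (gridUnion A) := by
  rw [gridUnion, biUnion_eq_iUnion]
  exact (locallyFinite_gridCell.comp_injective Subtype.val_injective).isClosed_iUnion
    fun q ↦ isClosed_gridCell q

lemma isCompact_gridUnion (hA : A.Finite) : IsCompact (gridUnion A) :=
  hA.isCompact_biUnion fun _ _ ↦ isCompact_Icc.reProdIm isCompact_Icc

lemma compl_gridUnion_subset : (gridUnion A)ᶜ ⊆ gridUnion Aᶜ := by
  intro z hz
  obtain ⟨q, hq⟩ := exists_mem_gridCell z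
  exact mem_gridUnion.2 ⟨q, fun hA ↦ hz (gridCell_subset_gridUnion hA hq), hq⟩

lemma openGridCell_subset_compl_gridUnion (hq : q ∉ A) : openGridCell q ⊆ (gridUnion A)ᶜ := by
  intro z hz hzA
  obtain ⟨p, hp, hzp⟩ := mem_gridUnion.1 hzA
  exact hq (eq_of_mem_openGridCell_of_mem_gridCell hz hzp ▸ hp)

lemma frontier_gridUnion (A : Set (ℤ × ℤ)) :
    frontier (gridUnion A) = gridUnion A ∩ gridUnion Aᶜ := by
  rw [frontier_eq_closure_inter_closure, (isClosed_gridUnion A).closure_eq]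
  congr 1
  refine (closure_minimal compl_gridUnion_subset (isClosed_gridUnion _)).antisymm ?_
  refine iUnion₂_subset fun q hq ↦ ?_
  rw [← closure_openGridCell]
  exact closure_mono (openGridCell_subset_compl_gridUnion hq)

lemma realization_boundaryGraph_subset :
    realization (boundaryGraph A) gridPoint ⊆ gridUnion A ∩ gridUnion Aᶜ := by
  refine iUnion₂_subset fun e he ↦ ?_
  induction e with | _ v w
  obtain ⟨i, rfl, hi⟩ : (boundaryGraph A).Adj v w := he
  rw [edgeSegment_mk, segment_gridPoint]
  rintro z ⟨hz, hz'⟩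
  by_cases h : quadrant v i ∈ A
  · exact ⟨gridCell_subset_gridUnion h hz, gridCell_subset_gridUnion (by tauto) hz'⟩
  · exact ⟨gridCell_subset_gridUnion (by tauto) hz', gridCell_subset_gridUnion h hz⟩

lemma exists_quadrant_eq (q : ℤ × ℤ) (j : Fin 4) :
    ∃ v i, quadrant v (i - 1) = q ∧ quadrant v i = q + gridDir j := by
  refine ⟨q - quadrant 0 (j - 1 - 1), j - 1, by simp [quadrant], ?_⟩
  rw [quadrant, sub_add_eq_add_sub, add_sub_assoc, add_right_inj]
  decide +revert

lemma mem_realization_boundaryGraph {j : Fin 4} (hz : z ∈ gridCell q)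
    (hz' : z ∈ gridCell (q + gridDir j)) (h : ¬(q + gridDir j ∈ A ↔ q ∈ A)) :
    z ∈ realization (boundaryGraph A) gridPoint := by
  obtain ⟨v, i, hq, hq'⟩ := exists_quadrant_eq q j
  rw [← hq', ← hq] at h
  refine mem_biUnion (x := s(v, v + gridDir i)) ⟨i, rfl, h⟩ ?_
  rw [edgeSegment_mk, segment_gridPoint, hq, hq']
  exact ⟨hz', hz⟩

lemma eq_or_eq_add_one_of_mem_Icc {m n : ℤ} {t : ℝ} (hm : t ∈ Icc (m : ℝ) (m + 1))
    (hn : t ∈ Icc (n : ℝ) (n + 1)) : m = n ∨ m = n + 1 ∨ n = m + 1 := by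
  have hmn : m ≤ n + 1 := by exact_mod_cast hm.1.trans hn.2
  have hnm : n ≤ m + 1 := by exact_mod_cast hn.1.trans hm.2
  omega

lemma exists_eq_add_gridDir (hp : z ∈ gridCell p) (hq : z ∈ gridCell q)
    (hpq : p.1 = q.1 ∨ p.2 = q.2) (hne : p ≠ q) : ∃ j, q = p + gridDir j := by
  have h₁ := eq_or_eq_add_one_of_mem_Icc hp.1 hq.1
  have h₂ := eq_or_eq_add_one_of_mem_Icc hp.2 hq.2
  rw [ne_eq, Prod.ext_iff] at hne
  simp only [gridDir, Int.reduceNeg, Prod.ext_iff, Prod.fst_add, Prod.snd_add, Fin.exists_fin_succ,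
    Fin.isValue, Matrix.cons_val_zero, add_zero, Matrix.cons_val_succ, Matrix.cons_val_fin_one,
    exists_const]
  omega

/-- If `z` lies in the cell `(m, n)` of `A` and the cell `(m', n')` outside `A`, then it also lies
in the cell `(m', n)`, so that one may compare cells of the same row or of the same column. -/
lemma subset_realization_boundaryGraph :
    gridUnion A ∩ gridUnion Aᶜ ⊆ realization (boundaryGraph A) gridPoint := by
  rintro z ⟨hz, hz'⟩
  have of_aligned : ∀ p ∈ A, ∀ q ∉ A, z ∈ gridCell p → z ∈ gridCell q → p.1 = q.1 ∨ p.2 = q.2 →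
      z ∈ realization (boundaryGraph A) gridPoint := by
    intro p hpA q hqA hp hq hpq
    obtain ⟨j, rfl⟩ := exists_eq_add_gridDir hp hq hpq (by rintro rfl; exact hqA hpA)
    exact mem_realization_boundaryGraph hp hq (by tauto)
  obtain ⟨⟨m, n⟩, hA, hmn⟩ := mem_gridUnion.1 hz
  obtain ⟨⟨m', n'⟩, hA', hmn'⟩ := mem_gridUnion.1 hz'
  have hmix : z ∈ gridCell (m', n) := ⟨hmn'.1, hmn.2⟩
  by_cases h : (m', n) ∈ A
  · exact of_aligned _ h _ hA' hmix hmn' (Or.inl rfl)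
  · exact of_aligned _ hA _ h hmn hmix (Or.inr rfl)

lemma regularCompact_gridUnion (hA : A.Finite) : RegularCompact (gridUnion A) := by
  obtain ⟨𝒞, h𝒞, heq⟩ := isStraightLineEmbedding_gridPoint.realization_eq_sUnion_isJordanCurve
    (finite_support_boundaryGraph hA) (even_degree_boundaryGraph (A := A))
  refine ⟨𝒞, h𝒞, ?_⟩
  rw [← heq, frontier_gridUnion]
  exact subset_realization_boundaryGraph.antisymm realization_boundaryGraph_subset

end Cells

/-! ### Filling holes -/

lemma frontier_connectedComponentIn_subset_compl {X : Type*} [TopologicalSpace X]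
    [LocallyConnectedSpace X] {U : Set X} (hU : IsOpen U) (x : X) :
    frontier (connectedComponentIn U x) ⊆ Uᶜ := by
  intro w hw hwU
  obtain ⟨y, hyw, hyx⟩ := mem_closure_iff.1 (frontier_subset_closure hw) _
    hU.connectedComponentIn (mem_connectedComponentIn hwU)
  rw [hU.connectedComponentIn.frontier_eq, connectedComponentIn_eq hyx,
    ← connectedComponentIn_eq hyw] at hw
  exact hw.2 (mem_connectedComponentIn hwU)

section FillHoles

variable {Ω P C : Set ℂ} {z : ℂ}

lemma isHole_connectedComponentIn (hz : z ∉ P) (hb : IsBounded (connectedComponentIn Pᶜ z)) :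
    IsHole P (connectedComponentIn Pᶜ z) :=
  ⟨⟨z, hz, rfl⟩, hb⟩

lemma IsHole.nonempty (hC : IsHole P C) : C.Nonempty := by
  obtain ⟨⟨z, hz, rfl⟩, -⟩ := hC
  exact ⟨z, mem_connectedComponentIn hz⟩

lemma IsHole.subset_compl (hC : IsHole P C) : C ⊆ Pᶜ := by
  obtain ⟨⟨z, -, rfl⟩, -⟩ := hC
  exact connectedComponentIn_subset _ _

lemma IsHole.isPreconnected (hC : IsHole P C) : IsPreconnected C := by
  obtain ⟨⟨z, -, rfl⟩, -⟩ := hC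
  exact isPreconnected_connectedComponentIn

lemma IsHole.isOpen (hC : IsHole P C) (hP : IsClosed P) : IsOpen C := by
  obtain ⟨⟨z, -, rfl⟩, -⟩ := hC
  exact hP.isOpen_compl.connectedComponentIn

lemma IsHole.eq_connectedComponentIn (hC : IsHole P C) (hz : z ∈ C) :
    C = connectedComponentIn Pᶜ z := by
  obtain ⟨⟨w, -, rfl⟩, -⟩ := hC
  exact connectedComponentIn_eq hz

lemma IsHole.frontier_subset (hC : IsHole P C) (hP : IsClosed P) : frontier C ⊆ P := by
  obtain ⟨⟨z, -, rfl⟩, -⟩ := hC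
  simpa using frontier_connectedComponentIn_subset_compl hP.isOpen_compl z

lemma IsHole.frontier_nonempty (hC : IsHole P C) : (frontier C).Nonempty := by
  refine nonempty_frontier_iff.2 ⟨hC.nonempty, fun h ↦ ?_⟩
  exact NormedSpace.unbounded_univ ℝ ℂ (h ▸ hC.2)

/-- This is the maximum principle for the identity function. -/
lemma IsHole.subset_closedBall (hC : IsHole P C) (hP : IsClosed P) {R : ℝ}
    (hR : P ⊆ closedBall 0 R) : C ⊆ closedBall 0 R := by
  intro z hz
  rw [mem_closedBall_zero_iff]
  exact Complex.norm_le_of_forall_mem_frontier_norm_le hC.2 differentiable_id.diffContOnCl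
    (fun w hw ↦ mem_closedBall_zero_iff.1 (hR (hC.frontier_subset hP hw))) (subset_closure hz)

/-- The union of `P` and of the holes of `P` that lie in `Ω`; filling them makes `P` `Ω`-convex. -/
def fillHoles (Ω P : Set ℂ) : Set ℂ :=
  P ∪ ⋃₀ {C | IsHole P C ∧ C ⊆ Ω}

lemma subset_fillHoles : P ⊆ fillHoles Ω P := subset_union_left

lemma IsHole.subset_fillHoles (hC : IsHole P C) (hCΩ : C ⊆ Ω) : C ⊆ fillHoles Ω P :=
  (subset_sUnion_of_mem (show C ∈ {C | IsHole P C ∧ C ⊆ Ω} from ⟨hC, hCΩ⟩)).trans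
    subset_union_right

lemma fillHoles_subset (hP : P ⊆ Ω) : fillHoles Ω P ⊆ Ω :=
  union_subset hP (sUnion_subset fun _ hC ↦ hC.2)

lemma connectedComponentIn_subset_compl_fillHoles (hz : z ∉ fillHoles Ω P) :
    connectedComponentIn Pᶜ z ⊆ (fillHoles Ω P)ᶜ := by
  rintro w hw (hwP | ⟨C, ⟨hC, hCΩ⟩, hwC⟩)
  · exact connectedComponentIn_subset _ _ hw hwP
  · have hzC : z ∈ C := by
      rw [hC.eq_connectedComponentIn hwC, ← connectedComponentIn_eq hw]
      exact mem_connectedComponentIn fun hzP ↦ hz (subset_fillHoles hzP)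
    exact hz (hC.subset_fillHoles hCΩ hzC)

lemma isClosed_fillHoles (hP : IsClosed P) : IsClosed (fillHoles Ω P) := by
  refine isOpen_compl_iff.1 (isOpen_iff_mem_nhds.2 fun z hz ↦ ?_)
  have hzP : z ∈ Pᶜ := fun hzP ↦ hz (subset_fillHoles hzP)
  exact mem_of_superset
    (hP.isOpen_compl.connectedComponentIn.mem_nhds (mem_connectedComponentIn hzP))
    (connectedComponentIn_subset_compl_fillHoles hz)

lemma isCompact_fillHoles (hP : IsCompact P) : IsCompact (fillHoles Ω P) := by
  obtain ⟨R, hR⟩ := hP.isBounded.subset_closedBall 0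
  refine (isCompact_closedBall 0 R).of_isClosed_subset (isClosed_fillHoles hP.isClosed) ?_
  exact union_subset hR (sUnion_subset fun C hC ↦ hC.1.subset_closedBall hP.isClosed hR)

lemma omegaConvex_fillHoles : OmegaConvex Ω (fillHoles Ω P) := by
  rintro _ ⟨⟨z, hz, rfl⟩, hb⟩
  have hzP : z ∉ P := fun hzP ↦ hz (subset_fillHoles hzP)
  have hsub : connectedComponentIn Pᶜ z ⊆ connectedComponentIn (fillHoles Ω P)ᶜ z :=
    isPreconnected_connectedComponentIn.subset_connectedComponentIn
      (mem_connectedComponentIn hzP) (connectedComponentIn_subset_compl_fillHoles hz)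
  have hhole := isHole_connectedComponentIn hzP (hb.subset hsub)
  obtain ⟨w, hw, hwΩ⟩ := not_subset.1 fun hCΩ : connectedComponentIn Pᶜ z ⊆ Ω ↦
    hz (hhole.subset_fillHoles hCΩ (mem_connectedComponentIn hzP))
  exact ⟨w, hsub hw, hwΩ⟩

lemma IsHole.isPreconnected_union (hC : IsHole P C) (hP : IsClosed P) (hPc : IsPreconnected P) :
    IsPreconnected (P ∪ C) := by
  obtain ⟨w, hw⟩ := hC.frontier_nonempty
  have hwP := hC.frontier_subset hP hw
  have heq : P ∪ C = P ∪ insert w C := by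
    rw [union_insert, insert_eq_of_mem (mem_union_left C hwP)]
  rw [heq]
  exact hPc.union w hwP (mem_insert w C) <| hC.isPreconnected.subset_closure (subset_insert w C)
    (insert_subset (frontier_subset_closure hw) subset_closure)

lemma isConnected_fillHoles (hP : IsClosed P) (hPc : IsConnected P) :
    IsConnected (fillHoles Ω P) := by
  obtain ⟨x, hx⟩ := hPc.nonempty
  refine ⟨⟨x, subset_fillHoles hx⟩, isPreconnected_of_forall x ?_⟩
  rintro z (hz | ⟨C, ⟨hC, hCΩ⟩, hz⟩)
  · exact ⟨P, subset_fillHoles, hx, hz, hPc.isPreconnected⟩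
  · exact ⟨P ∪ C, union_subset subset_fillHoles (hC.subset_fillHoles hCΩ), Or.inl hx, Or.inr hz,
      hC.isPreconnected_union hP hPc.isPreconnected⟩

lemma IsHole.openGridCell_subset {A : Set (ℤ × ℤ)} {q : ℤ × ℤ} (hC : IsHole (gridUnion A) C)
    (hz : z ∈ C) (hq : z ∈ gridCell q) : openGridCell q ⊆ C := by
  have hqA : q ∉ A := fun h ↦ hC.subset_compl hz (gridCell_subset_gridUnion h hq)
  rw [← closure_openGridCell] at hq
  obtain ⟨y, hyC, hyq⟩ := mem_closure_iff.1 hq C (hC.isOpen (isClosed_gridUnion A)) hz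
  rw [hC.eq_connectedComponentIn hyC]
  exact (isPreconnected_openGridCell q).subset_connectedComponentIn hyq
    (openGridCell_subset_compl_gridUnion hqA)

lemma fillHoles_gridUnion (Ω : Set ℂ) (A : Set (ℤ × ℤ)) :
    fillHoles Ω (gridUnion A) = gridUnion {q | gridCell q ⊆ fillHoles Ω (gridUnion A)} := by
  refine Subset.antisymm ?_ (iUnion₂_subset fun q hq ↦ hq)
  rintro z (hz | ⟨C, ⟨hC, hCΩ⟩, hz⟩)
  · obtain ⟨q, hqA, hq⟩ := mem_gridUnion.1 hz
    exact mem_gridUnion.2 ⟨q, (gridCell_subset_gridUnion hqA).trans subset_fillHoles, hq⟩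
  · obtain ⟨q, hq⟩ := exists_mem_gridCell z
    refine mem_gridUnion.2 ⟨q, ?_, hq⟩
    rw [mem_ofPred_eq, ← closure_openGridCell]
    exact closure_minimal ((hC.openGridCell_subset hz hq).trans (hC.subset_fillHoles hCΩ))
      (isClosed_fillHoles (isClosed_gridUnion A))

lemma regularCompact_fillHoles_gridUnion {A : Set (ℤ × ℤ)} (hA : A.Finite) :
    RegularCompact (fillHoles Ω (gridUnion A)) := by
  rw [fillHoles_gridUnion]
  refine regularCompact_gridUnion ((finite_gridCell_inter
    (isCompact_fillHoles (Ω := Ω) (isCompact_gridUnion hA)).isBounded).subset fun q hq ↦ ?_)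
  exact ⟨gridPoint q, gridPoint_mem_gridCell q, hq (gridPoint_mem_gridCell q)⟩

end FillHoles

/-! ### Polygonal neighbourhoods of continua -/

section Continuum

variable {Ω K L C : Set ℂ}

/-- A compact connected subset of `Ω` that is regular and `Ω`-convex, that is, a member of `M(Ω)`
except possibly for `Ω`-connectedness. -/
structure IsRegularContinuum (Ω L : Set ℂ) : Prop where
  isCompact : IsCompact L
  subset : L ⊆ Ω
  regularCompact : RegularCompact L
  isConnected : IsConnected L
  omegaConvex : OmegaConvex Ω L

lemma IsJordanCurve.image (hC : IsJordanCurve C) (h : ℂ ≃ₜ ℂ) : IsJordanCurve (h '' C) := by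
  obtain ⟨γ, hγ, hinj, rfl⟩ := hC
  exact ⟨h ∘ γ, h.continuous.comp_continuousOn hγ, h.injective.comp_injOn hinj,
    (image_comp h γ _).symm⟩

lemma RegularCompact.image (hL : RegularCompact L) (h : ℂ ≃ₜ ℂ) : RegularCompact (h '' L) := by
  obtain ⟨𝒞, h𝒞, hfr⟩ := hL
  refine ⟨(h '' ·) '' 𝒞, forall_mem_image.2 fun C hC ↦ (h𝒞 C hC).image h, ?_⟩
  rw [← h.image_frontier, hfr, image_sUnion]

lemma IsHole.image (hC : IsHole L C) (h : ℂ ≃ₜ ℂ) : IsHole (h '' L) (h '' C) := by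
  refine ⟨?_, (hC.2.isCompact_closure.image h.continuous).isBounded.subset
    (image_mono subset_closure)⟩
  obtain ⟨⟨z, hz, rfl⟩, -⟩ := hC
  rw [← image_compl_eq h.bijective, h.image_connectedComponentIn hz]
  exact ⟨h z, mem_image_of_mem h hz, rfl⟩

lemma OmegaConvex.image (hL : OmegaConvex Ω L) (h : ℂ ≃ₜ ℂ) : OmegaConvex (h '' Ω) (h '' L) := by
  intro C hC
  have hC' : IsHole L (h.symm '' C) := by simpa [image_image] using hC.image h.symm
  obtain ⟨_, ⟨w, hw, rfl⟩, hwΩ⟩ := hL _ hC'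
  refine ⟨w, hw, ?_⟩
  rintro ⟨z, hz, rfl⟩
  simp [hz] at hwΩ

lemma IsRegularContinuum.image (hL : IsRegularContinuum Ω L) (h : ℂ ≃ₜ ℂ) :
    IsRegularContinuum (h '' Ω) (h '' L) where
  isCompact := hL.isCompact.image h.continuous
  subset := image_mono hL.subset
  regularCompact := hL.regularCompact.image h
  isConnected := hL.isConnected.image h h.continuous.continuousOn
  omegaConvex := hL.omegaConvex.image h

lemma subset_gridUnion_touching (K : Set ℂ) : K ⊆ gridUnion {q | (gridCell q ∩ K).Nonempty} := by
  intro z hz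
  obtain ⟨q, hq⟩ := exists_mem_gridCell z
  exact mem_gridUnion.2 ⟨q, ⟨z, hq, hz⟩, hq⟩

lemma isConnected_gridUnion_touching (hK : IsConnected K) :
    IsConnected (gridUnion {q | (gridCell q ∩ K).Nonempty}) := by
  obtain ⟨x, hx⟩ := hK.nonempty
  refine ⟨⟨x, subset_gridUnion_touching K hx⟩, isPreconnected_of_forall x fun z hz ↦ ?_⟩
  obtain ⟨q, ⟨w, hwq, hwK⟩, hzq⟩ := mem_gridUnion.1 hz
  exact ⟨K ∪ gridCell q,
    union_subset (subset_gridUnion_touching K) (gridCell_subset_gridUnion ⟨w, hwq, hwK⟩),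
    Or.inl hx, Or.inr hzq,
    hK.isPreconnected.union w hwK hwq (isPreconnected_gridCell q)⟩

lemma exists_isRegularContinuum_of_closedBall_subset (hK : IsCompact K) (hKc : IsConnected K)
    (hΩ : ∀ z ∈ K, closedBall z 2 ⊆ Ω) : ∃ L, IsRegularContinuum Ω L ∧ K ⊆ L := by
  have hfin := finite_gridCell_inter hK.isBounded
  have hsub : gridUnion {q | (gridCell q ∩ K).Nonempty} ⊆ Ω := by
    refine iUnion₂_subset ?_
    rintro q ⟨w, hwq, hwK⟩ z hz
    exact hΩ w hwK (dist_le_of_mem_gridCell hz hwq)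
  refine ⟨fillHoles Ω (gridUnion {q | (gridCell q ∩ K).Nonempty}), ?_,
    (subset_gridUnion_touching K).trans subset_fillHoles⟩
  exact
    { isCompact := isCompact_fillHoles (isCompact_gridUnion hfin)
      subset := fillHoles_subset hsub
      regularCompact := regularCompact_fillHoles_gridUnion hfin
      isConnected := isConnected_fillHoles (isClosed_gridUnion _)
        (isConnected_gridUnion_touching hKc)
      omegaConvex := omegaConvex_fillHoles }

lemma exists_isRegularContinuum_of_isConnected (hΩ : IsOpen Ω) (hK : IsCompact K)
    (hKc : IsConnected K) (hKΩ : K ⊆ Ω) : ∃ L, IsRegularContinuum Ω L ∧ K ⊆ L := by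
  obtain ⟨δ, hδ, hthick⟩ := hK.exists_cthickening_subset_open hΩ hKΩ
  have hc : 2 / δ ≠ 0 := by positivity
  set h : ℂ ≃ₜ ℂ := Homeomorph.smulOfNeZero (2 / δ) hc
  have hball : ∀ z ∈ h '' K, closedBall z 2 ⊆ h '' Ω := by
    rintro _ ⟨z, hz, rfl⟩
    have himage : h '' closedBall z δ = closedBall (h z) 2 := by
      have hnorm : ‖2 / δ‖ * δ = 2 := by
        rw [Real.norm_of_nonneg (by positivity), div_mul_cancel₀ _ hδ.ne']
      exact (smul_closedBall' hc z δ).trans (by rw [hnorm]; rfl)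
    rw [← himage]
    exact image_mono ((closedBall_subset_cthickening hz δ).trans hthick)
  obtain ⟨L, hL, hKL⟩ := exists_isRegularContinuum_of_closedBall_subset
    (hK.image h.continuous) (hKc.image h h.continuous.continuousOn) hball
  refine ⟨h.symm '' L, by simpa [image_image] using hL.image h.symm, ?_⟩
  simpa [image_image] using image_mono (f := h.symm) hKL

end Continuum

/-! ### Compact connected supersets -/

section ConnectedSuperset

open scoped Topology

variable {X : Type*} [TopologicalSpace X] [T2Space X] [LocallyCompactSpace X]
  [LocallyConnectedSpace X] {Ω K : Set X} {x : X}

lemma exists_mem_nhds_isCompact_isConnected (hΩ : Ω ∈ 𝓝 x) :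
    ∃ N ∈ 𝓝 x, IsCompact N ∧ IsConnected N ∧ N ⊆ Ω := by
  obtain ⟨N, hN, hNΩ, hNc⟩ := local_compact_nhds hΩ
  have hsub : closure (connectedComponentIn N x) ⊆ N :=
    closure_minimal (connectedComponentIn_subset N x) hNc.isClosed
  exact ⟨closure (connectedComponentIn N x),
    mem_of_superset (connectedComponentIn_mem_nhds hN) subset_closure,
    hNc.of_isClosed_subset isClosed_closure hsub,
    (isConnected_connectedComponentIn_iff.2 (mem_of_mem_nhds hN)).closure, hsub.trans hNΩ⟩

lemma exists_mem_nhds_isCompact_isConnected_mem (hΩ : IsOpen Ω) (hΩc : IsPreconnected Ω) {x₀ : X}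
    (hx₀ : x₀ ∈ Ω) (hx : x ∈ Ω) :
    ∃ N ∈ 𝓝 x, IsCompact N ∧ IsConnected N ∧ x₀ ∈ N ∧ N ⊆ Ω := by
  let S := {y | ∃ N ∈ 𝓝 y, IsCompact N ∧ IsConnected N ∧ x₀ ∈ N ∧ N ⊆ Ω}
  have hS : IsOpen S := isOpen_iff_mem_nhds.2 fun y ⟨N, hN, hN'⟩ ↦ by
    filter_upwards [eventually_mem_nhds_iff.2 hN] with y' hy' using ⟨N, hy', hN'⟩
  refine hΩc.subset_of_closure_inter_subset hS ⟨x₀, hx₀, ?_⟩ ?_ hx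
  · obtain ⟨N, hN, hNk, hNc, hNΩ⟩ := exists_mem_nhds_isCompact_isConnected (hΩ.mem_nhds hx₀)
    exact ⟨N, hN, hNk, hNc, mem_of_mem_nhds hN, hNΩ⟩
  · rintro y ⟨hyS, hyΩ⟩
    obtain ⟨N, hN, hNk, hNc, hNΩ⟩ := exists_mem_nhds_isCompact_isConnected (hΩ.mem_nhds hyΩ)
    obtain ⟨w, hwN, N', hN', hNk', hNc', hx₀', hNΩ'⟩ := mem_closure_iff_nhds.1 hyS N hN
    exact ⟨N ∪ N', mem_of_superset hN subset_union_left, hNk.union hNk',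
      hNc.union ⟨w, hwN, mem_of_mem_nhds hN'⟩ hNc', Or.inr hx₀', union_subset hNΩ hNΩ'⟩

lemma exists_isCompact_isConnected_superset_s4 (hΩ : IsOpen Ω) (hΩc : IsConnected Ω)
    (hK : IsCompact K) (hKΩ : K ⊆ Ω) :
    ∃ L, IsCompact L ∧ IsConnected L ∧ K ⊆ L ∧ L ⊆ Ω := by
  obtain ⟨x₀, hx₀⟩ := hΩc.nonempty
  choose! N hN hNc hNconn hx₀N hNΩ using fun x (hx : x ∈ K) ↦
    exists_mem_nhds_isCompact_isConnected_mem hΩ hΩc.isPreconnected hx₀ (hKΩ hx)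
  obtain ⟨t, htK, hKt⟩ := hK.elim_nhds_subcover N hN
  refine ⟨{x₀} ∪ ⋃ x ∈ t, N x, ?_, ?_, hKt.trans subset_union_right, ?_⟩
  · exact isCompact_singleton.union (t.isCompact_biUnion fun x hx ↦ hNc x (htK x hx))
  · refine ⟨⟨x₀, Or.inl rfl⟩, isPreconnected_of_forall x₀ fun y hy ↦ ?_⟩
    obtain rfl | hy := hy
    · exact ⟨{y}, subset_union_left, rfl, rfl, isPreconnected_singleton⟩
    · obtain ⟨x, hx, hyx⟩ := mem_iUnion₂.1 hy
      exact ⟨N x, (subset_biUnion_of_mem hx).trans subset_union_right, hx₀N x (htK x hx), hyx,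
        (hNconn x (htK x hx)).isPreconnected⟩
  · exact union_subset (singleton_subset_iff.2 hx₀) (iUnion₂_subset fun x hx ↦ hNΩ x (htK x hx))

end ConnectedSuperset

/-! ### Separating a compact component -/

section Separation

variable {X : Type*} [TopologicalSpace X] [T2Space X]

lemma exists_isClopen_subset_of_connectedComponent_subset [CompactSpace X] {x : X} {U : Set X}
    (hU : IsOpen U) (hxU : connectedComponent x ⊆ U) : ∃ Z, IsClopen Z ∧ x ∈ Z ∧ Z ⊆ U := by
  rw [connectedComponent_eq_iInter_isClopen] at hxU
  have : Nonempty {Z : Set X // IsClopen Z ∧ x ∈ Z} := ⟨⟨univ, isClopen_univ, mem_univ x⟩⟩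
  have hdir : Directed (· ⊇ ·) fun Z : {Z : Set X // IsClopen Z ∧ x ∈ Z} ↦ (Z : Set X) := by
    rintro ⟨Z, hZ, hxZ⟩ ⟨Z', hZ', hxZ'⟩
    exact ⟨⟨Z ∩ Z', hZ.inter hZ', hxZ, hxZ'⟩, inter_subset_left, inter_subset_right⟩
  obtain ⟨⟨Z, hZ, hxZ⟩, hZU⟩ := exists_subset_nhds_of_compactSpace hdir
    (fun Z ↦ Z.2.1.isClosed) fun y hy ↦ hU.mem_nhds (hxU hy)
  exact ⟨Z, hZ, hxZ, hZU⟩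

lemma exists_isCompact_disjoint_frontier_of_connectedComponentIn_subset [LocallyCompactSpace X]
    {x : X} {F K : Set X} (hF : IsClosed F) (hx : x ∈ F) (hK : IsCompact K)
    (hxK : connectedComponentIn F x ⊆ K) :
    ∃ B, IsCompact B ∧ x ∈ interior B ∧ Disjoint (frontier B) F := by
  obtain ⟨N, hN, hKN⟩ := exists_compact_superset hK
  let y : ↥(F ∩ N) := ⟨x, hx, interior_subset (hKN (hxK (mem_connectedComponentIn hx)))⟩
  have : CompactSpace ↥(F ∩ N) := isCompact_iff_compactSpace.1 (hN.inter_left hF)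
  have hcomp : connectedComponent y ⊆ Subtype.val ⁻¹' interior N := by
    rw [← image_subset_iff, ← connectedComponentIn_eq_image y.2]
    exact (connectedComponentIn_mono x inter_subset_left).trans (hxK.trans hKN)
  obtain ⟨Z, hZ, hyZ, hZN⟩ := exists_isClopen_subset_of_connectedComponent_subset
    (isOpen_interior.preimage continuous_subtype_val) hcomp
  have hclosed : IsClosed (F \ interior N ∪ Subtype.val '' Zᶜ) :=
    (hF.inter isOpen_interior.isClosed_compl).union
      (hZ.compl.isClosed.isCompact.image continuous_subtype_val).isClosed
  obtain ⟨B, hB, hZB, hBN⟩ := exists_compact_between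
    (hZ.isClosed.isCompact.image continuous_subtype_val) hclosed.isOpen_compl <| by
      rintro _ ⟨z, hz, rfl⟩ (⟨-, hzN⟩ | ⟨w, hw, hwz⟩)
      · exact hzN (hZN hz)
      · exact hw (Subtype.ext hwz ▸ hz)
  refine ⟨B, hB, hZB ⟨y, hyZ, rfl⟩, disjoint_left.2 fun z hzB hzF ↦ hzB.2 (hZB ?_)⟩
  have hz := hBN (hB.isClosed.frontier_subset hzB)
  have hzN : z ∈ interior N := by_contra fun hzN ↦ hz (Or.inl ⟨hzF, hzN⟩)
  exact ⟨⟨z, hzF, interior_subset hzN⟩, by_contra fun hzZ ↦ hz (Or.inr ⟨_, hzZ, rfl⟩), rfl⟩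

end Separation

lemma subset_interior_of_disjoint_frontier {X : Type*} [TopologicalSpace X]
    {s t : Set X} (hs : IsPreconnected s) (hst : Disjoint s (frontier t))
    (hne : (s ∩ interior t).Nonempty) : s ⊆ interior t := by
  refine hs.subset_left_of_subset_union isOpen_interior isClosed_closure.isOpen_compl
    (disjoint_compl_right.mono_left interior_subset_closure) (fun z hz ↦ ?_) hne
  exact or_iff_not_imp_left.2 fun hzt hzc ↦ disjoint_left.1 hst hz ⟨hzc, hzt⟩

/-! ### `Ω`-connectedness -/

section OmegaConnected

variable {Ω L : Set ℂ}

lemma OmegaConvex.hasNoHole (hL : OmegaConvex Ω L) (hLΩ : L ⊆ Ω) (hΩ : HasNoHole Ω) :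
    HasNoHole L := by
  rintro ⟨C, hC⟩
  obtain ⟨w, hw, hwΩ⟩ := hL C hC
  refine hΩ ⟨_, isHole_connectedComponentIn hwΩ (hC.2.subset ?_)⟩
  rw [hC.eq_connectedComponentIn hw]
  exact connectedComponentIn_mono w (compl_subset_compl.2 hLΩ)

lemma exists_isCompact_forall_superset_exists_isHole (hΩ : IsOpen Ω) (hhole : ¬ HasNoHole Ω) :
    ∃ W, IsCompact W ∧ W ⊆ Ω ∧ ∀ L, W ⊆ L → L ⊆ Ω → ∃ C, IsHole L C := by
  obtain ⟨_, ⟨x, hx, rfl⟩, hb⟩ := not_not.1 hhole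
  obtain ⟨B, hB, hxB, hBΩ⟩ := exists_isCompact_disjoint_frontier_of_connectedComponentIn_subset
    hΩ.isClosed_compl hx hb.isCompact_closure subset_closure
  refine ⟨frontier B, hB.of_isClosed_subset isClosed_frontier hB.isClosed.frontier_subset,
    disjoint_compl_right_iff_subset.1 hBΩ, fun L hBL hLΩ ↦ ?_⟩
  have hxL : x ∉ L := fun hxL ↦ hx (hLΩ hxL)
  refine ⟨_, isHole_connectedComponentIn hxL (hB.isBounded.subset ?_)⟩
  exact (subset_interior_of_disjoint_frontier isPreconnected_connectedComponentIn
    (disjoint_left.2 fun z hz hzB ↦ connectedComponentIn_subset Lᶜ x hz (hBL hzB))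
    ⟨x, mem_connectedComponentIn hxL, hxB⟩).trans interior_subset

lemma exists_isCompact_forall_omegaConnectedSet (hΩ : IsOpen Ω) :
    ∃ W, IsCompact W ∧ W ⊆ Ω ∧
      ∀ L, W ⊆ L → L ⊆ Ω → OmegaConvex Ω L → OmegaConnectedSet Ω L := by
  by_cases hhole : HasNoHole Ω
  · exact ⟨∅, isCompact_empty, empty_subset Ω,
      fun L _ hLΩ hL ↦ ⟨hL.hasNoHole hLΩ, fun h ↦ absurd hhole h⟩⟩
  · obtain ⟨W, hW, hWΩ, hWL⟩ := exists_isCompact_forall_superset_exists_isHole hΩ hhole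
    exact ⟨W, hW, hWΩ, fun L hWL' hLΩ hL ↦ ⟨hL.hasNoHole hLΩ, fun _ ↦ hWL L hWL' hLΩ⟩⟩

lemma exists_memM_subset_interior {K : Set ℂ} (hΩ : IsOpen Ω) (hΩc : IsConnected Ω)
    (hK : IsCompact K) (hKΩ : K ⊆ Ω) : ∃ L, MemM Ω L ∧ K ⊆ interior L := by
  obtain ⟨W, hW, hWΩ, hWL⟩ := exists_isCompact_forall_omegaConnectedSet hΩ
  obtain ⟨K₁, hK₁, hKK₁, hK₁Ω⟩ :=
    exists_compact_between (hK.union hW) hΩ (union_subset hKΩ hWΩ)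
  obtain ⟨K₂, hK₂, hK₂c, hK₁₂, hK₂Ω⟩ :=
    exists_isCompact_isConnected_superset_s4 hΩ hΩc hK₁ hK₁Ω
  obtain ⟨L, hL, hK₂L⟩ := exists_isRegularContinuum_of_isConnected hΩ hK₂ hK₂c hK₂Ω
  have hKWL : K ∪ W ⊆ interior L := hKK₁.trans (interior_mono (hK₁₂.trans hK₂L))
  have hWL' : W ⊆ L := subset_union_right.trans (hKWL.trans interior_subset)
  exact ⟨L, ⟨hL.isConnected.nonempty, hL.isCompact, hL.subset, hL.regularCompact, hL.isConnected,
    hWL L hWL' hL.subset hL.omegaConvex, hL.omegaConvex⟩, subset_union_left.trans hKWL⟩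

end OmegaConnected

/-! ### Exhaustions -/

section Exhaustion

variable {X : Type*} [TopologicalSpace X]

lemma exists_seq_isCompact_subset_forall_exists_superset [LocallyCompactSpace X]
    [SecondCountableTopology X] {Ω : Set X} (hΩ : IsOpen Ω) :
    ∃ K : ℕ → Set X, (∀ n, IsCompact (K n)) ∧ (∀ n, K n ⊆ Ω) ∧
      ∀ S ⊆ Ω, IsCompact S → ∃ n, S ⊆ K n := by
  have : LocallyCompactSpace Ω := hΩ.locallyCompactSpace
  let E : CompactExhaustion Ω := default
  refine ⟨fun n ↦ Subtype.val '' E n, fun n ↦ (E.isCompact n).image continuous_subtype_val,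
    fun n ↦ Subtype.coe_image_subset Ω (E n), fun S hSΩ hS ↦ ?_⟩
  obtain ⟨n, hn⟩ := E.exists_superset_of_isCompact
    (Topology.IsInducing.subtypeVal.isCompact_preimage' hS (by rwa [Subtype.range_coe]))
  exact ⟨n, fun z hz ↦ ⟨⟨z, hSΩ hz⟩, hn hz, rfl⟩⟩

lemma exists_exhaustion_of_forall_isCompact [LocallyCompactSpace X] [SecondCountableTopology X]
    {Ω : Set X} (hΩ : IsOpen Ω) {p : Set X → Prop} (hpc : ∀ L, p L → IsCompact L)
    (hpΩ : ∀ L, p L → L ⊆ Ω) (hp : ∀ K ⊆ Ω, IsCompact K → ∃ L, p L ∧ K ⊆ interior L) :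
    ∃ L : ℕ → Set X, (∀ n, p (L n)) ∧ (∀ n, L n ⊆ interior (L (n + 1))) ∧
      ∀ K ⊆ Ω, IsCompact K → ∃ n, K ⊆ L n := by
  obtain ⟨K, hKc, hKΩ, hK⟩ := exists_seq_isCompact_subset_forall_exists_superset hΩ
  choose! f hfp hfint using hp
  let L : ℕ → Set X := fun n ↦ n.rec (f ∅) fun n L ↦ f (L ∪ K n)
  have hL : ∀ n, p (L n) := by
    intro n
    induction n with
    | zero => exact hfp ∅ (empty_subset Ω) isCompact_empty
    | succ n ih => exact hfp _ (union_subset (hpΩ _ ih) (hKΩ n)) ((hpc _ ih).union (hKc n))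
  have hLK : ∀ n, L n ∪ K n ⊆ interior (L (n + 1)) := fun n ↦
    hfint _ (union_subset (hpΩ _ (hL n)) (hKΩ n)) ((hpc _ (hL n)).union (hKc n))
  refine ⟨L, hL, fun n ↦ subset_union_left.trans (hLK n), fun S hSΩ hS ↦ ?_⟩
  obtain ⟨n, hn⟩ := hK S hSΩ hS
  exact ⟨n + 1, hn.trans (subset_union_right.trans ((hLK n).trans interior_subset))⟩

end Exhaustion

/-- Lemma `exhaustion-convenient`: every domain admits an exhaustion by
compact sets in `M(Ω)`. -/
theorem exists_exhaustion_memM (Ω : Set ℂ) (hΩ : IsOpen Ω) (hΩconn : IsConnected Ω) :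
    ∃ L : ℕ → Set ℂ,
      (∀ n, MemM Ω (L n)) ∧
      (∀ n, L n ⊆ interior (L (n + 1))) ∧
      ∀ K : Set ℂ, K ⊆ Ω → IsCompact K → ∃ n, K ⊆ L n :=
  exists_exhaustion_of_forall_isCompact hΩ (fun _ hL ↦ hL.2.1) (fun _ hL ↦ hL.2.2.1)
    fun _ hKΩ hK ↦ exists_memM_subset_interior hΩ hΩconn hK hKΩ
end

section
/- Let Ω ⊆ ℂ be a domain and let L and L' be two disjoint connected Ω-convex compact subsets of Ω. Then L ∪ L' is Ω-convex if and only if one of the following holds: (1) L ⊆ ℂ ∖ L̂' and L' ⊆ ℂ ∖ L̂; (2) there exists a hole O of L such that L' ⊆ O and O ∖ L̂' contains a hole of Ω; (3) there exists a hole O' of L' such that L ⊆ O' and O' ∖ L̂ contains a hole of Ω. -/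
open Set Metric Bornology Filter

/-!
Let `U` be the component of `ℂ ∖ L` containing `L'` and `V` the component of `ℂ ∖ L'` containing
`L`. The complement of `V` is connected and misses `L`, hence lies in `U`; thus `U ∪ V = ℂ`, and
since `ℂ` is simply connected, `U ∩ V` is connected. Therefore `U ∩ V` is a component of
`ℂ ∖ (L ∪ L')`, and every other component of `ℂ ∖ (L ∪ L')` is already a component of `ℂ ∖ L` or of
`ℂ ∖ L'`. So `L ∪ L'` is `Ω`-convex iff `U ∩ V` is unbounded or meets `ℂ ∖ Ω`. Finally `U ∩ V` is
bounded iff `U` or `V` is, and the three alternatives say, in order, that `U` and `V` are both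
unbounded, that `U` is bounded and `U ∩ V` meets `ℂ ∖ Ω`, and the same with `V` in place of `U`.
-/

section Unicoherence

variable {X : Type*} [TopologicalSpace X] {U V : Set X}

theorem continuousOn_indicator {M : Type*} [TopologicalSpace M] [Zero M] {f : X → M} {s t : Set X}
    (hf : ContinuousOn f s) (h : ∀ a ∈ s ∩ frontier t, f a = 0) :
    ContinuousOn (t.indicator f) s := by
  classical
  rw [← piecewise_eq_indicator]
  exact (hf.mono inter_subset_left).piecewise h continuousOn_const

theorem notMem_frontier_of_subset_union {s P Q : Set X} (hP : IsOpen P) (hQ : IsOpen Q)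
    (hs : s ⊆ P ∪ Q) (hPQ : Disjoint P Q) {a : X} (ha : a ∈ s) : a ∉ frontier Q := by
  rw [hQ.frontier_eq]
  rintro ⟨haQ, haQ'⟩
  exact (hPQ.closure_right hP).notMem_of_mem_left ((hs ha).resolve_right haQ') haQ

-- Both functions descend to the same circle-valued map, whose lift to `ℝ` differs from each of them
-- by a constant.
theorem sub_eq_sub_of_coe_unitAddCircle_eq [SimplyConnectedSpace X] [LocallyPathConnectedSpace X]
    (hU : IsOpen U) (hV : IsOpen V) (hUc : IsPreconnected U) (hVc : IsPreconnected V)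
    (hUV : U ∪ V = univ) {g h : X → ℝ} (hg : ContinuousOn g U) (hh : ContinuousOn h V)
    (hgh : ∀ x, (g x : UnitAddCircle) = h x) {p q : X} (hp : p ∈ U ∩ V) (hq : q ∈ U ∩ V) :
    g p - h p = g q - h q := by
  have hcov := AddCircle.isCoveringMap_coe (1 : ℝ)
  have hcoe : Continuous ((↑) : ℝ → UnitAddCircle) := AddCircle.continuous_mk' 1
  have hf : Continuous fun x ↦ (g x : UnitAddCircle) := by
    rw [← continuousOn_univ, ← hUV]
    exact (hcoe.comp_continuousOn hg).union_of_isOpen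
      ((hcoe.comp_continuousOn hh).congr fun x _ ↦ hgh x) hU hV
  obtain ⟨F, ⟨hFp, hF⟩, -⟩ := hcov.existsUnique_continuousMap_lifts ⟨_, hf⟩ p (g p) rfl
  have hFg : EqOn F g U := hcov.eqOn_of_comp_eqOn hUc F.continuous.continuousOn hg
    (fun x _ ↦ congrFun hF x) hp.1 hFp
  have hFh : EqOn F (fun x ↦ h x + (g p - h p)) V := by
    refine hcov.eqOn_of_comp_eqOn hVc F.continuous.continuousOn (by fun_prop) (fun x _ ↦ ?_) hp.2
      (by simp [hFp])
    calc (F x : UnitAddCircle) = g x := congrFun hF x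
      _ = (h x + (g p - h p) : ℝ) := by simp [hgh]
  linarith [hFg hq.1, hFh hq.2]

-- If `U ∩ V` were the disjoint union of open sets `P` and `Q`, then a Urysohn function `ρ` for the
-- complements of `V` and `U`, cut off outside `Q`, and likewise `ρ - 1`, would agree modulo `1` but
-- differ by `0` on `P` and by `1` on `Q`.
theorem isPreconnected_inter_of_union_eq_univ [NormalSpace X] [SimplyConnectedSpace X]
    [LocallyPathConnectedSpace X] (hU : IsOpen U) (hV : IsOpen V) (hUc : IsPreconnected U)
    (hVc : IsPreconnected V) (hUV : U ∪ V = univ) : IsPreconnected (U ∩ V) := by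
  rintro P Q hP hQ hPQ ⟨p, hp, hpP⟩ ⟨q, hq, hqQ⟩
  by_contra hdisj
  set P' := U ∩ V ∩ P
  set Q' := U ∩ V ∩ Q
  have hcover : U ∩ V ⊆ P' ∪ Q' := fun x hx ↦ (hPQ hx).imp (⟨hx, ·⟩) (⟨hx, ·⟩)
  have hPQ' : Disjoint P' Q' := disjoint_left.2 fun x hxP hxQ ↦ hdisj ⟨x, hxP.1, hxP.2, hxQ.2⟩
  have hfrontier : ∀ x ∈ U ∩ V, x ∉ frontier Q' := fun x ↦
    notMem_frontier_of_subset_union ((hU.inter hV).inter hP) ((hU.inter hV).inter hQ) hcover hPQ'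
  have hcompl : Disjoint Vᶜ Uᶜ := by
    rwa [disjoint_iff_inter_eq_empty, ← compl_union, union_comm, compl_empty_iff]
  obtain ⟨ρ, hρV, hρU, -⟩ := exists_continuous_zero_one_of_isClosed hV.isClosed_compl
    hU.isClosed_compl hcompl
  have hg : ContinuousOn (Q'.indicator ρ) U :=
    continuousOn_indicator ρ.continuous.continuousOn fun x hx ↦
      hρV fun hxV ↦ hfrontier x ⟨hx.1, hxV⟩ hx.2
  have hh : ContinuousOn (Q'.indicator fun x ↦ ρ x - 1) V :=
    continuousOn_indicator (by fun_prop) fun x hx ↦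
      sub_eq_zero.2 (hρU fun hxU ↦ hfrontier x ⟨hxU, hx.1⟩ hx.2)
  have hgh : ∀ x, ((Q'.indicator ρ x : ℝ) : UnitAddCircle) =
      (Q'.indicator (fun x ↦ ρ x - 1) x : ℝ) := by
    intro x
    by_cases hx : x ∈ Q' <;> simp [hx, AddCircle.coe_period]
  have hpQ' : p ∉ Q' := hPQ'.notMem_of_mem_left ⟨hp, hpP⟩
  have hqQ' : q ∈ Q' := ⟨hq, hqQ⟩
  simpa [hpQ', hqQ'] using sub_eq_sub_of_coe_unitAddCircle_eq hU hV hUc hVc hUV hg hh hgh hp hq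

end Unicoherence

section Components

variable {X : Type*} [TopologicalSpace X] {E K K' S : Set X} {z : X}

-- If `u` and `v` separate the complement of the component and `K ⊆ u`, then the part in `v` is a
-- union of components of `Kᶜ`, hence clopen.
theorem isPreconnected_compl_connectedComponentIn_compl [PreconnectedSpace X]
    [LocallyConnectedSpace X] (hK : IsClosed K) (hKc : IsPreconnected K) (z : X) :
    IsPreconnected (connectedComponentIn Kᶜ z)ᶜ := by
  set C := connectedComponentIn Kᶜ z
  have hC : IsClosed Cᶜ := hK.isOpen_compl.connectedComponentIn.isClosed_compl
  have hKC : K ⊆ Cᶜ := subset_compl_comm.1 (connectedComponentIn_subset _ _)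
  rw [isPreconnected_iff_subset_of_disjoint_closed]
  intro u v hu hv huv hd
  wlog hKu : K ⊆ u generalizing u v
  · have hKv : K ⊆ v := (isPreconnected_iff_subset_of_disjoint_closed.1 hKc u v hu hv
      (hKC.trans huv) (subset_eq_empty (inter_subset_inter_left _ hKC) hd)).resolve_left hKu
    exact (this v u hv hu (union_comm u v ▸ huv) (inter_comm u v ▸ hd) hKv).symm
  have hopen : IsOpen (Cᶜ ∩ v) := by
    refine isOpen_iff_mem_nhds.2 fun y hy ↦ ?_
    have hyK : y ∈ Kᶜ := fun hyK ↦ (hd.subset ⟨hy.1, hKu hyK, hy.2⟩ : y ∈ (∅ : Set X))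
    set D := connectedComponentIn Kᶜ y
    have hDC : D ⊆ Cᶜ := fun t htD htC ↦ by
      have hCD : C = D := (connectedComponentIn_eq htC).trans (connectedComponentIn_eq htD).symm
      exact hy.1 (hCD.superset (mem_connectedComponentIn hyK))
    have hDv : D ⊆ v := (isPreconnected_iff_subset_of_disjoint_closed.1
      isPreconnected_connectedComponentIn u v hu hv (hDC.trans huv)
      (subset_eq_empty (inter_subset_inter_left _ hDC) hd)).resolve_left
        fun hDu ↦ hd.subset ⟨hy.1, hDu (mem_connectedComponentIn hyK), hy.2⟩
    exact Filter.mem_of_superset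
      (hK.isOpen_compl.connectedComponentIn.mem_nhds (mem_connectedComponentIn hyK))
      (subset_inter hDC hDv)
  obtain hempty | huniv := isClopen_iff.1 ⟨hC.inter hv, hopen⟩
  · exact .inl fun x hx ↦ (huv hx).resolve_right fun hxv ↦ hempty.subset ⟨hx, hxv⟩
  · exact .inr fun x _ ↦ (huniv.superset (mem_univ x)).2

/-- The connected component of `E` containing a nonempty connected set `S ⊆ E`, described without
choosing a point of `S`. -/
def componentAround (E S : Set X) : Set X :=
  {z | S ⊆ connectedComponentIn E z}

theorem componentAround_eq_connectedComponentIn (hS : IsPreconnected S) (hSE : S ⊆ E)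
    (hz : z ∈ S) : componentAround E S = connectedComponentIn E z := by
  ext w
  constructor
  · intro hw
    rw [← connectedComponentIn_eq (hw hz)]
    exact mem_connectedComponentIn (connectedComponentIn_nonempty_iff.1 ⟨z, hw hz⟩)
  · intro hw
    change S ⊆ connectedComponentIn E w
    rw [← connectedComponentIn_eq hw]
    exact hS.subset_connectedComponentIn hz hSE

theorem connectedComponentIn_eq_componentAround (hS : IsConnected S) (hSE : S ⊆ E)
    (hz : z ∈ componentAround E S) : connectedComponentIn E z = componentAround E S := by
  obtain ⟨s, hs⟩ := hS.nonempty
  rw [componentAround_eq_connectedComponentIn hS.isPreconnected hSE hs,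
    connectedComponentIn_eq (hz hs)]

theorem subset_componentAround (hS : IsPreconnected S) (hSE : S ⊆ E) :
    S ⊆ componentAround E S :=
  fun _ hz ↦ hS.subset_connectedComponentIn hz hSE

theorem componentAround_subset (hS : S.Nonempty) : componentAround E S ⊆ E :=
  fun _ hz ↦ connectedComponentIn_nonempty_iff.1 (hS.mono hz)

theorem isPreconnected_componentAround (hS : IsConnected S) (hSE : S ⊆ E) :
    IsPreconnected (componentAround E S) := by
  obtain ⟨s, hs⟩ := hS.nonempty
  rw [componentAround_eq_connectedComponentIn hS.isPreconnected hSE hs]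
  exact isPreconnected_connectedComponentIn

theorem isOpen_componentAround [LocallyConnectedSpace X] (hE : IsOpen E) (hS : IsConnected S)
    (hSE : S ⊆ E) : IsOpen (componentAround E S) := by
  obtain ⟨s, hs⟩ := hS.nonempty
  rw [componentAround_eq_connectedComponentIn hS.isPreconnected hSE hs]
  exact hE.connectedComponentIn

theorem disjoint_connectedComponentIn_of_notMem_componentAround (hS : IsPreconnected S)
    (hSE : S ⊆ E) (hz : z ∉ componentAround E S) : Disjoint (connectedComponentIn E z) S := by
  refine disjoint_left.2 fun x hxz hxS ↦ hz ?_
  change S ⊆ connectedComponentIn E z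
  rw [connectedComponentIn_eq hxz]
  exact hS.subset_connectedComponentIn hxS hSE

theorem disjoint_connectedComponentIn_componentAround (hz : z ∉ componentAround E S) :
    Disjoint (connectedComponentIn E z) (componentAround E S) := by
  refine disjoint_left.2 fun x hxz hx ↦ hz ?_
  change S ⊆ connectedComponentIn E z
  rw [connectedComponentIn_eq hxz]
  exact hx

theorem componentAround_union_componentAround [PreconnectedSpace X] [LocallyConnectedSpace X]
    (hK' : IsClosed K') (hKc : IsConnected K) (hK'c : IsConnected K') (hd : Disjoint K K') :
    componentAround Kᶜ K' ∪ componentAround K'ᶜ K = univ := by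
  rw [← compl_subset_iff_union, compl_subset_comm]
  obtain ⟨a, ha⟩ := hKc.nonempty
  obtain ⟨b, hb⟩ := hK'c.nonempty
  have hKV := subset_componentAround hKc.isPreconnected hd.subset_compl_right
  have hbV : b ∉ componentAround K'ᶜ K := fun h ↦ componentAround_subset hKc.nonempty h hb
  rw [componentAround_eq_connectedComponentIn hK'c.isPreconnected hd.subset_compl_left hb]
  refine IsPreconnected.subset_connectedComponentIn ?_ hbV (compl_subset_compl.2 hKV)
  rw [componentAround_eq_connectedComponentIn hKc.isPreconnected hd.subset_compl_right ha]
  exact isPreconnected_compl_connectedComponentIn_compl hK' hK'c.isPreconnected a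

theorem connectedComponentIn_compl_union_eq_left (hK'c : IsPreconnected K') (hd : Disjoint K K')
    (hzK : z ∉ K) (hz : z ∉ componentAround Kᶜ K') :
    connectedComponentIn (K ∪ K')ᶜ z = connectedComponentIn Kᶜ z := by
  refine (connectedComponentIn_mono z (compl_subset_compl.2 subset_union_left)).antisymm ?_
  refine isPreconnected_connectedComponentIn.subset_connectedComponentIn
    (mem_connectedComponentIn hzK) ?_
  rw [compl_union]
  exact subset_inter (connectedComponentIn_subset _ _)
    (disjoint_connectedComponentIn_of_notMem_componentAround hK'c hd.subset_compl_left
      hz).subset_compl_right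

/-- The region between two disjoint connected sets `K` and `K'`: the points which `K` does not
separate from `K'` and which `K'` does not separate from `K`. -/
def intermediateRegion (K K' : Set X) : Set X :=
  componentAround Kᶜ K' ∩ componentAround K'ᶜ K

theorem intermediateRegion_comm (K K' : Set X) :
    intermediateRegion K K' = intermediateRegion K' K :=
  inter_comm _ _

theorem intermediateRegion_nonempty [PreconnectedSpace X] [LocallyConnectedSpace X]
    (hK : IsClosed K) (hK' : IsClosed K') (hKc : IsConnected K) (hK'c : IsConnected K')
    (hd : Disjoint K K') : (intermediateRegion K K').Nonempty :=
  nonempty_inter (isOpen_componentAround hK.isOpen_compl hK'c hd.subset_compl_left)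
    (isOpen_componentAround hK'.isOpen_compl hKc hd.subset_compl_right)
    (componentAround_union_componentAround hK' hKc hK'c hd)
    (hK'c.nonempty.mono (subset_componentAround hK'c.isPreconnected hd.subset_compl_left))
    (hKc.nonempty.mono (subset_componentAround hKc.isPreconnected hd.subset_compl_right))

theorem isPreconnected_intermediateRegion [NormalSpace X] [SimplyConnectedSpace X]
    [LocallyPathConnectedSpace X] (hK : IsClosed K) (hK' : IsClosed K') (hKc : IsConnected K)
    (hK'c : IsConnected K') (hd : Disjoint K K') : IsPreconnected (intermediateRegion K K') :=
  isPreconnected_inter_of_union_eq_univ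
    (isOpen_componentAround hK.isOpen_compl hK'c hd.subset_compl_left)
    (isOpen_componentAround hK'.isOpen_compl hKc hd.subset_compl_right)
    (isPreconnected_componentAround hK'c hd.subset_compl_left)
    (isPreconnected_componentAround hKc hd.subset_compl_right)
    (componentAround_union_componentAround hK' hKc hK'c hd)

theorem intermediateRegion_subset_compl_union (hKc : K.Nonempty) (hK'c : K'.Nonempty) :
    intermediateRegion K K' ⊆ (K ∪ K')ᶜ := by
  rw [compl_union]
  exact inter_subset_inter (componentAround_subset hK'c) (componentAround_subset hKc)

theorem connectedComponentIn_compl_union_eq_intermediateRegion [NormalSpace X]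
    [SimplyConnectedSpace X] [LocallyPathConnectedSpace X] (hK : IsClosed K) (hK' : IsClosed K')
    (hKc : IsConnected K) (hK'c : IsConnected K') (hd : Disjoint K K')
    (hz : z ∈ intermediateRegion K K') :
    connectedComponentIn (K ∪ K')ᶜ z = intermediateRegion K K' := by
  apply Subset.antisymm
  · refine subset_inter ?_ ?_
    · rw [← connectedComponentIn_eq_componentAround hK'c hd.subset_compl_left hz.1]
      exact connectedComponentIn_mono z (compl_subset_compl.2 subset_union_left)
    · rw [← connectedComponentIn_eq_componentAround hKc hd.subset_compl_right hz.2]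
      exact connectedComponentIn_mono z (compl_subset_compl.2 subset_union_right)
  · exact (isPreconnected_intermediateRegion hK hK' hKc hK'c hd).subset_connectedComponentIn hz
      (intermediateRegion_subset_compl_union hKc.nonempty hK'c.nonempty)

end Components

section Boundedness

variable {E : Type*} [NormedAddCommGroup E] [NormedSpace ℝ E]

theorem isPreconnected_compl_closedBall_zero (h : 1 < Module.rank ℝ E) {r : ℝ} (hr : 0 ≤ r) :
    IsPreconnected (closedBall (0 : E) r)ᶜ := by
  have hpolar : (closedBall (0 : E) r)ᶜ = (fun p : ℝ × E ↦ p.1 • p.2) '' Ioi r ×ˢ sphere 0 1 := by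
    ext z
    simp only [mem_compl_iff, mem_closedBall_zero_iff, not_le]
    constructor
    · intro hz
      have hz0 : ‖z‖ ≠ 0 := (hr.trans_lt hz).ne'
      exact ⟨(‖z‖, ‖z‖⁻¹ • z), ⟨hz, by simp [norm_smul, hz0]⟩, by simp [smul_smul, hz0]⟩
    · rintro ⟨⟨t, v⟩, ⟨ht, hv⟩, rfl⟩
      rw [mem_sphere_zero_iff_norm] at hv
      simpa [norm_smul, hv] using lt_of_lt_of_le ht (le_abs_self t)
  rw [hpolar]
  exact (isPreconnected_Ioi.prod (isPreconnected_sphere h 0 1)).image _ (by fun_prop)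

theorem isBounded_or_isBounded_of_isBounded_inter (h : 1 < Module.rank ℝ E) {U V : Set E}
    (hU : IsOpen U) (hV : IsOpen V) (hUV : U ∪ V = univ) (hb : IsBounded (U ∩ V)) :
    IsBounded U ∨ IsBounded V := by
  obtain ⟨r, hr, hball⟩ := hb.subset_closedBall_lt 0 0
  by_contra! hunb
  have hmeets {W : Set E} (hW : ¬ IsBounded W) : ((closedBall 0 r)ᶜ ∩ W).Nonempty := by
    rw [inter_comm, inter_compl_nonempty_iff]
    exact fun hWr ↦ hW (isBounded_closedBall.subset hWr)
  obtain ⟨x, hxr, hx⟩ := isPreconnected_compl_closedBall_zero h hr.le U V hU hV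
    (hUV ▸ subset_univ _) (hmeets hunb.1) (hmeets hunb.2)
  exact hxr (hball hx)

theorem not_isBounded_of_union_eq_univ [Nontrivial E] {U V : Set E} (hUV : U ∪ V = univ)
    (hU : IsBounded U) : ¬ IsBounded V :=
  fun hV ↦ NormedSpace.unbounded_univ ℝ E (hUV ▸ hU.union hV)

theorem isBounded_intermediateRegion_iff (h : 1 < Module.rank ℝ E) {K K' : Set E} (hK : IsClosed K)
    (hK' : IsClosed K') (hKc : IsConnected K) (hK'c : IsConnected K') (hd : Disjoint K K') :
    IsBounded (intermediateRegion K K') ↔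
      IsBounded (componentAround Kᶜ K') ∨ IsBounded (componentAround K'ᶜ K) := by
  refine ⟨isBounded_or_isBounded_of_isBounded_inter h
    (isOpen_componentAround hK.isOpen_compl hK'c hd.subset_compl_left)
    (isOpen_componentAround hK'.isOpen_compl hKc hd.subset_compl_right)
    (componentAround_union_componentAround hK' hKc hK'c hd), ?_⟩
  rintro (hb | hb)
  exacts [hb.subset inter_subset_left, hb.subset inter_subset_right]

end Boundedness

section Holes

variable {Ω K L L' O : Set ℂ} {z : ℂ}

theorem notMem_polyHull_iff (hz : z ∉ K) :
    z ∉ polyHull K ↔ ¬ IsBounded (connectedComponentIn Kᶜ z) := by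
  simp [polyHull, hz]

theorem subset_compl_polyHull_iff (hL'c : IsConnected L') (hd : Disjoint L L') :
    L' ⊆ (polyHull L)ᶜ ↔ ¬ IsBounded (componentAround Lᶜ L') := by
  have hmem : ∀ z ∈ L', (z ∉ polyHull L ↔ ¬ IsBounded (componentAround Lᶜ L')) := fun z hz ↦ by
    rw [notMem_polyHull_iff (hd.notMem_of_mem_right hz),
      componentAround_eq_connectedComponentIn hL'c.isPreconnected hd.subset_compl_left hz]
  obtain ⟨b, hb⟩ := hL'c.nonempty
  exact ⟨fun h ↦ (hmem b hb).1 (h hb), fun h z hz ↦ (hmem z hz).2 h⟩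

theorem isHole_and_subset_iff (hL'c : IsConnected L') (hd : Disjoint L L') :
    IsHole L O ∧ L' ⊆ O ↔ O = componentAround Lᶜ L' ∧ IsBounded (componentAround Lᶜ L') := by
  obtain ⟨b, hb⟩ := hL'c.nonempty
  constructor
  · rintro ⟨⟨⟨z, -, rfl⟩, hbdd⟩, hO⟩
    rw [connectedComponentIn_eq_componentAround hL'c hd.subset_compl_left hO] at hbdd ⊢
    exact ⟨rfl, hbdd⟩
  · rintro ⟨rfl, hbdd⟩
    exact ⟨⟨⟨b, hd.notMem_of_mem_right hb, componentAround_eq_connectedComponentIn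
      hL'c.isPreconnected hd.subset_compl_left hb⟩, hbdd⟩,
      subset_componentAround hL'c.isPreconnected hd.subset_compl_left⟩

theorem IsHole.exists_isHole_subset_iff (hO : IsHole K O) (hKΩ : K ⊆ Ω) :
    (∃ C, IsHole Ω C ∧ C ⊆ O) ↔ (O ∩ Ωᶜ).Nonempty := by
  constructor
  · rintro ⟨_, ⟨⟨p, hp, rfl⟩, -⟩, hC⟩
    exact ⟨p, hC (mem_connectedComponentIn hp), hp⟩
  · rintro ⟨p, hpO, hp⟩
    obtain ⟨⟨z, -, rfl⟩, hb⟩ := hO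
    have hsub : connectedComponentIn Ωᶜ p ⊆ connectedComponentIn Kᶜ z := by
      rw [connectedComponentIn_eq hpO]
      exact connectedComponentIn_mono p (compl_subset_compl.2 hKΩ)
    exact ⟨_, ⟨⟨p, hp, rfl⟩, hb.subset hsub⟩, hsub⟩

theorem isHole_intermediateRegion (hL : IsClosed L) (hL' : IsClosed L') (hLc : IsConnected L)
    (hL'c : IsConnected L') (hd : Disjoint L L') (hb : IsBounded (intermediateRegion L L')) :
    IsHole (L ∪ L') (intermediateRegion L L') := by
  obtain ⟨z, hz⟩ := intermediateRegion_nonempty hL hL' hLc hL'c hd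
  exact ⟨⟨z, intermediateRegion_subset_compl_union hLc.nonempty hL'c.nonempty hz,
    (connectedComponentIn_compl_union_eq_intermediateRegion hL hL' hLc hL'c hd hz).symm⟩, hb⟩

theorem componentAround_diff_polyHull (hL' : IsClosed L') (hLc : IsConnected L)
    (hL'c : IsConnected L') (hd : Disjoint L L') (hb : IsBounded (componentAround Lᶜ L')) :
    componentAround Lᶜ L' \ polyHull L' = intermediateRegion L L' := by
  have hunion := componentAround_union_componentAround hL' hLc hL'c hd
  ext z
  refine and_congr_right fun _ ↦ ?_
  constructor
  · intro hz
    by_contra hzV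
    have hsub := (disjoint_connectedComponentIn_componentAround hzV).subset_compl_right
    exact (notMem_polyHull_iff fun hzL' ↦ hz (.inl hzL')).1 hz (hb.subset (hsub.trans
      (compl_subset_comm.1 (compl_subset_iff_union.2 hunion))))
  · intro hzV
    rw [notMem_polyHull_iff (componentAround_subset hLc.nonempty hzV),
      connectedComponentIn_eq_componentAround hLc hd.subset_compl_right hzV]
    exact not_isBounded_of_union_eq_univ hunion hb

theorem exists_isHole_subset_and_isHole_diff_polyHull_iff (hL : IsClosed L) (hL' : IsClosed L')
    (hLΩ : L ⊆ Ω) (hL'Ω : L' ⊆ Ω) (hLc : IsConnected L) (hL'c : IsConnected L')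
    (hd : Disjoint L L') :
    (∃ O, IsHole L O ∧ L' ⊆ O ∧ ∃ C, IsHole Ω C ∧ C ⊆ O \ polyHull L') ↔
      IsBounded (componentAround Lᶜ L') ∧ (intermediateRegion L L' ∩ Ωᶜ).Nonempty := by
  simp_rw [← and_assoc (b := L' ⊆ _), isHole_and_subset_iff hL'c hd, and_assoc, exists_eq_left]
  refine and_congr_right fun hb ↦ ?_
  rw [componentAround_diff_polyHull hL' hLc hL'c hd hb]
  exact (isHole_intermediateRegion hL hL' hLc hL'c hd
    (hb.subset inter_subset_left)).exists_isHole_subset_iff (union_subset hLΩ hL'Ω)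

theorem omegaConvex_union_iff_intermediateRegion (hL : IsClosed L) (hL' : IsClosed L')
    (hLc : IsConnected L) (hL'c : IsConnected L') (hd : Disjoint L L')
    (hLconv : OmegaConvex Ω L) (hL'conv : OmegaConvex Ω L') :
    OmegaConvex Ω (L ∪ L') ↔
      (IsBounded (intermediateRegion L L') → (intermediateRegion L L' ∩ Ωᶜ).Nonempty) := by
  refine ⟨fun h hb ↦ h _ (isHole_intermediateRegion hL hL' hLc hL'c hd hb), fun h ↦ ?_⟩
  rintro _ ⟨⟨z, hz, rfl⟩, hb⟩
  have ⟨hzL, hzL'⟩ : z ∉ L ∧ z ∉ L' := not_or.1 hz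
  by_cases hzU : z ∈ componentAround Lᶜ L'
  · by_cases hzV : z ∈ componentAround L'ᶜ L
    · rw [connectedComponentIn_compl_union_eq_intermediateRegion hL hL' hLc hL'c hd
        ⟨hzU, hzV⟩] at hb ⊢
      exact h hb
    · rw [union_comm,
        connectedComponentIn_compl_union_eq_left hLc.isPreconnected hd.symm hzL' hzV] at hb ⊢
      exact hL'conv _ ⟨⟨z, hzL', rfl⟩, hb⟩
  · rw [connectedComponentIn_compl_union_eq_left hL'c.isPreconnected hd hzL hzU] at hb ⊢
    exact hLconv _ ⟨⟨z, hzL, rfl⟩, hb⟩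

end Holes

theorem omegaConvex_union_iff_general {Ω L L' : Set ℂ} (hL : IsClosed L) (hL' : IsClosed L')
    (hLΩ : L ⊆ Ω) (hL'Ω : L' ⊆ Ω) (hLconn : IsConnected L) (hL'conn : IsConnected L')
    (hd : Disjoint L L') (hLconv : OmegaConvex Ω L) (hL'conv : OmegaConvex Ω L') :
    OmegaConvex Ω (L ∪ L') ↔
      ((L ⊆ (polyHull L')ᶜ ∧ L' ⊆ (polyHull L)ᶜ) ∨
        (∃ O : Set ℂ, IsHole L O ∧ L' ⊆ O ∧ ∃ C : Set ℂ, IsHole Ω C ∧ C ⊆ O \ polyHull L') ∨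
        (∃ O' : Set ℂ, IsHole L' O' ∧ L ⊆ O' ∧
          ∃ C : Set ℂ, IsHole Ω C ∧ C ⊆ O' \ polyHull L)) := by
  have hrank : 1 < Module.rank ℝ ℂ := by simp
  rw [omegaConvex_union_iff_intermediateRegion hL hL' hLconn hL'conn hd hLconv hL'conv,
    isBounded_intermediateRegion_iff hrank hL hL' hLconn hL'conn hd,
    subset_compl_polyHull_iff hLconn hd.symm, subset_compl_polyHull_iff hL'conn hd,
    exists_isHole_subset_and_isHole_diff_polyHull_iff hL hL' hLΩ hL'Ω hLconn hL'conn hd,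
    exists_isHole_subset_and_isHole_diff_polyHull_iff hL' hL hL'Ω hLΩ hL'conn hLconn hd.symm,
    intermediateRegion_comm L' L]
  tauto

/-- Lemma `lemme-one-infinity-holes`. -/
theorem omegaConvex_union_iff
    (Ω : Set ℂ) (hΩ : IsOpen Ω) (hΩconn : IsConnected Ω)
    (L L' : Set ℂ) (hL : IsCompact L) (hL' : IsCompact L')
    (hLΩ : L ⊆ Ω) (hL'Ω : L' ⊆ Ω)
    (hLconn : IsConnected L) (hL'conn : IsConnected L')
    (hdisj : L ∩ L' = ∅)
    (hLconv : OmegaConvex Ω L) (hL'conv : OmegaConvex Ω L') :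
    OmegaConvex Ω (L ∪ L') ↔
      ((L ⊆ (polyHull L')ᶜ ∧ L' ⊆ (polyHull L)ᶜ) ∨
        (∃ O : Set ℂ, IsHole L O ∧ L' ⊆ O ∧ ∃ C : Set ℂ, IsHole Ω C ∧ C ⊆ O \ polyHull L') ∨
        (∃ O' : Set ℂ, IsHole L' O' ∧ L ⊆ O' ∧ ∃ C : Set ℂ, IsHole Ω C ∧ C ⊆ O' \ polyHull L)) :=
  omegaConvex_union_iff_general hL.isClosed hL'.isClosed hLΩ hL'Ω hLconn hL'conn
    (disjoint_iff_inter_eq_empty.2 hdisj) hLconv hL'conv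
end
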